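/- Let Δ be a complete simplicial fan in ℝ^d (d ≥ 1). Then the ring A(Δ) of conewise polynomial functions on Δ is a free module over the ring A of polynomial functions on ℝ^d, and for every integer k ≥ 0 the real dimension of the degree-k component Ā(Δ)_k of Ā(Δ) = A(Δ)/m·A(Δ) equals the coefficient of t^k in Σ_{σ ∈ Δ} (t−1)^{d − dim σ}, the sum running over all cones of Δ including the zero cone. -/

import Mathlib

open Classical Polynomial

section ConeDefs

variable {V : Type*} [AddCommGroup V] [Module ℝ V]

/-- The polyhedral cone generated by a finite set of vectors: all nonnegative
linear combinations. -/
def coneHull (S : Finset V) : Set V :=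
  {x | ∃ c : V → ℝ, (∀ w, 0 ≤ c w) ∧ x = ∑ w ∈ S, c w • w}

/-- A polyhedral cone: the set of nonnegative combinations of finitely many
vectors. -/
def IsCone (σ : Set V) : Prop := ∃ S : Finset V, σ = coneHull S

/-- A pointed polyhedral cone: a polyhedral cone containing no line. -/
def IsPointedCone (σ : Set V) : Prop :=
  IsCone σ ∧ ∀ x ∈ σ, -x ∈ σ → x = 0

/-- Faces of a cone: the cone itself and the intersections with supporting
hyperplanes. -/
def IsConeFace (σ τ : Set V) : Prop :=
  τ = σ ∨ ∃ l : V →ₗ[ℝ] ℝ, (∀ y ∈ σ, l y ≤ 0) ∧ τ = {x | x ∈ σ ∧ l x = 0}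

end ConeDefs
section FanDefs

variable {V : Type*} [AddCommGroup V] [Module ℝ V]

/-- A fan: a finite collection of pointed polyhedral cones that is closed under
taking faces and in which the intersection of any two cones is a face of each. -/
def IsFan (Δ : Finset (Set V)) : Prop :=
  (∀ σ ∈ Δ, IsPointedCone σ) ∧
  (∀ σ ∈ Δ, ∀ τ : Set V, IsConeFace σ τ → τ ∈ Δ) ∧
  (∀ σ ∈ Δ, ∀ τ ∈ Δ, IsConeFace σ (σ ∩ τ) ∧ IsConeFace τ (σ ∩ τ))

/-- A complete fan: the union of its cones is the whole space. -/
def IsCompleteFan (Δ : Finset (Set V)) : Prop :=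
  IsFan Δ ∧ (⋃ σ ∈ Δ, σ) = Set.univ

/-- A simplicial fan: every cone is generated by linearly independent vectors. -/
def IsSimplicialFan (Δ : Finset (Set V)) : Prop :=
  IsFan Δ ∧ ∀ σ ∈ Δ, ∃ S : Finset V,
    LinearIndependent ℝ (fun x : (S : Set V) => (x : V)) ∧ σ = coneHull S

end FanDefs
section ConewiseDefs

/-- `A(Δ)_k`: the space of conewise polynomial functions on `Δ` that are
homogeneous of degree `k`, as a subspace of all functions `ℝ^d → ℝ`. -/
def conewisePoly (d : ℕ) (Δ : Finset (Set (Fin d → ℝ))) (k : ℕ) :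
    Submodule ℝ ((Fin d → ℝ) → ℝ) where
  carrier := {f | ∀ σ ∈ Δ, ∃ p : MvPolynomial (Fin d) ℝ,
    p.IsHomogeneous k ∧ ∀ x ∈ σ, f x = MvPolynomial.eval x p}
  add_mem' := by
    intro f g hf hg σ hσ
    obtain ⟨p, hp, hfp⟩ := hf σ hσ
    obtain ⟨q, hq, hgq⟩ := hg σ hσ
    refine ⟨p + q, hp.add hq, fun x hx => ?_⟩
    simp [hfp x hx, hgq x hx]
  zero_mem' := by
    intro σ hσ
    exact ⟨0, MvPolynomial.isHomogeneous_zero _ _ _, fun x hx => by simp⟩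
  smul_mem' := by
    intro c f hf σ hσ
    obtain ⟨p, hp, hfp⟩ := hf σ hσ
    refine ⟨MvPolynomial.C c * p, ?_, fun x hx => ?_⟩
    · simpa using (MvPolynomial.isHomogeneous_C (Fin d) c).mul hp
    · simp [hfp x hx]

/-- `(m·A(Δ))_k`: the degree-`k` part of `m·A(Δ)`, where `m ⊂ A` is the ideal of
the ring of global polynomial functions generated by the linear functions.  It
is spanned by the products of a global linear function with a conewise
polynomial function that is homogeneous of degree `k - 1`. -/
def mConewisePoly (d : ℕ) (Δ : Finset (Set (Fin d → ℝ))) :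
    ℕ → Submodule ℝ ((Fin d → ℝ) → ℝ)
  | 0 => ⊥
  | k + 1 => Submodule.span ℝ
      {h | ∃ (l : (Fin d → ℝ) →ₗ[ℝ] ℝ) (f : (Fin d → ℝ) → ℝ),
        f ∈ conewisePoly d Δ k ∧ h = fun x => l x * f x}

end ConewiseDefs



section Basics
variable {d : ℕ}

noncomputable def phi (G : Finset (Fin d → ℝ)) :
    MvPolynomial (Fin d) ℝ →ₐ[ℝ] MvPolynomial (Fin d → ℝ) ℝ :=
  MvPolynomial.aeval (fun i => ∑ w ∈ G, MvPolynomial.C (w i) * MvPolynomial.X w)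

theorem eval_phi (G : Finset (Fin d → ℝ)) (c : (Fin d → ℝ) → ℝ) (p : MvPolynomial (Fin d) ℝ) :
    MvPolynomial.eval c (phi G p) = MvPolynomial.eval (∑ w ∈ G, c w • w) p := by
  have : (MvPolynomial.aeval c).comp (phi G) =
      (MvPolynomial.aeval (∑ w ∈ G, c w • w) : MvPolynomial (Fin d) ℝ →ₐ[ℝ] ℝ) := by
    apply MvPolynomial.algHom_ext
    intro i
    simp [phi, mul_comm]
  have h := congrArg (fun f => f p) this
  simpa [MvPolynomial.aeval_eq_eval] using h

theorem phi_eq_of_cone {G : Finset (Fin d → ℝ)} {p q : MvPolynomial (Fin d) ℝ}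
    (h : ∀ x ∈ coneHull G, MvPolynomial.eval x p = MvPolynomial.eval x q) :
    phi G p = phi G q := by
  apply MvPolynomial.funext_set (fun _ => Set.Ici (0:ℝ)) (fun _ => Set.Ici_infinite 0)
  intro c hc
  rw [eval_phi, eval_phi]
  apply h
  exact ⟨c, fun w => hc w (Set.mem_univ _), rfl⟩

theorem mem_span_iff_sum {G : Finset (Fin d → ℝ)} {x : Fin d → ℝ}
    (hx : x ∈ Submodule.span ℝ (G : Set (Fin d → ℝ))) : ∃ c : (Fin d → ℝ) → ℝ,
    x = ∑ w ∈ G, c w • w := by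
  obtain ⟨c, -, hc⟩ := Submodule.mem_span_finset.1 hx
  exact ⟨c, hc.symm⟩

theorem phi_eq_span {G : Finset (Fin d → ℝ)} {p q : MvPolynomial (Fin d) ℝ}
    (h : phi G p = phi G q) {x : Fin d → ℝ}
    (hx : x ∈ Submodule.span ℝ (G : Set (Fin d → ℝ))) :
    MvPolynomial.eval x p = MvPolynomial.eval x q := by
  obtain ⟨c, rfl⟩ := mem_span_iff_sum hx
  rw [← eval_phi, ← eval_phi, h]

theorem phi_eq_of_span {G : Finset (Fin d → ℝ)} {p q : MvPolynomial (Fin d) ℝ}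
    (h : ∀ x ∈ Submodule.span ℝ (G : Set (Fin d → ℝ)),
      MvPolynomial.eval x p = MvPolynomial.eval x q) :
    phi G p = phi G q := by
  apply phi_eq_of_cone
  rintro x ⟨c, -, rfl⟩
  exact h _ (Submodule.sum_mem _ fun w hw => Submodule.smul_mem _ _ (Submodule.subset_span hw))

theorem phi_eq_mono {G G' : Finset (Fin d → ℝ)} {p q : MvPolynomial (Fin d) ℝ}
    (hG : ∀ w ∈ G, w ∈ Submodule.span ℝ (G' : Set (Fin d → ℝ)))
    (h : phi G' p = phi G' q) : phi G p = phi G q := by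
  apply phi_eq_of_span
  intro x hx
  apply phi_eq_span h
  exact (Submodule.span_le.2 hG) hx

theorem phi_eq_subset {G G' : Finset (Fin d → ℝ)} {p q : MvPolynomial (Fin d) ℝ}
    (hG : G ⊆ G') (h : phi G' p = phi G' q) : phi G p = phi G q :=
  phi_eq_mono (fun _ hw => Submodule.subset_span (hG hw)) h

/-- kill variables outside `G` -/
noncomputable def kil (G : Finset (Fin d → ℝ)) :
    MvPolynomial (Fin d → ℝ) ℝ →ₐ[ℝ] MvPolynomial (Fin d → ℝ) ℝ :=
  MvPolynomial.aeval (fun w => if w ∈ G then MvPolynomial.X w else 0)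

theorem kil_phi {G S : Finset (Fin d → ℝ)} (h : G ⊆ S) (p : MvPolynomial (Fin d) ℝ) :
    kil G (phi S p) = phi G p := by
  have : (kil G).comp (phi S) = phi G := by
    apply MvPolynomial.algHom_ext
    intro i
    simp only [phi, kil, AlgHom.comp_apply, MvPolynomial.aeval_X, map_sum, map_mul,
      MvPolynomial.algHom_C, MvPolynomial.algebraMap_eq, mul_ite, mul_zero]
    rw [← Finset.sum_filter]
    congr 1
    ext w; simp only [Finset.mem_filter]; exact ⟨fun h => h.2, fun hw => ⟨h hw, hw⟩⟩
  exact congrArg (fun f => f p) this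

theorem coeff_kil (G : Finset (Fin d → ℝ)) (m : (Fin d → ℝ) →₀ ℕ)
    (p : MvPolynomial (Fin d → ℝ) ℝ) :
    MvPolynomial.coeff m (kil G p) = if m.support ⊆ G then MvPolynomial.coeff m p else 0 := by
  induction p using MvPolynomial.induction_on' with
  | monomial n c =>
    have hk : kil G (MvPolynomial.monomial n c) =
        if n.support ⊆ G then MvPolynomial.monomial n c else 0 := by
      rw [kil, MvPolynomial.aeval_monomial, Finsupp.prod]
      split_ifs with h
      · rw [MvPolynomial.monomial_eq, Finsupp.prod, MvPolynomial.algebraMap_eq]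
        congr 1
        apply Finset.prod_congr rfl
        intro w hw
        rw [if_pos (h hw)]
      · obtain ⟨w, hw, hwG⟩ := Finset.not_subset.1 h
        rw [Finset.prod_eq_zero hw, mul_zero]
        rw [if_neg hwG, zero_pow (Finsupp.mem_support_iff.1 hw)]
    rw [hk]
    split_ifs with h1 h2 h2
    · rfl
    · rw [MvPolynomial.coeff_monomial, if_neg]
      rintro rfl; exact h2 h1
    · rw [MvPolynomial.coeff_monomial, if_neg, MvPolynomial.coeff_zero]
      rintro rfl; exact h1 h2
    · simp
  | add p q hp hq =>
    rw [map_add, MvPolynomial.coeff_add, hp, hq, MvPolynomial.coeff_add]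
    split_ifs <;> simp

theorem coeff_phi_subset {G S : Finset (Fin d → ℝ)} (h : G ⊆ S) (p : MvPolynomial (Fin d) ℝ)
    {m : (Fin d → ℝ) →₀ ℕ} (hm : m.support ⊆ G) :
    MvPolynomial.coeff m (phi G p) = MvPolynomial.coeff m (phi S p) := by
  rw [← kil_phi h, coeff_kil, if_pos hm]

theorem coeff_phi_not {S : Finset (Fin d → ℝ)} (p : MvPolynomial (Fin d) ℝ)
    {m : (Fin d → ℝ) →₀ ℕ} (hm : ¬ m.support ⊆ S) :
    MvPolynomial.coeff m (phi S p) = 0 := by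
  rw [← kil_phi (subset_refl S), coeff_kil, if_neg hm]

/-- linear form as polynomial -/
noncomputable def lin (l : (Fin d → ℝ) →ₗ[ℝ] ℝ) : MvPolynomial (Fin d) ℝ :=
  ∑ i, MvPolynomial.C (l (Pi.single i 1)) * MvPolynomial.X i

theorem eval_lin (l : (Fin d → ℝ) →ₗ[ℝ] ℝ) (x : Fin d → ℝ) :
    MvPolynomial.eval x (lin l) = l x := by
  rw [LinearMap.pi_apply_eq_sum_univ l x]
  simp only [lin, map_sum, map_mul, MvPolynomial.eval_C, MvPolynomial.eval_X, smul_eq_mul]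
  apply Finset.sum_congr rfl
  intro i _
  rw [mul_comm]
  congr 2
  ext j
  simp [Pi.single_apply, eq_comm]

theorem lin_hom (l : (Fin d → ℝ) →ₗ[ℝ] ℝ) : (lin l).IsHomogeneous 1 := by
  apply MvPolynomial.IsHomogeneous.sum
  intro i _
  simpa using (MvPolynomial.isHomogeneous_C (Fin d) _).mul (MvPolynomial.isHomogeneous_X ℝ i)

def IsBas (S : Finset (Fin d → ℝ)) : Prop :=
  LinearIndependent ℝ (fun x : (S : Set (Fin d → ℝ)) => (x : Fin d → ℝ)) ∧ S.card = d

noncomputable def crd (S : Finset (Fin d → ℝ)) (w : Fin d → ℝ) : (Fin d → ℝ) →ₗ[ℝ] ℝ :=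
  if h : ∃ l : (Fin d → ℝ) →ₗ[ℝ] ℝ, l w = 1 ∧ ∀ w' ∈ S, w' ≠ w → l w' = 0 then h.choose else 0

theorem li_dual {S : Finset (Fin d → ℝ)}
    (hS : LinearIndependent ℝ (fun x : (S : Set (Fin d → ℝ)) => (x : Fin d → ℝ)))
    (f : (Fin d → ℝ) → ℝ) : ∃ l : (Fin d → ℝ) →ₗ[ℝ] ℝ, ∀ w ∈ S, l w = f w := by
  have hli : LinearIndepOn ℝ id (S : Set (Fin d → ℝ)) := hS
  refine ⟨(Module.Basis.extend hli).constr ℝ (fun b => f b), ?_⟩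
  intro w hw
  have hw' : w ∈ hli.extend (Set.subset_univ _) := hli.subset_extend _ hw
  have := (Module.Basis.extend hli).constr_basis ℝ (fun b => f b) ⟨w, hw'⟩
  rw [Module.Basis.extend_apply_self] at this
  exact this

theorem crd_spec {S : Finset (Fin d → ℝ)}
    (hS : LinearIndependent ℝ (fun x : (S : Set (Fin d → ℝ)) => (x : Fin d → ℝ)))
    {w : Fin d → ℝ} (hw : w ∈ S) : crd S w w = 1 ∧ ∀ w' ∈ S, w' ≠ w → crd S w w' = 0 := by
  have h : ∃ l : (Fin d → ℝ) →ₗ[ℝ] ℝ, l w = 1 ∧ ∀ w' ∈ S, w' ≠ w → l w' = 0 := by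
    obtain ⟨l, hl⟩ := li_dual hS (fun x => if x = w then 1 else 0)
    refine ⟨l, by rw [hl w hw, if_pos rfl], fun w' hw' hne => by rw [hl w' hw', if_neg hne]⟩
  rw [crd, dif_pos h]
  exact h.choose_spec

theorem crd_self {S : Finset (Fin d → ℝ)} (hS : IsBas S) {w : Fin d → ℝ} (hw : w ∈ S) :
    crd S w w = 1 := (crd_spec hS.1 hw).1

theorem crd_ne {S : Finset (Fin d → ℝ)} (hS : IsBas S) {w w' : Fin d → ℝ} (hw : w ∈ S)
    (hw' : w' ∈ S) (h : w' ≠ w) : crd S w w' = 0 := (crd_spec hS.1 hw).2 w' hw' h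

theorem bas_span {S : Finset (Fin d → ℝ)} (hS : IsBas S) :
    Submodule.span ℝ (S : Set (Fin d → ℝ)) = ⊤ := by
  have := hS.1.span_eq_top_of_card_eq_finrank' (by simp [hS.2])
  simpa using this

theorem crd_sum {S T : Finset (Fin d → ℝ)} (hS : IsBas S) {w : Fin d → ℝ} (hw : w ∈ S)
    (hT : T ⊆ S) (c : (Fin d → ℝ) → ℝ) :
    crd S w (∑ z ∈ T, c z • z) = if w ∈ T then c w else 0 := by
  rw [map_sum]
  have : ∀ z ∈ T, crd S w (c z • z) = if z = w then c z else 0 := by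
    intro z hz
    rw [map_smul]
    split_ifs with h
    · subst h; rw [crd_self hS hw]; simp
    · rw [crd_ne hS hw (hT hz) h]; simp
  rw [Finset.sum_congr rfl this, Finset.sum_ite_eq']

theorem bas_expand {S : Finset (Fin d → ℝ)} (hS : IsBas S) (x : Fin d → ℝ) :
    x = ∑ w ∈ S, crd S w x • w := by
  obtain ⟨c, hc⟩ := mem_span_iff_sum (G := S) (x := x) (by rw [bas_span hS]; trivial)
  conv_lhs => rw [hc]
  apply Finset.sum_congr rfl
  intro w hw
  rw [hc, crd_sum hS hw (subset_refl _), if_pos hw]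

/-- uniqueness of coordinates as linear form -/
theorem crd_ext {S : Finset (Fin d → ℝ)} (hS : IsBas S) {l l' : (Fin d → ℝ) →ₗ[ℝ] ℝ}
    (h : ∀ w ∈ S, l w = l' w) : l = l' := by
  ext1 i
  apply LinearMap.ext
  intro x
  simp only [LinearMap.comp_apply]
  set y := (LinearMap.single ℝ (fun _ : Fin d => ℝ) i) x
  rw [bas_expand hS y, map_sum, map_sum]
  apply Finset.sum_congr rfl
  intro w hw
  rw [map_smul, map_smul, h w hw]

theorem cone_iff {S : Finset (Fin d → ℝ)} (hS : IsBas S) (x : Fin d → ℝ) :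
    x ∈ coneHull S ↔ ∀ w ∈ S, 0 ≤ crd S w x := by
  constructor
  · rintro ⟨c, hc, rfl⟩ w hw
    rw [crd_sum hS hw (subset_refl _), if_pos hw]; exact hc w
  · intro h
    refine ⟨fun w => if w ∈ S then crd S w x else 0, ?_, ?_⟩
    · intro w; dsimp only; split_ifs with hw
      · exact h w hw
      · exact le_rfl
    · conv_lhs => rw [bas_expand hS x]
      apply Finset.sum_congr rfl
      intro w hw
      simp [hw]

noncomputable def theta (S : Finset (Fin d → ℝ)) :
    MvPolynomial (Fin d → ℝ) ℝ →ₐ[ℝ] MvPolynomial (Fin d) ℝ :=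
  MvPolynomial.aeval (fun w => if w ∈ S then lin (crd S w) else 0)

theorem theta_phi {S : Finset (Fin d → ℝ)} (hS : IsBas S) (p : MvPolynomial (Fin d) ℝ) :
    theta S (phi S p) = p := by
  have : (theta S).comp (phi S) = AlgHom.id ℝ _ := by
    apply MvPolynomial.algHom_ext
    intro i
    simp only [phi, theta, AlgHom.comp_apply, MvPolynomial.aeval_X, map_sum, map_mul,
      MvPolynomial.algHom_C, MvPolynomial.algebraMap_eq, AlgHom.id_apply]
    apply MvPolynomial.funext
    intro x
    simp only [map_sum, map_mul, MvPolynomial.eval_C, MvPolynomial.eval_X]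
    conv_rhs => rw [bas_expand hS x]
    rw [Finset.sum_apply]
    apply Finset.sum_congr rfl
    intro w hw
    rw [if_pos hw, eval_lin]
    simp [mul_comm]
  exact congrArg (fun f => f p) this

theorem phi_inj {S : Finset (Fin d → ℝ)} (hS : IsBas S) {p q : MvPolynomial (Fin d) ℝ}
    (h : phi S p = phi S q) : p = q := by
  rw [← theta_phi hS p, h, theta_phi hS q]

theorem phi_lin (G : Finset (Fin d → ℝ)) (l : (Fin d → ℝ) →ₗ[ℝ] ℝ) :
    phi G (lin l) = ∑ w ∈ G, MvPolynomial.C (l w) * MvPolynomial.X w := by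
  apply MvPolynomial.funext
  intro c
  rw [eval_phi, eval_lin]
  simp [mul_comm]

theorem phi_theta {S : Finset (Fin d → ℝ)} (hS : IsBas S)
    (q : MvPolynomial (Fin d → ℝ) ℝ) : phi S (theta S q) = kil S q := by
  have : (phi S).comp (theta S) = kil S := by
    apply MvPolynomial.algHom_ext
    intro w
    simp only [theta, kil, AlgHom.comp_apply, MvPolynomial.aeval_X]
    split_ifs with hw
    · rw [phi_lin, Finset.sum_eq_single w]
      · rw [crd_self hS hw]; simp
      · intro z hz hne; rw [crd_ne hS hw hz hne]; simp
      · intro h; exact absurd hw h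
    · simp
  exact congrArg (fun f => f q) this

noncomputable def ind (R : Finset (Fin d → ℝ)) : (Fin d → ℝ) →₀ ℕ :=
  Finsupp.indicator R (fun _ _ => 1)

theorem ind_apply (R : Finset (Fin d → ℝ)) (w : Fin d → ℝ) :
    ind R w = if w ∈ R then 1 else 0 := by
  simp [ind, Finsupp.indicator_apply]

theorem ind_support (R : Finset (Fin d → ℝ)) : (ind R).support = R := by
  ext w; simp [ind_apply]

/-- the monomial in coordinates of `S`. -/
noncomputable def xm (S : Finset (Fin d → ℝ)) (m : (Fin d → ℝ) →₀ ℕ) : MvPolynomial (Fin d) ℝ :=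
  theta S (MvPolynomial.monomial m 1)

theorem xm_dvd {S R : Finset (Fin d → ℝ)} (hS : IsBas S) 
    {p : MvPolynomial (Fin d) ℝ} (h : ∀ ρ ∈ R, phi (S.erase ρ) p = 0) : xm S (ind R) ∣ p := by
  have : MvPolynomial.monomial (ind R) 1 ∣ phi S p := by
    rw [MvPolynomial.monomial_one_dvd_iff_modMonomial_eq_zero]
    ext m
    rw [MvPolynomial.coeff_zero]
    by_cases hm : ind R ≤ m
    · rw [MvPolynomial.coeff_modMonomial_of_le _ hm]
    · rw [MvPolynomial.coeff_modMonomial_of_not_le _ hm]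
      by_cases hmS : m.support ⊆ S
      · have : ∃ ρ ∈ R, m ρ = 0 := by
          by_contra hcon
          push Not at hcon
          apply hm
          intro w
          rw [ind_apply]
          split_ifs with hw
          · exact Nat.one_le_iff_ne_zero.2 (hcon w hw)
          · exact Nat.zero_le _
        obtain ⟨ρ, hρ, h0⟩ := this
        have hsub : m.support ⊆ S.erase ρ := by
          intro w hw
          rw [Finset.mem_erase]
          refine ⟨?_, hmS hw⟩
          rintro rfl
          exact (Finsupp.mem_support_iff.1 hw) h0
        rw [← coeff_phi_subset (Finset.erase_subset ρ S) p hsub, h ρ hρ, MvPolynomial.coeff_zero]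
      · exact coeff_phi_not p hmS
  have h2 := map_dvd (theta S) this
  rwa [theta_phi hS] at h2

theorem xm_ne {S : Finset (Fin d → ℝ)} (hS : IsBas S) {m : (Fin d → ℝ) →₀ ℕ}
    (hm : m.support ⊆ S) : xm S m ≠ 0 := by
  intro h
  have h2 := congrArg (fun p => MvPolynomial.coeff m (phi S p)) h
  simp only [xm, phi_theta hS, coeff_kil, if_pos hm, map_zero] at h2
  simp at h2

theorem lin_dvd {S : Finset (Fin d → ℝ)} (hS : IsBas S) {ρ : Fin d → ℝ} (hρ : ρ ∈ S)
    {p : MvPolynomial (Fin d) ℝ} (h : phi (S.erase ρ) p = 0) : lin (crd S ρ) ∣ p := by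
  have h1 := xm_dvd (R := {ρ}) hS (p := p) (by simpa using h)
  have h2 : xm S (ind {ρ}) = lin (crd S ρ) := by
    have : ind {ρ} = Finsupp.single ρ 1 := by
      ext w; rw [ind_apply, Finsupp.single_apply]; simp [eq_comm]
    rw [xm, this, theta, MvPolynomial.aeval_monomial]
    simp [hρ]
  rwa [h2] at h1

end Basics


section Retract
variable {d : ℕ}

/-- compatible families of polynomials on the maximal cones -/
noncomputable def PM (K : Finset (Finset (Fin d → ℝ))) :
    Submodule (MvPolynomial (Fin d) ℝ) (Finset (Fin d → ℝ) → MvPolynomial (Fin d) ℝ) where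
  carrier := {f | (∀ S, S ∉ K → f S = 0) ∧
    ∀ S ∈ K, ∀ T ∈ K, phi (S ∩ T) (f S) = phi (S ∩ T) (f T)}
  add_mem' := by
    rintro f g ⟨hf, hf'⟩ ⟨hg, hg'⟩
    refine ⟨fun S hS => by simp [hf S hS, hg S hS], fun S hS T hT => ?_⟩
    simp [hf' S hS T hT, hg' S hS T hT]
  zero_mem' := by
    refine ⟨fun S hS => by simp, fun S hS T hT => by simp⟩
  smul_mem' := by
    rintro a f ⟨hf, hf'⟩
    refine ⟨fun S hS => by simp [hf S hS], fun S hS T hT => ?_⟩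
    simp [hf' S hS T hT]

theorem bas_swap {S : Finset (Fin d → ℝ)} (hS : IsBas S) {z r : Fin d → ℝ} (hz : z ∈ S)
    (hr : r ∉ S) (h : crd S z r ≠ 0) : IsBas (insert r (S.erase z)) := by
  have hcard : (insert r (S.erase z)).card = d := by
    rw [Finset.card_insert_of_notMem (fun h => hr (Finset.mem_of_mem_erase h)),
      Finset.card_erase_add_one hz, hS.2]
  refine ⟨?_, hcard⟩
  apply linearIndependent_of_top_le_span_of_card_eq_finrank
  · have hsub : ∀ x ∈ insert r (S.erase z), x ∈ Submodule.span ℝ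
        ((insert r (S.erase z) : Finset _) : Set (Fin d → ℝ)) :=
      fun x hx => Submodule.subset_span hx
    have : Submodule.span ℝ (S : Set (Fin d → ℝ)) ≤ Submodule.span ℝ
        ((insert r (S.erase z) : Finset _) : Set (Fin d → ℝ)) := by
      rw [Submodule.span_le]
      intro x hx
      by_cases hxz : x = z
      · subst hxz
        have h1 := bas_expand hS r
        rw [← Finset.add_sum_erase _ _ hx] at h1
        have h2 : x = (crd S x r)⁻¹ • (r - ∑ w ∈ S.erase x, crd S w r • w) := by
          rw [eq_inv_smul_iff₀ h]
          nth_rw 2 [h1]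
          abel
        have h3 : (crd S x r)⁻¹ • (r - ∑ w ∈ S.erase x, crd S w r • w) ∈ Submodule.span ℝ
            ((insert r (S.erase x) : Finset _) : Set (Fin d → ℝ)) := by
          apply Submodule.smul_mem
          apply Submodule.sub_mem
          · exact hsub _ (Finset.mem_insert_self _ _)
          · apply Submodule.sum_mem
            intro w hw
            exact Submodule.smul_mem _ _ (hsub _ (Finset.mem_insert_of_mem hw))
        rw [← h2] at h3
        exact h3
      · exact hsub x (Finset.mem_insert_of_mem (Finset.mem_erase.2 ⟨hxz, hx⟩))
    rw [bas_span hS] at this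
    have hr : Set.range (fun x : ((insert r (S.erase z) : Finset _) : Set (Fin d → ℝ)) =>
        (x : Fin d → ℝ)) = ((insert r (S.erase z) : Finset _) : Set (Fin d → ℝ)) :=
      Subtype.range_coe
    rw [hr]
    exact this
  · simp only [Module.finrank_fin_fun]
    refine Eq.trans ?_ hcard
    exact Fintype.card_coe _

structure Edge (K : Finset (Finset (Fin d → ℝ))) (u w r : Fin d → ℝ) (α β : ℝ) : Prop where
  hα : 0 < α
  hβ : 0 < β
  hr : r = α • u + β • w
  huw : u ≠ w
  bas : ∀ S ∈ K, IsBas S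
  hrK : ∀ S ∈ K, r ∉ S
  ex : ∃ S ∈ K, u ∈ S ∧ w ∈ S

noncomputable def stepK (K : Finset (Finset (Fin d → ℝ))) (u w r : Fin d → ℝ) :
    Finset (Finset (Fin d → ℝ)) :=
  K.filter (fun S => ¬ (u ∈ S ∧ w ∈ S)) ∪
  ((K.filter (fun S => u ∈ S ∧ w ∈ S)).image (fun S => insert r (S.erase w)) ∪
   (K.filter (fun S => u ∈ S ∧ w ∈ S)).image (fun S => insert r (S.erase u)))

theorem mem_stepK {K : Finset (Finset (Fin d → ℝ))} {u w r : Fin d → ℝ}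
    {S' : Finset (Fin d → ℝ)} : S' ∈ stepK K u w r ↔
    (S' ∈ K ∧ ¬ (u ∈ S' ∧ w ∈ S')) ∨
    (∃ S ∈ K, (u ∈ S ∧ w ∈ S) ∧ insert r (S.erase w) = S') ∨
    (∃ S ∈ K, (u ∈ S ∧ w ∈ S) ∧ insert r (S.erase u) = S') := by
  simp only [stepK, Finset.mem_union, Finset.mem_filter, Finset.mem_image, and_assoc]

noncomputable def par (u w r : Fin d → ℝ) (S' : Finset (Fin d → ℝ)) : Finset (Fin d → ℝ) :=
  if r ∈ S' then insert u (insert w (S'.erase r)) else S'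

variable {K : Finset (Finset (Fin d → ℝ))} {u w r : Fin d → ℝ} {α β : ℝ}

theorem stepK_symm : stepK K u w r = stepK K w u r := by
  ext S; rw [mem_stepK, mem_stepK, and_comm (a := u ∈ S)]
  constructor
  · rintro (h | ⟨S, h1, h2, h3⟩ | ⟨S, h1, h2, h3⟩)
    · exact Or.inl h
    · exact Or.inr (Or.inr ⟨S, h1, h2.symm, h3⟩)
    · exact Or.inr (Or.inl ⟨S, h1, h2.symm, h3⟩)
  · rintro (h | ⟨S, h1, h2, h3⟩ | ⟨S, h1, h2, h3⟩)
    · exact Or.inl h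
    · exact Or.inr (Or.inr ⟨S, h1, h2.symm, h3⟩)
    · exact Or.inr (Or.inl ⟨S, h1, h2.symm, h3⟩)

theorem Edge.symm (h : Edge K u w r α β) : Edge K w u r β α :=
  ⟨h.hβ, h.hα, by rw [h.hr, add_comm], h.huw.symm, h.bas, h.hrK,
    h.ex.imp fun _ h => ⟨h.1, h.2.2, h.2.1⟩⟩

theorem Edge.ru (h : Edge K u w r α β) : r ≠ u := by
  obtain ⟨S, hS, hu, -⟩ := h.ex
  rintro rfl; exact h.hrK S hS hu

theorem par_w {S : Finset (Fin d → ℝ)} (hu : u ∈ S) (hw : w ∈ S) (hr : r ∉ S) :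
    par u w r (insert r (S.erase w)) = S := by
  rw [par, if_pos (Finset.mem_insert_self _ _),
    Finset.erase_insert (fun h => hr (Finset.mem_of_mem_erase h)), Finset.insert_erase hw,
    Finset.insert_eq_self.2 hu]

theorem par_u {S : Finset (Fin d → ℝ)} (hu : u ∈ S) (hw : w ∈ S) (hr : r ∉ S) :
    par u w r (insert r (S.erase u)) = S := by
  rw [par, if_pos (Finset.mem_insert_self _ _),
    Finset.erase_insert (fun h => hr (Finset.mem_of_mem_erase h)), Finset.insert_comm,
    Finset.insert_erase hu,
    Finset.insert_eq_self.2 hw]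

theorem par_mem (h : Edge K u w r α β) {S' : Finset (Fin d → ℝ)} (hS' : S' ∈ stepK K u w r) :
    par u w r S' ∈ K := by
  rcases mem_stepK.1 hS' with ⟨h1, -⟩ | ⟨S, h1, h2, rfl⟩ | ⟨S, h1, h2, rfl⟩
  · rwa [par, if_neg (h.hrK _ h1)]
  · rwa [par_w h2.1 h2.2 (h.hrK S h1)]
  · rwa [par_u h2.1 h2.2 (h.hrK S h1)]

theorem par_span (h : Edge K u w r α β) {S' T' : Finset (Fin d → ℝ)} :
    ∀ x ∈ S' ∩ T', x ∈ Submodule.span ℝ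
      ((par u w r S' ∩ par u w r T' : Finset _) : Set (Fin d → ℝ)) := by
  intro x hx
  rw [Finset.mem_inter] at hx
  by_cases hxr : x = r
  · subst hxr
    have h1 : ∀ z, z = u ∨ z = w → z ∈ Submodule.span ℝ
      ((par u w x S' ∩ par u w x T' : Finset _) : Set (Fin d → ℝ)) := by
      intro z hz
      apply Submodule.subset_span
      rw [Finset.mem_coe, Finset.mem_inter, par, par, if_pos hx.1, if_pos hx.2]
      rcases hz with rfl | rfl <;> simp
    rw [h.hr] at h1 ⊢
    exact Submodule.add_mem _ (Submodule.smul_mem _ _ (h1 u (Or.inl rfl)))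
      (Submodule.smul_mem _ _ (h1 w (Or.inr rfl)))
  · apply Submodule.subset_span
    have : ∀ S : Finset (Fin d → ℝ), x ∈ S → x ∈ par u w r S := by
      intro S hS
      rw [par]
      split_ifs
      · simp [hxr, hS]
      · exact hS
    rw [Finset.mem_coe, Finset.mem_inter]
    exact ⟨this _ hx.1, this _ hx.2⟩

theorem Edge.crd_r (h : Edge K u w r α β) {S : Finset (Fin d → ℝ)} (hS : S ∈ K) (hu : u ∈ S)
    (hw : w ∈ S) : crd S w r = β := by
  rw [h.hr, map_add, map_smul, map_smul, crd_self (h.bas S hS) hw,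
    crd_ne (h.bas S hS) hw hu h.huw]
  simp

theorem Edge.basw (h : Edge K u w r α β) {S : Finset (Fin d → ℝ)} (hS : S ∈ K) (hu : u ∈ S)
    (hw : w ∈ S) : IsBas (insert r (S.erase w)) :=
  bas_swap (h.bas S hS) hw (h.hrK S hS) (by rw [h.crd_r hS hu hw]; exact h.hβ.ne')

theorem Edge.bas' (h : Edge K u w r α β) {S' : Finset (Fin d → ℝ)}
    (hS' : S' ∈ stepK K u w r) : IsBas S' := by
  rcases mem_stepK.1 hS' with ⟨h1, -⟩ | ⟨S, h1, h2, rfl⟩ | ⟨S, h1, h2, rfl⟩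
  · exact h.bas _ h1
  · exact h.basw h1 h2.1 h2.2
  · exact h.symm.basw h1 h2.2 h2.1

/-- the splitting form, vanishing on `r` and all generators except `u, w` -/
noncomputable def LL (u w : Fin d → ℝ) (α β : ℝ) (S : Finset (Fin d → ℝ)) :
    (Fin d → ℝ) →ₗ[ℝ] ℝ := crd S u - (α / β) • crd S w

theorem LL_eq (h : Edge K u w r α β) {S : Finset (Fin d → ℝ)} (hS : S ∈ K) (hu : u ∈ S)
    (hw : w ∈ S) : LL u w α β S = crd (insert r (S.erase w)) u := by
  have hb := h.basw hS hu hw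
  have hbS := h.bas S hS
  have hum : u ∈ insert r (S.erase w) :=
    Finset.mem_insert_of_mem (Finset.mem_erase.2 ⟨h.huw, hu⟩)
  apply crd_ext hb
  intro z hz
  rw [LL, LinearMap.sub_apply, LinearMap.smul_apply]
  rcases Finset.mem_insert.1 hz with rfl | hz'
  · rw [h.crd_r hS hu hw, h.symm.crd_r hS hw hu, crd_ne hb hum hz h.ru]
    have := h.hβ.ne'
    simp [this]
  · obtain ⟨hzw, hzS⟩ := Finset.mem_erase.1 hz'
    rw [crd_ne hbS hw hzS hzw]
    by_cases hzu : z = u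
    · subst hzu
      rw [crd_self hbS hu, crd_self hb hum]; simp
    · rw [crd_ne hbS hu hzS hzu, crd_ne hb hum hz hzu]; simp

theorem LL_u (h : Edge K u w r α β) {S : Finset (Fin d → ℝ)} (hS : S ∈ K) (hu : u ∈ S)
    (hw : w ∈ S) : LL u w α β S u = 1 := by
  rw [LL_eq h hS hu hw, crd_self (h.basw hS hu hw)]
  exact Finset.mem_insert_of_mem (Finset.mem_erase.2 ⟨h.huw, hu⟩)

noncomputable def qq (u w r : Fin d → ℝ) (α β : ℝ)
    (f : Finset (Fin d → ℝ) → MvPolynomial (Fin d) ℝ) (S : Finset (Fin d → ℝ)) :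
    MvPolynomial (Fin d) ℝ :=
  if h : ∃ q, f (insert r (S.erase u)) - f (insert r (S.erase w)) = lin (LL u w α β S) * q
  then h.choose else 0

theorem mem_step_w {S : Finset (Fin d → ℝ)} (hS : S ∈ K) (hu : u ∈ S) (hw : w ∈ S) :
    insert r (S.erase w) ∈ stepK K u w r :=
  mem_stepK.2 (Or.inr (Or.inl ⟨S, hS, ⟨hu, hw⟩, rfl⟩))

theorem mem_step_u {S : Finset (Fin d → ℝ)} (hS : S ∈ K) (hu : u ∈ S) (hw : w ∈ S) :
    insert r (S.erase u) ∈ stepK K u w r :=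
  mem_stepK.2 (Or.inr (Or.inr ⟨S, hS, ⟨hu, hw⟩, rfl⟩))

theorem qq_spec (h : Edge K u w r α β) {f : Finset (Fin d → ℝ) → MvPolynomial (Fin d) ℝ}
    (hf : f ∈ PM (stepK K u w r)) {S : Finset (Fin d → ℝ)} (hS : S ∈ K) (hu : u ∈ S)
    (hw : w ∈ S) : f (insert r (S.erase u)) - f (insert r (S.erase w)) =
      lin (LL u w α β S) * qq u w r α β f S := by
  have hex : ∃ q, f (insert r (S.erase u)) - f (insert r (S.erase w)) =
      lin (LL u w α β S) * q := by
    change lin (LL u w α β S) ∣ _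
    rw [LL_eq h hS hu hw]
    apply lin_dvd (h.basw hS hu hw)
    · exact Finset.mem_insert_of_mem (Finset.mem_erase.2 ⟨h.huw, hu⟩)
    · rw [map_sub, sub_eq_zero]
      refine phi_eq_subset ?_ (hf.2 _ (mem_step_u hS hu hw) _ (mem_step_w hS hu hw))
      intro z hz
      simp only [Finset.mem_erase, Finset.mem_insert, Finset.mem_inter] at hz ⊢
      tauto
  rw [qq, dif_pos hex]
  exact hex.choose_spec

theorem lin_LL_ne (h : Edge K u w r α β) {S G : Finset (Fin d → ℝ)} (hS : S ∈ K) (hu : u ∈ S)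
    (hw : w ∈ S) (hG : u ∈ G) : phi G (lin (LL u w α β S)) ≠ 0 := by
  intro h0
  have h1 := congrArg (MvPolynomial.eval (fun z => if z = u then (1:ℝ) else 0)) h0
  rw [eval_phi, eval_lin] at h1
  simp [hG, LL_u h hS hu hw] at h1

theorem qq_uniq (h : Edge K u w r α β) {f : Finset (Fin d → ℝ) → MvPolynomial (Fin d) ℝ}
    (hf : f ∈ PM (stepK K u w r)) {S : Finset (Fin d → ℝ)} (hS : S ∈ K) (hu : u ∈ S)
    (hw : w ∈ S) {q : MvPolynomial (Fin d) ℝ}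
    (hq : f (insert r (S.erase u)) - f (insert r (S.erase w)) = lin (LL u w α β S) * q) :
    qq u w r α β f S = q := by
  rw [qq_spec h hf hS hu hw] at hq
  have hne : lin (LL u w α β S) ≠ 0 := by
    intro h0
    exact lin_LL_ne h hS hu hw hu (by rw [h0, map_zero])
  exact mul_left_cancel₀ hne hq

noncomputable def ret (K : Finset (Finset (Fin d → ℝ))) (u w r : Fin d → ℝ) (α β : ℝ)
    (f : Finset (Fin d → ℝ) → MvPolynomial (Fin d) ℝ) (S : Finset (Fin d → ℝ)) :
    MvPolynomial (Fin d) ℝ :=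
  if S ∈ K then if u ∈ S ∧ w ∈ S then
    f (insert r (S.erase w)) -
      MvPolynomial.C (α / β) * lin (crd S w) * qq u w r α β f S
    else f S else 0

theorem lin_sub_smul (l l' : (Fin d → ℝ) →ₗ[ℝ] ℝ) (c : ℝ) :
    lin (l - c • l') = lin l - MvPolynomial.C c * lin l' := by
  apply MvPolynomial.funext
  intro x
  simp [eval_lin]

theorem ret_alt (h : Edge K u w r α β) {f : Finset (Fin d → ℝ) → MvPolynomial (Fin d) ℝ}
    (hf : f ∈ PM (stepK K u w r)) {S : Finset (Fin d → ℝ)} (hS : S ∈ K) (hu : u ∈ S)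
    (hw : w ∈ S) : ret K u w r α β f S = 
      f (insert r (S.erase u)) - lin (crd S u) * qq u w r α β f S := by
  have := qq_spec h hf hS hu hw
  rw [LL, lin_sub_smul] at this
  rw [ret, if_pos hS, if_pos ⟨hu, hw⟩]
  linear_combination -this

theorem phi_crd_zero {S G : Finset (Fin d → ℝ)} (hS : IsBas S) {z : Fin d → ℝ} (hz : z ∈ S)
    (hG : G ⊆ S) (hzG : z ∉ G) : phi G (lin (crd S z)) = 0 := by
  rw [phi_lin]
  apply Finset.sum_eq_zero
  intro y hy
  rw [crd_ne hS hz (hG hy) (by rintro rfl; exact hzG hy)]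
  simp

theorem ret_mem1 (h : Edge K u w r α β) {f : Finset (Fin d → ℝ) → MvPolynomial (Fin d) ℝ}
    (hf : f ∈ PM (stepK K u w r)) {S T : Finset (Fin d → ℝ)} (hS : S ∈ K) (hu : u ∈ S)
    (hw : w ∈ S) (hT : T ∈ K) (hnT : ¬ (u ∈ T ∧ w ∈ T)) :
    phi (S ∩ T) (ret K u w r α β f S) = phi (S ∩ T) (ret K u w r α β f T) := by
  have hT' : ret K u w r α β f T = f T := by rw [ret, if_pos hT, if_neg hnT]
  have hTm : T ∈ stepK K u w r := mem_stepK.2 (Or.inl ⟨hT, hnT⟩)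
  rw [hT']
  by_cases hwT : w ∈ T
  · have huT : u ∉ T := fun hu => hnT ⟨hu, hwT⟩
    rw [ret_alt h hf hS hu hw, map_sub, map_mul, phi_crd_zero (h.bas S hS) hu
      Finset.inter_subset_left (by simp [huT]), zero_mul, sub_zero]
    refine phi_eq_subset ?_ (hf.2 _ (mem_step_u hS hu hw) _ hTm)
    intro z hz
    rw [Finset.mem_inter] at hz ⊢
    refine ⟨Finset.mem_insert_of_mem (Finset.mem_erase.2 ⟨?_, hz.1⟩), hz.2⟩
    rintro rfl; exact huT hz.2
  · rw [ret, if_pos hS, if_pos ⟨hu, hw⟩, map_sub, map_mul, map_mul, phi_crd_zero (h.bas S hS) hw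
      Finset.inter_subset_left (by simp [hwT]), mul_zero, zero_mul, sub_zero]
    refine phi_eq_subset ?_ (hf.2 _ (mem_step_w hS hu hw) _ hTm)
    intro z hz
    rw [Finset.mem_inter] at hz ⊢
    refine ⟨Finset.mem_insert_of_mem (Finset.mem_erase.2 ⟨?_, hz.1⟩), hz.2⟩
    rintro rfl; exact hwT hz.2

theorem phi_crd_eq {S T : Finset (Fin d → ℝ)} (hS : IsBas S) (hT : IsBas T) {z : Fin d → ℝ}
    (hz : z ∈ S) (hzT : z ∈ T) : phi (S ∩ T) (lin (crd S z)) = phi (S ∩ T) (lin (crd T z)) := by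
  rw [phi_lin, phi_lin]
  apply Finset.sum_congr rfl
  intro y hy
  rw [Finset.mem_inter] at hy
  by_cases hyz : y = z
  · subst hyz; rw [crd_self hS hz, crd_self hT hzT]
  · rw [crd_ne hS hz hy.1 hyz, crd_ne hT hzT hy.2 hyz]

theorem span_w (h : Edge K u w r α β) {S T : Finset (Fin d → ℝ)} (hu : u ∈ S) (huT : u ∈ T) :
    ∀ z ∈ S ∩ T, z ∈ Submodule.span ℝ
      ((insert r (S.erase w) ∩ insert r (T.erase w) : Finset _) : Set (Fin d → ℝ)) := by
  intro z hz
  rw [Finset.mem_inter] at hz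
  have hs : ∀ y ∈ insert r (S.erase w) ∩ insert r (T.erase w), y ∈ Submodule.span ℝ
      ((insert r (S.erase w) ∩ insert r (T.erase w) : Finset _) : Set (Fin d → ℝ)) :=
    fun y hy => Submodule.subset_span hy
  by_cases hzw : z = w
  · have h1 : z = β⁻¹ • (r - α • u) := by
      rw [h.hr, hzw, add_sub_cancel_left, smul_smul, inv_mul_cancel₀ h.hβ.ne', one_smul]
    rw [h1]
    refine Submodule.smul_mem _ _ (Submodule.sub_mem _ (hs _ ?_) 
      (Submodule.smul_mem _ _ (hs _ ?_)))
    · simp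
    · simp [hu, huT, h.huw]
  · apply hs
    simp [hz, hzw]

theorem ret_mem (h : Edge K u w r α β) {f : Finset (Fin d → ℝ) → MvPolynomial (Fin d) ℝ}
    (hf : f ∈ PM (stepK K u w r)) : ret K u w r α β f ∈ PM K := by
  refine ⟨fun S hS => by rw [ret, if_neg hS], fun S hS T hT => ?_⟩
  by_cases hS' : u ∈ S ∧ w ∈ S
  · by_cases hT' : u ∈ T ∧ w ∈ T
    · have e1 : phi (S ∩ T) (f (insert r (S.erase w))) = phi (S ∩ T) (f (insert r (T.erase w))) :=
        phi_eq_mono (span_w h hS'.1 hT'.1)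
          (hf.2 _ (mem_step_w hS hS'.1 hS'.2) _ (mem_step_w hT hT'.1 hT'.2))
      have e2 : phi (S ∩ T) (f (insert r (S.erase u))) = phi (S ∩ T) (f (insert r (T.erase u))) :=
        phi_eq_mono (span_w h.symm hS'.2 hT'.2)
          (hf.2 _ (mem_step_u hS hS'.1 hS'.2) _ (mem_step_u hT hT'.1 hT'.2))
      have e3 := phi_crd_eq (h.bas S hS) (h.bas T hT) hS'.2 hT'.2
      have e4 := phi_crd_eq (h.bas S hS) (h.bas T hT) hS'.1 hT'.1
      have e5 : phi (S ∩ T) (lin (LL u w α β S)) = phi (S ∩ T) (lin (LL u w α β T)) := by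
        rw [LL, LL, lin_sub_smul, lin_sub_smul]
        simp only [map_sub, map_mul, e3, e4]
      have e6 : phi (S ∩ T) (qq u w r α β f S) = phi (S ∩ T) (qq u w r α β f T) := by
        have q1 := congrArg (phi (S ∩ T)) (qq_spec h hf hS hS'.1 hS'.2)
        have q2 := congrArg (phi (S ∩ T)) (qq_spec h hf hT hT'.1 hT'.2)
        rw [map_sub, map_mul] at q1 q2
        rw [e1, e2, q2, ← e5] at q1
        exact (mul_left_cancel₀ (lin_LL_ne h hS hS'.1 hS'.2
          (Finset.mem_inter.2 ⟨hS'.1, hT'.1⟩)) q1).symm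
      rw [ret, ret, if_pos hS, if_pos hT, if_pos hS', if_pos hT']
      simp only [map_sub, map_mul, e1, e3, e6]
    · exact ret_mem1 h hf hS hS'.1 hS'.2 hT hT'
  · by_cases hT' : u ∈ T ∧ w ∈ T
    · rw [Finset.inter_comm]
      exact (ret_mem1 h hf hT hT'.1 hT'.2 hS hS').symm
    · rw [ret, ret, if_pos hS, if_pos hT, if_neg hS', if_neg hT']
      exact hf.2 _ (mem_stepK.2 (Or.inl ⟨hS, hS'⟩)) _ (mem_stepK.2 (Or.inl ⟨hT, hT'⟩))

noncomputable def retL (h : Edge K u w r α β) :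
    PM (stepK K u w r) →ₗ[MvPolynomial (Fin d) ℝ] PM K where
  toFun f := ⟨ret K u w r α β f.1, ret_mem h f.2⟩
  map_add' := by
    rintro ⟨f, hf⟩ ⟨g, hg⟩
    apply Subtype.ext
    funext S
    simp only [Submodule.coe_add, Pi.add_apply, ret]
    split_ifs with h1 h2
    · rw [qq_uniq h (Submodule.add_mem _ hf hg) h1 h2.1 h2.2
        (q := qq u w r α β f S + qq u w r α β g S)]
      · ring
      · rw [mul_add, ← qq_spec h hf h1 h2.1 h2.2, ← qq_spec h hg h1 h2.1 h2.2]
        simp only [Pi.add_apply]; ring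
    · rfl
    · simp
  map_smul' := by
    rintro a ⟨f, hf⟩
    apply Subtype.ext
    funext S
    simp only [Submodule.coe_smul, Pi.smul_apply, ret, RingHom.id_apply, smul_eq_mul]
    split_ifs with h1 h2
    · rw [qq_uniq h (Submodule.smul_mem _ a hf) h1 h2.1 h2.2
        (q := a * qq u w r α β f S)]
      · ring
      · rw [mul_left_comm, ← qq_spec h hf h1 h2.1 h2.2]
        simp only [Pi.smul_apply, smul_eq_mul]; ring
    · rfl
    · simp

noncomputable def incL (h : Edge K u w r α β) :
    PM K →ₗ[MvPolynomial (Fin d) ℝ] PM (stepK K u w r) where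
  toFun f := ⟨fun S' => if S' ∈ stepK K u w r then f.1 (par u w r S') else 0, by
    refine ⟨fun S hS => if_neg hS, fun S hS T hT => ?_⟩
    simp only [if_pos hS, if_pos hT]
    exact phi_eq_mono (par_span h) (f.2.2 _ (par_mem h hS) _ (par_mem h hT))⟩
  map_add' := by
    rintro ⟨f, hf⟩ ⟨g, hg⟩
    apply Subtype.ext
    funext S
    simp only [Submodule.coe_add, Pi.add_apply]
    split_ifs <;> simp
  map_smul' := by
    rintro a ⟨f, hf⟩
    apply Subtype.ext
    funext S
    simp only [Submodule.coe_smul, Pi.smul_apply, RingHom.id_apply, smul_eq_mul]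
    split_ifs <;> simp

theorem ret_inc (h : Edge K u w r α β) : (retL h).comp (incL h) = LinearMap.id := by
  apply LinearMap.ext
  intro f
  apply Subtype.ext
  funext S
  have hm := (incL h f).2
  change ret K u w r α β (incL h f).1 S = f.1 S
  by_cases hS : S ∈ K
  · by_cases hS' : u ∈ S ∧ w ∈ S
    · rw [ret, if_pos hS, if_pos hS']
      have e1 : (incL h f).1 (insert r (S.erase w)) = f.1 S := by
        change (if _ then _ else _) = _
        rw [if_pos (mem_step_w hS hS'.1 hS'.2), par_w hS'.1 hS'.2 (h.hrK S hS)]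
      have e2 : (incL h f).1 (insert r (S.erase u)) = f.1 S := by
        change (if _ then _ else _) = _
        rw [if_pos (mem_step_u hS hS'.1 hS'.2), par_u hS'.1 hS'.2 (h.hrK S hS)]
      rw [qq_uniq h hm hS hS'.1 hS'.2 (q := 0) (by rw [e1, e2]; simp), e1]
      simp
    · rw [ret, if_pos hS, if_neg hS']
      change (if _ then _ else _) = _
      rw [if_pos (mem_stepK.2 (Or.inl ⟨hS, hS'⟩)), par, if_neg (h.hrK S hS)]
  · rw [ret, if_neg hS, f.2.1 S hS]

theorem proj_step (h : Edge K u w r α β)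
    (hp : Module.Projective (MvPolynomial (Fin d) ℝ) (PM (stepK K u w r))) :
    Module.Projective (MvPolynomial (Fin d) ℝ) (PM K) :=
  Module.Projective.of_split (incL h) (retL h) (ret_inc h)

end Retract


section Sfan
variable {d : ℕ}

noncomputable def lc (c : (Fin d → ℝ) →₀ ℝ) : Fin d → ℝ :=
  Finsupp.linearCombination ℝ (id : (Fin d → ℝ) → (Fin d → ℝ)) c

theorem lc_add (c c' : (Fin d → ℝ) →₀ ℝ) : lc (c + c') = lc c + lc c' := map_add _ _ _
theorem lc_sub (c c' : (Fin d → ℝ) →₀ ℝ) : lc (c - c') = lc c - lc c' := map_sub _ _ _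
theorem lc_single (x : Fin d → ℝ) (a : ℝ) : lc (Finsupp.single x a) = a • x := by
  simp [lc]

def CRep (S : Finset (Fin d → ℝ)) (x : Fin d → ℝ) (c : (Fin d → ℝ) →₀ ℝ) : Prop :=
  (∀ z, z ∉ S → c z = 0) ∧ (∀ z, 0 ≤ c z) ∧ lc c = x

structure SFan (K : Finset (Finset (Fin d → ℝ))) : Prop where
  bas : ∀ S ∈ K, IsBas S
  cov : ∀ x, ∃ S ∈ K, ∃ c, CRep S x c
  uniq : ∀ S ∈ K, ∀ T ∈ K, ∀ x c c', CRep S x c → CRep T x c' → c = c'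

theorem lc_eq_sum {S : Finset (Fin d → ℝ)} {c : (Fin d → ℝ) →₀ ℝ} (h : ∀ z, z ∉ S → c z = 0) :
    lc c = ∑ z ∈ S, c z • z := by
  rw [lc, Finsupp.linearCombination_apply]
  apply Finsupp.sum_of_support_subset
  · intro z hz
    by_contra hn
    exact (Finsupp.mem_support_iff.1 hz) (h z hn)
  · simp

theorem CRep.mem {S : Finset (Fin d → ℝ)} {x} {c : (Fin d → ℝ) →₀ ℝ} (h : CRep S x c) :
    x ∈ coneHull S := ⟨c, h.2.1, by rw [← lc_eq_sum h.1, h.2.2]⟩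

theorem exists_rep {S : Finset (Fin d → ℝ)} {x : Fin d → ℝ} (h : x ∈ coneHull S) :
    ∃ c, CRep S x c := by
  obtain ⟨c, hc, rfl⟩ := h
  refine ⟨Finsupp.onFinset S (fun z => if z ∈ S then c z else 0)
    (fun z hz => by by_contra hn; simp [hn] at hz), ?_, ?_, ?_⟩
  · intro z hz; simp [hz]
  · intro z; simp only [Finsupp.onFinset_apply]; split_ifs
    · exact hc z
    · exact le_rfl
  · rw [lc_eq_sum (S := S)]
    · apply Finset.sum_congr rfl
      intro z hz; simp [hz]
    · intro z hz; simp [hz]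

variable {K : Finset (Finset (Fin d → ℝ))} {u w r : Fin d → ℝ} {α β : ℝ}

theorem SFan.edge (h : SFan K) (hα : 0 < α) (hβ : 0 < β) (huw : u ≠ w) {S : Finset (Fin d → ℝ)}
    (hS : S ∈ K) (hu : u ∈ S) (hw : w ∈ S) : Edge K u w (α • u + β • w) α β := by
  refine ⟨hα, hβ, rfl, huw, h.bas, ?_, ⟨S, hS, hu, hw⟩⟩
  intro T hT hr
  have h1 : CRep S (α • u + β • w) (Finsupp.single u α + Finsupp.single w β) := by
    refine ⟨?_, ?_, ?_⟩
    · intro z hz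
      rw [Finsupp.add_apply, Finsupp.single_eq_of_ne (by rintro rfl; exact hz hu),
        Finsupp.single_eq_of_ne (by rintro rfl; exact hz hw), add_zero]
    · intro z
      rw [Finsupp.add_apply, Finsupp.single_apply, Finsupp.single_apply]
      split_ifs <;> positivity
    · rw [lc_add, lc_single, lc_single]
  have h2 : CRep T (α • u + β • w) (Finsupp.single (α • u + β • w) 1) := by
    refine ⟨?_, ?_, ?_⟩
    · intro z hz
      rw [Finsupp.single_eq_of_ne (by rintro rfl; exact hz hr)]
    · intro z
      rw [Finsupp.single_apply]
      split_ifs <;> norm_num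
    · rw [lc_single, one_smul]
  have h3 := h.uniq S hS T hT _ _ _ h1 h2
  by_cases hru : α • u + β • w = u
  · have := DFunLike.congr_fun h3 w
    rw [hru] at this
    simp [huw] at this
    exact hβ.ne' this
  · have := DFunLike.congr_fun h3 u
    rw [Finsupp.single_eq_of_ne (Ne.symm hru)] at this
    simp [huw] at this
    exact hα.ne' this

noncomputable def dd (u w r : Fin d → ℝ) (α β : ℝ) (c : (Fin d → ℝ) →₀ ℝ) : (Fin d → ℝ) →₀ ℝ :=
  c - Finsupp.single r (c r) + Finsupp.single u (α * c r) + Finsupp.single w (β * c r)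

theorem Edge.rnw (h : Edge K u w r α β) : r ≠ w := h.symm.ru

theorem step_cases (h : Edge K u w r α β) {S' : Finset (Fin d → ℝ)} (hS' : S' ∈ stepK K u w r) :
    (r ∉ S' ∧ S' ∈ K ∧ ¬ (u ∈ S' ∧ w ∈ S') ∧ par u w r S' = S') ∨
    (∃ S ∈ K, (u ∈ S ∧ w ∈ S) ∧ par u w r S' = S ∧
      (S' = insert r (S.erase w) ∨ S' = insert r (S.erase u))) := by
  rcases mem_stepK.1 hS' with ⟨h1, h2⟩ | ⟨S, h1, h2, rfl⟩ | ⟨S, h1, h2, rfl⟩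
  · left; exact ⟨h.hrK _ h1, h1, h2, by rw [par, if_neg (h.hrK _ h1)]⟩
  · right; exact ⟨S, h1, h2, par_w h2.1 h2.2 (h.hrK S h1), Or.inl rfl⟩
  · right; exact ⟨S, h1, h2, par_u h2.1 h2.2 (h.hrK S h1), Or.inr rfl⟩

theorem step_not_both (h : Edge K u w r α β) {S' : Finset (Fin d → ℝ)}
    (hS' : S' ∈ stepK K u w r) : ¬ (u ∈ S' ∧ w ∈ S') := by
  have := h.ru
  have := h.rnw
  rcases step_cases h hS' with ⟨-, -, h1, -⟩ | ⟨S, h1, h2, -, rfl | rfl⟩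
  · exact h1
  · simp [h.rnw.symm]
  · simp [h.ru.symm]

theorem mem_par {S' : Finset (Fin d → ℝ)} {z : Fin d → ℝ} (hz : z ∈ S') (hr : z ≠ r) :
    z ∈ par u w r S' := by
  rw [par]; split_ifs
  · simp [hz, hr]
  · exact hz

theorem rep_dd (h : Edge K u w r α β) {S' : Finset (Fin d → ℝ)} {x} {c : (Fin d → ℝ) →₀ ℝ}
    (hc : CRep S' x c) : CRep (par u w r S') x (dd u w r α β c) := by
  obtain ⟨h1, h2, h3⟩ := hc
  have key : ∀ z, dd u w r α β c z = c z - (if r = z then c r else 0) +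
    (if u = z then α * c r else 0) + (if w = z then β * c r else 0) := by
    intro z; simp only [dd, Finsupp.add_apply, Finsupp.sub_apply, Finsupp.single_apply]
  refine ⟨?_, ?_, ?_⟩
  · intro z hz
    rw [key]
    by_cases hr : r ∈ S'
    · rw [par, if_pos hr] at hz
      simp only [Finset.mem_insert, Finset.mem_erase, not_or, not_and] at hz
      rw [if_neg (Ne.symm hz.1), if_neg (Ne.symm hz.2.1)]
      by_cases hzr : r = z
      · subst hzr; simp
      · rw [h1 z (hz.2.2 (Ne.symm hzr)), if_neg hzr]; simp
    · rw [par, if_neg hr] at hz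
      rw [h1 z hz, h1 r hr]; simp
  · intro z
    rw [key]
    have hα := h.hα
    have hβ := h.hβ
    have a1 := h2 z
    have a2 := h2 r
    have a3 : 0 ≤ c z - (if r = z then c r else 0) := by
      split_ifs with h
      · subst h; simp
      · simpa using a1
    have : 0 ≤ (if u = z then α * c r else 0) := by split_ifs <;> positivity
    have : 0 ≤ (if w = z then β * c r else 0) := by split_ifs <;> positivity
    linarith
  · rw [dd, lc_add, lc_add, lc_sub, lc_single, lc_single, lc_single, h3]
    generalize c r = t
    rw [h.hr]
    module

theorem aux_min {α β a b c a' b' c' : ℝ} (hα : 0 < α) (hβ : 0 < β) (ha : 0 ≤ a) (hb : 0 ≤ b)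
    (ha' : 0 ≤ a') (hb' : 0 ≤ b')
    (h : a = 0 ∨ b = 0) (h' : a' = 0 ∨ b' = 0) (e1 : a + α * c = a' + α * c')
    (e2 : b + β * c = b' + β * c') : c = c' := by
  have k1 : α * c ≤ α * c' → c ≤ c' := fun h => le_of_mul_le_mul_left h hα
  have k2 : α * c' ≤ α * c → c' ≤ c := fun h => le_of_mul_le_mul_left h hα
  have k3 : β * c ≤ β * c' → c ≤ c' := fun h => le_of_mul_le_mul_left h hβ
  have k4 : β * c' ≤ β * c → c' ≤ c := fun h => le_of_mul_le_mul_left h hβ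
  rcases h with rfl | rfl <;> rcases h' with rfl | rfl
  · exact le_antisymm (k1 (by linarith)) (k2 (by linarith))
  · exact le_antisymm (k3 (by linarith)) (k2 (by linarith))
  · exact le_antisymm (k1 (by linarith)) (k4 (by linarith))
  · exact le_antisymm (k3 (by linarith)) (k4 (by linarith))

theorem step_cov (h : Edge K u w r α β) {S : Finset (Fin d → ℝ)} (hS : S ∈ K)
    (hu : u ∈ S) (hw : w ∈ S) {x} {c : (Fin d → ℝ) →₀ ℝ} (hc : CRep S x c)
    (hle : c u / α ≤ c w / β) : ∃ S ∈ stepK K u w r, ∃ c, CRep S x c := by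
  refine ⟨_, mem_step_u hS hu hw, c - Finsupp.single u (c u) - Finsupp.single w (β * (c u / α))
    + Finsupp.single r (c u / α), ?_, ?_, ?_⟩
  · intro z hz
    simp only [Finset.mem_insert, Finset.mem_erase, not_or, not_and] at hz
    simp only [Finsupp.sub_apply, Finsupp.add_apply, Finsupp.single_apply, if_neg (Ne.symm hz.1)]
    by_cases hzu : u = z
    · subst hzu; simp [h.huw.symm]
    · have := hz.2 (Ne.symm hzu)
      rw [hc.1 z this, if_neg hzu, if_neg (by rintro rfl; exact this hw)]; simp
  · intro z
    simp only [Finsupp.sub_apply, Finsupp.add_apply, Finsupp.single_apply]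
    have h0 : 0 ≤ c u / α := div_nonneg (hc.2.1 u) h.hα.le
    have hz := hc.2.1 z
    by_cases hzu : u = z
    · subst hzu; simp only [if_pos, if_neg h.huw.symm]; split_ifs <;> linarith
    · rw [if_neg hzu]
      by_cases hzw : w = z
      · subst hzw
        rw [le_div_iff₀ h.hβ] at hle
        simp only [if_pos]
        split_ifs <;> linarith
      · rw [if_neg hzw]; split_ifs <;> linarith
  · rw [lc_add, lc_sub, lc_sub, lc_single, lc_single, lc_single, hc.2.2]
    rw [h.hr]
    rw [smul_add, smul_smul, smul_smul, div_mul_cancel₀ _ h.hα.ne', mul_comm β]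
    module

theorem SFan.step (hK : SFan K) (h : Edge K u w r α β) : SFan (stepK K u w r) := by
  refine ⟨fun S hS => h.bas' hS, ?_, ?_⟩
  · intro x
    obtain ⟨S, hS, c, hc⟩ := hK.cov x
    by_cases huw : u ∈ S ∧ w ∈ S
    · rcases le_total (c u / α) (c w / β) with h1 | h1
      · exact step_cov h hS huw.1 huw.2 hc h1
      · rw [stepK_symm]
        exact step_cov h.symm hS huw.2 huw.1 hc h1
    · exact ⟨S, mem_stepK.2 (Or.inl ⟨hS, huw⟩), c, hc⟩
  · intro S hS T hT x c c' hc hc'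
    have e := hK.uniq _ (par_mem h hS) _ (par_mem h hT) _ _ _ (rep_dd h hc) (rep_dd h hc')
    have key : ∀ (c : (Fin d → ℝ) →₀ ℝ) z, dd u w r α β c z = c z - (if r = z then c r else 0) +
      (if u = z then α * c r else 0) + (if w = z then β * c r else 0) := by
      intro c z; simp only [dd, Finsupp.add_apply, Finsupp.sub_apply, Finsupp.single_apply]
    have eu := DFunLike.congr_fun e u
    have ew := DFunLike.congr_fun e w
    rw [key, key, if_neg h.ru, if_neg h.ru, if_pos rfl, if_pos rfl, if_neg h.huw.symm,
      if_neg h.huw.symm] at eu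
    rw [key, key, if_neg h.rnw, if_neg h.rnw, if_pos rfl, if_pos rfl, if_neg h.huw,
      if_neg h.huw] at ew
    have hz : ∀ {S : Finset (Fin d → ℝ)} {c : (Fin d → ℝ) →₀ ℝ}, S ∈ stepK K u w r → CRep S x c →
        c u = 0 ∨ c w = 0 := by
      intro S c hS hc
      by_cases hu : u ∈ S
      · exact Or.inr (hc.1 w (fun hw => step_not_both h hS ⟨hu, hw⟩))
      · exact Or.inl (hc.1 u hu)
    have er : c r = c' r := aux_min h.hα h.hβ (hc.2.1 u) (hc.2.1 w) (hc'.2.1 u) (hc'.2.1 w)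
      (hz hS hc) (hz hT hc') (by linarith) (by linarith)
    ext z
    have := DFunLike.congr_fun e z
    rw [key, key, er] at this
    linarith

/-- small displacement lemma -/
theorem SFan.disp (hK : SFan K) (y z : Fin d → ℝ) : ∃ T ∈ K, (∀ w ∈ T, 0 ≤ crd T w y) ∧
    ∃ ε : ℝ, 0 < ε ∧ ∀ w ∈ T, 0 ≤ crd T w (y + ε • z) := by
  have h : ∀ n : ℕ, ∃ S : K, y + (1 / ((n : ℝ) + 1)) • z ∈ coneHull S.1 := by
    intro n
    obtain ⟨S, hS, c, hc⟩ := hK.cov (y + (1 / ((n : ℝ) + 1)) • z)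
    exact ⟨⟨S, hS⟩, hc.mem⟩
  choose F hF using h
  obtain ⟨T, hT⟩ := Finite.exists_infinite_fiber F
  have hinf : (F ⁻¹' {T}).Infinite := Set.infinite_coe_iff.1 hT
  have hb := hK.bas T.1 T.2
  have hall : ∀ N : ℕ, ∃ n, N < n ∧ ∀ w ∈ T.1, 0 ≤ crd T.1 w (y + (1 / ((n : ℝ) + 1)) • z) := by
    intro N
    obtain ⟨n, hn, hN⟩ := hinf.exists_gt N
    refine ⟨n, hN, ?_⟩
    have := hF n
    rw [show F n = T from hn] at this
    exact (cone_iff hb _).1 this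
  refine ⟨T.1, T.2, ?_, ?_⟩
  · intro w hw
    by_contra hneg
    push Not at hneg
    obtain ⟨N, hN⟩ := exists_nat_gt (crd T.1 w z / -crd T.1 w y)
    obtain ⟨n, hn, hn'⟩ := hall N
    have h1 := hn' w hw
    rw [map_add, map_smul, smul_eq_mul] at h1
    have hn2 : (N : ℝ) < n := by exact_mod_cast hn
    rw [div_lt_iff₀ (by linarith)] at hN
    have hpos : (0:ℝ) < (n : ℝ) + 1 := by positivity
    have h2 : 0 ≤ crd T.1 w y * ((n : ℝ) + 1) + crd T.1 w z := by
      have := mul_nonneg h1 hpos.le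
      rw [add_mul, mul_assoc, mul_comm (crd T.1 w z), ← mul_assoc, one_div,
        inv_mul_cancel₀ hpos.ne', one_mul] at this
      exact this
    nlinarith
  · obtain ⟨n, hn, hn'⟩ := hall 0
    exact ⟨_, by positivity, hn'⟩

end Sfan


section InvK
variable {d : ℕ}

def InvK (H : Finset ((Fin d → ℝ) →ₗ[ℝ] ℝ)) (K : Finset (Finset (Fin d → ℝ))) : Prop :=
  ∀ v : Fin d → ℝ, ∃ key : Finset (Fin d → ℝ) → ℕ, ∀ S ∈ K, ∀ T ∈ K, ∀ ρ ∈ S, ρ ∉ T →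
    S.erase ρ ⊆ T → 0 < crd S ρ v → (∀ l ∈ H, ∃ z ∈ S ∩ T, l z ≠ 0) → key T < key S

variable {K : Finset (Finset (Fin d → ℝ))} {u w r : Fin d → ℝ} {α β : ℝ}

theorem par_symm (S : Finset (Fin d → ℝ)) : par u w r S = par w u r S := by
  rw [par, par, Finset.insert_comm]

theorem Edge.crd_keep (h : Edge K u w r α β) {S : Finset (Fin d → ℝ)} (hS : S ∈ K) (hu : u ∈ S)
    (hw : w ∈ S) {ρ : Fin d → ℝ} (hρ : ρ ∈ S) (h1 : ρ ≠ u) (h2 : ρ ≠ w) :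
    crd (insert r (S.erase w)) ρ = crd S ρ := by
  have hb := h.basw hS hu hw
  have hbS := h.bas S hS
  have hm : ρ ∈ insert r (S.erase w) := Finset.mem_insert_of_mem (Finset.mem_erase.2 ⟨h2, hρ⟩)
  apply crd_ext hb
  intro z hz
  rcases Finset.mem_insert.1 hz with rfl | hz'
  · rw [crd_ne hb hm hz (by rintro rfl; exact h.hrK S hS hρ), h.hr, map_add, map_smul, map_smul,
      crd_ne hbS hρ hu h1.symm, crd_ne hbS hρ hw h2.symm]
    simp
  · have hzS := Finset.mem_of_mem_erase hz'
    by_cases hzr : z = ρ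
    · subst hzr; rw [crd_self hb hm, crd_self hbS hρ]
    · rw [crd_ne hb hm hz hzr, crd_ne hbS hρ hzS hzr]

theorem Edge.crd_new (h : Edge K u w r α β) {S : Finset (Fin d → ℝ)} (hS : S ∈ K) (hu : u ∈ S)
    (hw : w ∈ S) : crd S w = β • crd (insert r (S.erase w)) r := by
  have hb := h.basw hS hu hw
  have hbS := h.bas S hS
  have hm : r ∈ insert r (S.erase w) := Finset.mem_insert_self _ _
  apply crd_ext hb
  intro z hz
  rw [LinearMap.smul_apply]
  rcases Finset.mem_insert.1 hz with rfl | hz'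
  · rw [crd_self hb hm, h.crd_r hS hu hw]; simp
  · obtain ⟨h1, h2⟩ := Finset.mem_erase.1 hz'
    rw [crd_ne hbS hw h2 h1, crd_ne hb hm hz (by rintro rfl; exact h.hrK S hS h2)]; simp

theorem sub_eq (hb : ∀ S ∈ K, IsBas S) {S T : Finset (Fin d → ℝ)} (hS : S ∈ K) (hT : T ∈ K)
    (h : S ⊆ T) : S = T :=
  Finset.eq_of_subset_of_card_le h (by rw [(hb S hS).2, (hb T hT).2])

/-- adjacency of distinct parents, when the first child replaces `w` by `r` -/
theorem adj_w (h : Edge K u w r α β) {v : Fin d → ℝ} {S T' : Finset (Fin d → ℝ)} (hS : S ∈ K)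
    (hu : u ∈ S) (hw : w ∈ S) (hT' : T' ∈ stepK K u w r) (hne : S ≠ par u w r T')
    {ρ : Fin d → ℝ} (hρ : ρ ∈ insert r (S.erase w)) (hρT : ρ ∉ T')
    (hsub : (insert r (S.erase w)).erase ρ ⊆ T') (hpos : 0 < crd (insert r (S.erase w)) ρ v) :
    ∃ ρ ∈ S, ρ ∉ par u w r T' ∧ S.erase ρ ⊆ par u w r T' ∧ 0 < crd S ρ v := by
  have hTK := par_mem h hT'
  rcases step_cases h hT' with ⟨h1, h2, h3, h4⟩ | ⟨T, h1, h2, h4, h5⟩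
  · rw [h4] at hne hTK ⊢
    have hρr : ρ = r := by
      by_contra hn
      exact h1 (hsub (Finset.mem_erase.2 ⟨Ne.symm hn, Finset.mem_insert_self _ _⟩))
    subst hρr
    have hsub2 : S.erase w ⊆ T' := by
      intro z hz
      apply hsub
      refine Finset.mem_erase.2 ⟨?_, Finset.mem_insert_of_mem hz⟩
      rintro rfl
      exact h.hrK S hS (Finset.mem_of_mem_erase hz)
    refine ⟨w, hw, ?_, hsub2, ?_⟩
    · intro hwT
      apply hne
      apply sub_eq h.bas hS hTK
      intro z hz
      by_cases hzw : z = w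
      · rwa [hzw]
      · exact hsub2 (Finset.mem_erase.2 ⟨hzw, hz⟩)
    · rw [h.crd_new hS hu hw]
      exact mul_pos h.hβ hpos
  · rw [h4] at hne hTK ⊢
    have hrT : r ∈ T' := by rcases h5 with rfl | rfl <;> exact Finset.mem_insert_self _ _
    have hρr : ρ ≠ r := by rintro rfl; exact hρT hrT
    have hρS : ρ ∈ S.erase w := (Finset.mem_insert.1 hρ).resolve_left hρr
    obtain ⟨hρw, hρS⟩ := Finset.mem_erase.1 hρS
    have hTsub : ∀ z ∈ T', z ≠ r → z ∈ T := by
      intro z hz hzr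
      rcases h5 with rfl | rfl <;>
        exact Finset.mem_of_mem_erase ((Finset.mem_insert.1 hz).resolve_left hzr)
    have hsub2 : S.erase ρ ⊆ T := by
      intro z hz
      obtain ⟨hz1, hz2⟩ := Finset.mem_erase.1 hz
      by_cases hzw : z = w
      · rw [hzw]; exact h2.2
      · exact hTsub z (hsub (Finset.mem_erase.2 ⟨hz1, Finset.mem_insert_of_mem
          (Finset.mem_erase.2 ⟨hzw, hz2⟩)⟩)) (by rintro rfl; exact h.hrK S hS hz2)
    have hρT' : ρ ∉ T := by
      intro hn
      apply hne
      apply sub_eq h.bas hS hTK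
      intro z hz
      by_cases hzw : z = ρ
      · rwa [hzw]
      · exact hsub2 (Finset.mem_erase.2 ⟨hzw, hz⟩)
    refine ⟨ρ, hρS, hρT', hsub2, ?_⟩
    rwa [h.crd_keep hS hu hw hρS (by rintro rfl; exact hρT' h2.1) hρw] at hpos

theorem adj_0 (h : Edge K u w r α β) {v : Fin d → ℝ} {S T' : Finset (Fin d → ℝ)} (hS : S ∈ K)
    (hT' : T' ∈ stepK K u w r) (hne : S ≠ par u w r T')
    {ρ : Fin d → ℝ} (hρ : ρ ∈ S) 
    (hsub : S.erase ρ ⊆ T') (hpos : 0 < crd S ρ v) :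
    ∃ ρ ∈ S, ρ ∉ par u w r T' ∧ S.erase ρ ⊆ par u w r T' ∧ 0 < crd S ρ v := by
  have hsub2 : S.erase ρ ⊆ par u w r T' := by
    intro z hz
    apply mem_par (hsub hz)
    rintro rfl
    exact h.hrK S hS (Finset.mem_of_mem_erase hz)
  refine ⟨ρ, hρ, ?_, hsub2, hpos⟩
  intro hn
  apply hne
  apply sub_eq h.bas hS (par_mem h hT')
  intro z hz
  by_cases hzw : z = ρ
  · rwa [hzw]
  · exact hsub2 (Finset.mem_erase.2 ⟨hzw, hz⟩)

theorem LL_neg (h : Edge K u w r α β) {S : Finset (Fin d → ℝ)} (hS : S ∈ K) (hu : u ∈ S)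
    (hw : w ∈ S) {v : Fin d → ℝ} (hv : 0 < crd (insert r (S.erase w)) u v) :
    crd (insert r (S.erase u)) w v < 0 := by
  rw [← LL_eq h hS hu hw] at hv
  rw [← LL_eq h.symm hS hw hu]
  simp only [LL, LinearMap.sub_apply, LinearMap.smul_apply, smul_eq_mul] at hv ⊢
  have hα := h.hα
  have hβ := h.hβ
  have : crd S w v - β / α * crd S u v = -(β / α) * (crd S u v - α / β * crd S w v) := by
    field_simp; ring
  rw [this]
  have : 0 < β / α := by positivity
  nlinarith

def bitP (u w r v : Fin d → ℝ) (S : Finset (Fin d → ℝ)) : Prop :=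
  r ∈ S ∧ ((u ∈ S ∧ 0 < crd S u v) ∨ (w ∈ S ∧ 0 < crd S w v))

theorem bit_w (h : Edge K u w r α β) {S : Finset (Fin d → ℝ)} (hS : S ∈ K) (hu : u ∈ S)
    (hw : w ∈ S) {v ρ : Fin d → ℝ} 
    (hρ : ρ ∈ insert r (S.erase w)) (hρ' : ρ ∉ insert r (S.erase u))
    (hv : 0 < crd (insert r (S.erase w)) ρ v) :
    bitP u w r v (insert r (S.erase w)) ∧ ¬ bitP u w r v (insert r (S.erase u)) := by
  have hρu : ρ = u := by
    simp only [Finset.mem_insert, Finset.mem_erase] at hρ hρ'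
    tauto
  subst hρu
  refine ⟨⟨Finset.mem_insert_self _ _, Or.inl ⟨hρ, hv⟩⟩, ?_⟩
  rintro ⟨-, h1 | h1⟩
  · exact hρ' h1.1
  · exact absurd h1.2 (not_lt.2 (LL_neg h hS hu hw hv).le)

theorem InvK.step {H : Finset ((Fin d → ℝ) →ₗ[ℝ] ℝ)} (hI : InvK H K) (h : Edge K u w r α β) :
    InvK H (stepK K u w r) := by
  intro v
  obtain ⟨key, hkey⟩ := hI v
  refine ⟨fun S => 2 * key (par u w r S) + if bitP u w r v S then 1 else 0, ?_⟩
  intro S' hS' T' hT' ρ hρ hρT hsub hpos hl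
  dsimp only
  by_cases hne : par u w r S' = par u w r T'
  · rw [hne]
    suffices hs : bitP u w r v S' ∧ ¬ bitP u w r v T' by
      rw [if_pos hs.1, if_neg hs.2]; omega
    rcases step_cases h hS' with ⟨h1, h2, h3, h4⟩ | ⟨S, h1, h2, h4, h5⟩
    · rcases step_cases h hT' with ⟨h1', h2', h3', h4'⟩ | ⟨T, h1', h2', h4', h5'⟩
      · rw [h4, h4'] at hne; subst hne; exact absurd hρ hρT
      · rw [h4, h4'] at hne; subst hne; exact absurd h2' h3
    · rcases step_cases h hT' with ⟨h1', h2', h3', h4'⟩ | ⟨T, h1', h2', h4', h5'⟩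
      · rw [h4, h4'] at hne; subst hne; exact absurd h2 h3'
      · rw [h4, h4'] at hne; subst hne
        rcases h5 with rfl | rfl <;> rcases h5' with rfl | rfl
        · exact absurd hρ hρT
        · exact bit_w h h1 h2.1 h2.2 hρ hρT hpos
        · have := bit_w h.symm h1 h2.2 h2.1 hρ hρT hpos
          simpa only [bitP, or_comm] using this
        · exact absurd hρ hρT
  · have hadj : ∃ ρ ∈ par u w r S', ρ ∉ par u w r T' ∧ (par u w r S').erase ρ ⊆ par u w r T' ∧
        0 < crd (par u w r S') ρ v := by
      rcases step_cases h hS' with ⟨h1, h2, h3, h4⟩ | ⟨S, h1, h2, h4, h5⟩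
      · rw [h4] at hne ⊢
        exact adj_0 h h2 hT' hne hρ hsub hpos
      · rw [h4] at hne ⊢
        rcases h5 with rfl | rfl
        · exact adj_w h h1 h2.1 h2.2 hT' hne hρ hρT hsub hpos
        · rw [par_symm T'] at hne ⊢
          rw [stepK_symm] at hT'
          exact adj_w h.symm h1 h2.2 h2.1 hT' hne hρ hρT hsub hpos
    obtain ⟨ρ0, a1, a2, a3, a4⟩ := hadj
    have := hkey _ (par_mem h hS') _ (par_mem h hT') ρ0 a1 a2 a3 a4 (by
      intro l hl'
      by_contra hn
      push Not at hn
      obtain ⟨z, hz, hz0⟩ := hl l hl'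
      have hz2 := par_span h z hz
      apply hz0
      have : Submodule.span ℝ ((par u w r S' ∩ par u w r T' : Finset _) : Set (Fin d → ℝ)) ≤
          LinearMap.ker l := by
        rw [Submodule.span_le]
        intro y hy
        exact hn y hy
      exact this hz2)
    split_ifs <;> omega

def Clean (l : (Fin d → ℝ) →ₗ[ℝ] ℝ) (K : Finset (Finset (Fin d → ℝ))) : Prop :=
  ∀ S ∈ K, ∀ a ∈ S, ∀ b ∈ S, 0 < l a → l b < 0 → False

theorem Clean.step {l : (Fin d → ℝ) →ₗ[ℝ] ℝ} (hc : Clean l K) (h : Edge K u w r α β) :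
    Clean l (stepK K u w r) := by
  intro S' hS' a ha b hb hla hlb
  have hP := hc _ (par_mem h hS')
  have hr : r ∈ S' → u ∈ par u w r S' ∧ w ∈ par u w r S' := by
    intro hr; rw [par, if_pos hr]; simp
  have hlr : l r = α * l u + β * l w := by rw [h.hr]; simp
  have hα := h.hα
  have hβ := h.hβ
  have h1 : ∃ a ∈ par u w r S', 0 < l a := by
    by_cases har : a = r
    · subst har
      by_contra hn
      push Not at hn
      have := hn u (hr ha).1
      have := hn w (hr ha).2
      nlinarith
    · exact ⟨a, mem_par ha har, hla⟩
  have h2 : ∃ a ∈ par u w r S', l a < 0 := by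
    by_cases har : b = r
    · subst har
      by_contra hn
      push Not at hn
      have := hn u (hr hb).1
      have := hn w (hr hb).2
      nlinarith
    · exact ⟨b, mem_par hb har, hlb⟩
  obtain ⟨a', ha', h1⟩ := h1
  obtain ⟨b', hb', h2⟩ := h2
  exact hP a' ha' b' hb' h1 h2

noncomputable def crossing (l : (Fin d → ℝ) →ₗ[ℝ] ℝ) (K : Finset (Finset (Fin d → ℝ))) :
    Finset ((Fin d → ℝ) × (Fin d → ℝ)) :=
  (K.biUnion id ×ˢ K.biUnion id).filter
    (fun p => ∃ S ∈ K, p.1 ∈ S ∧ p.2 ∈ S ∧ 0 < l p.1 ∧ l p.2 < 0)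

theorem mem_crossing {l : (Fin d → ℝ) →ₗ[ℝ] ℝ} {p : (Fin d → ℝ) × (Fin d → ℝ)} :
    p ∈ crossing l K ↔ ∃ S ∈ K, p.1 ∈ S ∧ p.2 ∈ S ∧ 0 < l p.1 ∧ l p.2 < 0 := by
  rw [crossing, Finset.mem_filter, and_iff_right_iff_imp]
  rintro ⟨S, hS, h1, h2, -⟩
  rw [Finset.mem_product, Finset.mem_biUnion, Finset.mem_biUnion]
  exact ⟨⟨S, hS, h1⟩, ⟨S, hS, h2⟩⟩

theorem crossing_lt {l : (Fin d → ℝ) →ₗ[ℝ] ℝ} (h : Edge K u w r α β) (hu : 0 < l u) (hw : l w < 0)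
    (hr : l r = 0) : (crossing l (stepK K u w r)).card < (crossing l K).card := by
  apply Finset.card_lt_card
  rw [Finset.ssubset_iff_of_subset]
  · obtain ⟨S, hS, h1, h2⟩ := h.ex
    refine ⟨(u, w), mem_crossing.2 ⟨S, hS, h1, h2, hu, hw⟩, ?_⟩
    rw [mem_crossing]
    rintro ⟨S', hS', h1, h2, -⟩
    exact step_not_both h hS' ⟨h1, h2⟩
  · intro p hp
    rw [mem_crossing] at hp ⊢
    obtain ⟨S', hS', h1, h2, h3, h4⟩ := hp
    refine ⟨_, par_mem h hS', mem_par h1 ?_, mem_par h2 ?_, h3, h4⟩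
    · intro e; rw [e, hr] at h3; exact lt_irrefl _ h3
    · intro e; rw [e, hr] at h4; exact lt_irrefl _ h4

theorem clean_one {H D : Finset ((Fin d → ℝ) →ₗ[ℝ] ℝ)} (l : (Fin d → ℝ) →ₗ[ℝ] ℝ) (n : ℕ) :
    ∀ K : Finset (Finset (Fin d → ℝ)), (crossing l K).card ≤ n → SFan K → InvK H K →
    (∀ l' ∈ D, Clean l' K) → ∃ K' : Finset (Finset (Fin d → ℝ)), SFan K' ∧ InvK H K' ∧
      (∀ l' ∈ insert l D, Clean l' K') ∧ (Module.Projective (MvPolynomial (Fin d) ℝ) (PM K') →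
        Module.Projective (MvPolynomial (Fin d) ℝ) (PM K)) := by
  induction n with
  | zero =>
    intro K hc hK hI hD
    refine ⟨K, hK, hI, ?_, id⟩
    intro l' hl'
    rcases Finset.mem_insert.1 hl' with rfl | hl'
    · intro S hS a ha b hb hla hlb
      have : (a, b) ∈ crossing l' K := mem_crossing.2 ⟨S, hS, ha, hb, hla, hlb⟩
      rw [Nat.le_zero, Finset.card_eq_zero] at hc
      rw [hc] at this
      simp at this
    · exact hD l' hl'
  | succ n ih =>
    intro K hc hK hI hD
    by_cases hcl : Clean l K
    · refine ⟨K, hK, hI, ?_, id⟩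
      intro l' hl'
      rcases Finset.mem_insert.1 hl' with rfl | hl'
      · exact hcl
      · exact hD l' hl'
    · rw [Clean] at hcl
      push Not at hcl
      obtain ⟨S, hS, u, hu, w, hw, hlu, hlw, -⟩ := hcl
      have hE : Edge K u w ((-l w) • u + (l u) • w) (-l w) (l u) :=
        hK.edge (by linarith) hlu (by rintro rfl; linarith) hS hu hw
      have hr : l ((-l w) • u + (l u) • w) = 0 := by
        simp only [map_add, map_smul, smul_eq_mul]; ring
      have hlt := crossing_lt hE hlu hlw hr
      obtain ⟨K', a1, a2, a3, a4⟩ := ih _ (by omega) (hK.step hE) (hI.step hE)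
        (fun l' hl' => (hD l' hl').step hE)
      exact ⟨K', a1, a2, a3, fun hp => proj_step hE (a4 hp)⟩

theorem clean_all {H : Finset ((Fin d → ℝ) →ₗ[ℝ] ℝ)} (D : Finset ((Fin d → ℝ) →ₗ[ℝ] ℝ)) :
    ∀ K : Finset (Finset (Fin d → ℝ)), SFan K → InvK H K → 
    ∃ K' : Finset (Finset (Fin d → ℝ)), SFan K' ∧ InvK H K' ∧
      (∀ l' ∈ D, Clean l' K') ∧ (Module.Projective (MvPolynomial (Fin d) ℝ) (PM K') →
        Module.Projective (MvPolynomial (Fin d) ℝ) (PM K)) := by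
  induction D using Finset.induction_on with
  | empty => intro K hK hI; exact ⟨K, hK, hI, by simp, id⟩
  | insert l D _ ih =>
    intro K hK hI
    obtain ⟨K1, a1, a2, a3, a4⟩ := ih K hK hI
    obtain ⟨K2, b1, b2, b3, b4⟩ := clean_one l _ K1 le_rfl a1 a2 a3
    exact ⟨K2, b1, b2, b3, fun h => a4 (b4 h)⟩

theorem exists_clean (hK : SFan K) : ∃ (H : Finset ((Fin d → ℝ) →ₗ[ℝ] ℝ)) 
    (K' : Finset (Finset (Fin d → ℝ))), SFan K' ∧ InvK H K' ∧ (∀ l' ∈ H, l' ≠ 0) ∧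
      (∀ l' ∈ H, Clean l' K') ∧ (Module.Projective (MvPolynomial (Fin d) ℝ) (PM K') →
        Module.Projective (MvPolynomial (Fin d) ℝ) (PM K)) := by
  have hI0 : InvK (K.biUnion (fun S => S.image (crd S))) K := by
    intro v
    refine ⟨fun _ => 0, ?_⟩
    intro S hS T hT ρ hρ hρT hsub hpos hl
    exfalso
    obtain ⟨z, hz, hz0⟩ := hl (crd S ρ) (Finset.mem_biUnion.2 ⟨S, hS, Finset.mem_image_of_mem _ hρ⟩)
    rw [Finset.mem_inter] at hz
    apply hz0
    exact crd_ne (hK.bas S hS) hρ hz.1 (by rintro rfl; exact hρT hz.2)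
  obtain ⟨K', a1, a2, a3, a4⟩ := clean_all (H := K.biUnion (fun S => S.image (crd S)))
    (K.biUnion (fun S => S.image (crd S))) K hK hI0
  refine ⟨_, K', a1, a2, ?_, a3, a4⟩
  intro l hl h0
  obtain ⟨S, hS, hl⟩ := Finset.mem_biUnion.1 hl
  obtain ⟨ρ, hρ, rfl⟩ := Finset.mem_image.1 hl
  have := crd_self (hK.bas S hS) hρ
  rw [h0] at this
  simp at this

end InvK


section Part
variable {d : ℕ} {K : Finset (Finset (Fin d → ℝ))}

def Gen (K : Finset (Finset (Fin d → ℝ))) (v : Fin d → ℝ) : Prop :=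
  ∀ S ∈ K, ∀ ρ ∈ S, crd S ρ v ≠ 0

theorem Gen.neg {v : Fin d → ℝ} (h : Gen K v) : Gen K (-v) := by
  intro S hS ρ hρ
  rw [map_neg]
  exact neg_ne_zero.2 (h S hS ρ hρ)

theorem exists_gen (hb : ∀ S ∈ K, IsBas S) : ∃ v, Gen K v := by
  let P : Finset (Submodule ℝ (Fin d → ℝ)) :=
    K.biUnion (fun S => S.image (fun ρ => LinearMap.ker (crd S ρ)))
  have h : ⊤ ∉ P := by
    intro h
    obtain ⟨S, hS, h⟩ := Finset.mem_biUnion.1 h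
    obtain ⟨ρ, hρ, h⟩ := Finset.mem_image.1 h
    have h1 : ρ ∈ LinearMap.ker (crd S ρ) := by rw [h]; trivial
    rw [LinearMap.mem_ker, crd_self (hb S hS) hρ] at h1
    exact one_ne_zero h1
  have h2 := Subspace.biUnion_ne_univ_of_top_notMem h
  rw [Set.ne_univ_iff_exists_notMem] at h2
  obtain ⟨v, hv⟩ := h2
  refine ⟨v, fun S hS ρ hρ h0 => hv ?_⟩
  simp only [Set.mem_iUnion]
  exact ⟨_, Finset.mem_biUnion.2 ⟨S, hS, Finset.mem_image_of_mem _ hρ⟩, h0⟩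

noncomputable def RR (v : Fin d → ℝ) (S : Finset (Fin d → ℝ)) : Finset (Fin d → ℝ) :=
  S.filter (fun ρ => 0 < crd S ρ v)

theorem RR_sub (v : Fin d → ℝ) (S : Finset (Fin d → ℝ)) : RR v S ⊆ S := Finset.filter_subset _ _

theorem RR_neg {v : Fin d → ℝ} (h : Gen K v) {S : Finset (Fin d → ℝ)} (hS : S ∈ K) :
    RR (-v) S = S \ RR v S := by
  ext ρ
  simp only [RR, Finset.mem_filter, Finset.mem_sdiff, map_neg]
  constructor
  · rintro ⟨h1, h2⟩; exact ⟨h1, fun h3 => by linarith [h3.2]⟩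
  · rintro ⟨h1, h2⟩
    refine ⟨h1, ?_⟩
    have : ¬ 0 < crd S ρ v := fun h3 => h2 ⟨h1, h3⟩
    have := lt_of_le_of_ne (not_lt.1 this) (h S hS ρ h1)
    linarith

theorem exists_crep {S : Finset (Fin d → ℝ)} (hS : IsBas S) {x : Fin d → ℝ}
    (h : ∀ w ∈ S, 0 ≤ crd S w x) : ∃ c, CRep S x c ∧ ∀ w ∈ S, c w = crd S w x := by
  obtain ⟨c, hc⟩ := exists_rep ((cone_iff hS x).2 h)
  refine ⟨c, hc, ?_⟩
  intro w hw
  rw [← hc.2.2, lc_eq_sum hc.1, crd_sum hS hw (subset_refl _), if_pos hw]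

theorem SFan.uniq_crd (hK : SFan K) {S T : Finset (Fin d → ℝ)} (hS : S ∈ K) (hT : T ∈ K)
    {x : Fin d → ℝ} (h : ∀ w ∈ S, 0 ≤ crd S w x) (h' : ∀ w ∈ T, 0 ≤ crd T w x) :
    ∀ w ∈ S, crd S w x = if w ∈ T then crd T w x else 0 := by
  obtain ⟨c, hc, e⟩ := exists_crep (hK.bas S hS) h
  obtain ⟨c', hc', e'⟩ := exists_crep (hK.bas T hT) h'
  have := hK.uniq S hS T hT x c c' hc hc'
  subst this
  intro w hw
  rw [← e w hw]
  split_ifs with hwT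
  · exact e' w hwT
  · exact hc'.1 w hwT

theorem crd_face {S τ : Finset (Fin d → ℝ)} (hS : IsBas S) (hτ : τ ⊆ S) {w : Fin d → ℝ}
    (hw : w ∈ S) : crd S w (∑ z ∈ τ, z) = if w ∈ τ then 1 else 0 := by
  have := crd_sum hS hw hτ (fun _ => 1)
  simpa using this

theorem SFan.face_mem (hK : SFan K) {S T τ : Finset (Fin d → ℝ)} (hS : S ∈ K) (hT : T ∈ K)
    (hτ : τ ⊆ S) (h' : ∀ w ∈ T, 0 ≤ crd T w (∑ z ∈ τ, z)) : τ ⊆ T := by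
  intro w hw
  have h1 : ∀ w ∈ S, 0 ≤ crd S w (∑ z ∈ τ, z) := by
    intro w hw; rw [crd_face (hK.bas S hS) hτ hw]; split_ifs <;> norm_num
  have := hK.uniq_crd hS hT h1 h' w (hτ hw)
  by_contra hn
  rw [crd_face (hK.bas S hS) hτ (hτ hw), if_pos hw, if_neg hn] at this
  norm_num at this

theorem SFan.part_ex (hK : SFan K) (v : Fin d → ℝ) {S τ : Finset (Fin d → ℝ)} (hS : S ∈ K)
    (hτ : τ ⊆ S) : ∃ T ∈ K, RR v T ⊆ τ ∧ τ ⊆ T := by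
  obtain ⟨T, hT, h1, ε, hε, h2⟩ := hK.disp (∑ z ∈ τ, z) (-v)
  have hτT := hK.face_mem hS hT hτ h1
  refine ⟨T, hT, ?_, hτT⟩
  intro w hw
  obtain ⟨hw1, hw2⟩ := Finset.mem_filter.1 hw
  by_contra hn
  have := h2 w hw1
  rw [map_add, map_smul, map_neg, crd_face (hK.bas T hT) hτT hw1, if_neg hn, smul_eq_mul] at this
  nlinarith

theorem SFan.part_small (hK : SFan K) {v : Fin d → ℝ} (hv : Gen K v) {S τ : Finset (Fin d → ℝ)}
    (hS : S ∈ K) (h1 : RR v S ⊆ τ) (h2 : τ ⊆ S) : ∃ δ : ℝ, 0 < δ ∧ ∀ ε, 0 < ε → ε < δ →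
      ∀ w ∈ S, 0 < crd S w (∑ z ∈ τ, z - ε • v) := by
  have : ∀ w : Fin d → ℝ, ∃ δ : ℝ, 0 < δ ∧ (w ∈ S → ∀ ε, 0 < ε → ε < δ →
      0 < crd S w (∑ z ∈ τ, z - ε • v)) := by
    intro w
    refine ⟨1 / (|crd S w v| + 1), by positivity, ?_⟩
    intro hw ε hε hεd
    rw [map_sub, map_smul, crd_face (hK.bas S hS) h2 hw, smul_eq_mul]
    by_cases hwt : w ∈ τ
    · rw [if_pos hwt]
      rw [lt_div_iff₀ (by positivity)] at hεd
      have := le_abs_self (crd S w v)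
      nlinarith
    · rw [if_neg hwt]
      have h3 : ¬ 0 < crd S w v := fun h => hwt (h1 (Finset.mem_filter.2 ⟨hw, h⟩))
      have := lt_of_le_of_ne (not_lt.1 h3) (hv S hS w hw)
      nlinarith
  choose δ hδ h using this
  by_cases hne : S.Nonempty
  · obtain ⟨w0, hw0, hmin⟩ := S.exists_min_image δ hne
    exact ⟨δ w0, hδ w0, fun ε hε hεd w hw => h w hw ε hε (lt_of_lt_of_le hεd (hmin w hw))⟩
  · refine ⟨1, one_pos, fun ε hε hεd w hw => absurd ⟨w, hw⟩ hne⟩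

theorem SFan.part_uniq (hK : SFan K) {v : Fin d → ℝ} (hv : Gen K v) {S T τ : Finset (Fin d → ℝ)}
    (hS : S ∈ K) (hT : T ∈ K) (h1 : RR v S ⊆ τ) (h2 : τ ⊆ S) (h3 : RR v T ⊆ τ) (h4 : τ ⊆ T) :
    S = T := by
  obtain ⟨δ, hδ, h⟩ := hK.part_small hv hS h1 h2
  obtain ⟨δ', hδ', h'⟩ := hK.part_small hv hT h3 h4
  have e := h (min δ δ' / 2) (by positivity) (by linarith [min_le_left δ δ', lt_min hδ hδ'])
  have e' := h' (min δ δ' / 2) (by positivity) (by linarith [min_le_right δ δ', lt_min hδ hδ'])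
  have k := hK.uniq_crd hS hT (fun w hw => (e w hw).le) (fun w hw => (e' w hw).le)
  apply sub_eq hK.bas hS hT
  intro w hw
  by_contra hn
  have := k w hw
  rw [if_neg hn] at this
  exact (e w hw).ne' this

/-- basic elements -/
noncomputable def emK (K : Finset (Finset (Fin d → ℝ))) (m : (Fin d → ℝ) →₀ ℕ)
    (S : Finset (Fin d → ℝ)) : MvPolynomial (Fin d) ℝ :=
  if S ∈ K ∧ m.support ⊆ S then xm S m else 0

theorem phi_emK (hb : ∀ S ∈ K, IsBas S) (m : (Fin d → ℝ) →₀ ℕ) {S G : Finset (Fin d → ℝ)}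
    (hS : S ∈ K) (hG : G ⊆ S) :
    phi G (emK K m S) = if m.support ⊆ G then MvPolynomial.monomial m 1 else 0 := by
  rw [emK]
  by_cases h : m.support ⊆ S
  · rw [if_pos ⟨hS, h⟩, ← kil_phi hG, xm, phi_theta (hb S hS)]
    ext n
    rw [coeff_kil, coeff_kil]
    rw [MvPolynomial.coeff_monomial]
    by_cases hmn : m = n
    · subst hmn
      rw [if_pos rfl, if_pos h]
      split_ifs <;> simp
    · rw [if_neg hmn]
      split_ifs <;> simp [MvPolynomial.coeff_monomial, hmn]
  · rw [if_neg (fun h' => h h'.2), if_neg (fun h' => h (h'.trans hG)), map_zero]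

theorem emK_mem (hb : ∀ S ∈ K, IsBas S) (m : (Fin d → ℝ) →₀ ℕ) : emK K m ∈ PM K := by
  refine ⟨fun S hS => if_neg (fun h => hS h.1), fun S hS T hT => ?_⟩
  rw [phi_emK hb m hS Finset.inter_subset_left, phi_emK hb m hT Finset.inter_subset_right]

noncomputable def sg (l : (Fin d → ℝ) →ₗ[ℝ] ℝ) (S : Finset (Fin d → ℝ)) : ℝ :=
  if ∃ a ∈ S, 0 < l a then 1 else -1

theorem exists_order {H : Finset ((Fin d → ℝ) →ₗ[ℝ] ℝ)} (hK : SFan K) (hI : InvK H K)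
    (hH : ∀ l ∈ H, l ≠ 0)
    (hc : ∀ l ∈ H, Clean l K) (v : Fin d → ℝ) :
    ∃ lk : Finset (Fin d → ℝ) → ℝ ×ₗ ℕ, ∀ S ∈ K, ∀ ρ ∈ S, 0 < crd S ρ v →
      ∃ T ∈ K, S.erase ρ ⊆ T ∧ lk T < lk S := by
  obtain ⟨key, hkey⟩ := hI v
  refine ⟨fun S => toLex (∑ l ∈ H, sg l S * l v, key S), ?_⟩
  intro S hS ρ hρ hpos
  have hbS := hK.bas S hS
  obtain ⟨T, hT, h1, ε, hε, h2⟩ := hK.disp (∑ z ∈ S.erase ρ, z) (-ρ)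
  have hsub := hK.face_mem hS hT (Finset.erase_subset _ _) h1
  have hρT : ρ ∉ T := by
    intro hρT
    have : S = T := by
      apply sub_eq hK.bas hS hT
      intro z hz
      by_cases hz' : z = ρ
      · rwa [hz']
      · exact hsub (Finset.mem_erase.2 ⟨hz', hz⟩)
    subst this
    have := h2 ρ hρ
    rw [map_add, map_smul, map_neg, crd_face hbS (Finset.erase_subset _ _) hρ,
      if_neg (by simp), crd_self hbS hρ, smul_eq_mul] at this
    linarith
  refine ⟨T, hT, hsub, ?_⟩
  have hexp := bas_expand (hK.bas T hT) (∑ z ∈ S.erase ρ, z + ε • -ρ)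
  have hcon : ∀ l ∈ H, sg l T * l v ≤ sg l S * l v ∧
      ((∀ z ∈ S ∩ T, l z = 0) → l ρ ≠ 0 → sg l T * l v < sg l S * l v) := by
    intro l hl
    by_cases hz : ∃ z ∈ S ∩ T, l z ≠ 0
    · obtain ⟨z, hz, hz0⟩ := hz
      refine ⟨?_, fun h => absurd (h z hz) hz0⟩
      rw [Finset.mem_inter] at hz
      have : sg l S = sg l T := by
        rcases lt_or_gt_of_ne hz0 with h | h
        · rw [sg, sg, if_neg, if_neg]
          · rintro ⟨a, ha, ha'⟩; exact hc l hl T hT a ha z hz.2 ha' h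
          · rintro ⟨a, ha, ha'⟩; exact hc l hl S hS a ha z hz.1 ha' h
        · rw [sg, sg, if_pos ⟨z, hz.1, h⟩, if_pos ⟨z, hz.2, h⟩]
      rw [this]
    · push Not at hz
      have hzS : ∀ z ∈ S.erase ρ, l z = 0 := fun z hz' =>
        hz z (Finset.mem_inter.2 ⟨Finset.mem_of_mem_erase hz', hsub hz'⟩)
      have hlv : l v = crd S ρ v * l ρ := by
        conv_lhs => rw [bas_expand hbS v]
        rw [map_sum, Finset.sum_eq_single_of_mem ρ hρ]
        · simp
        · intro b hb hbρ
          rw [map_smul, hzS b (Finset.mem_erase.2 ⟨hbρ, hb⟩), smul_zero]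
      have hl2 : -(ε * l ρ) = ∑ w ∈ T, crd T w (∑ z ∈ S.erase ρ, z + ε • -ρ) * l w := by
        have := congrArg l hexp
        rw [map_sum l (fun w => crd T w (∑ z ∈ S.erase ρ, z + ε • -ρ) • w) T, map_add, map_sum,
          Finset.sum_eq_zero hzS] at this
        simp only [map_smul, map_neg, smul_eq_mul] at this ⊢
        linarith
      have hstrict : l ρ ≠ 0 → sg l T * l v < sg l S * l v := by
        intro hne
        rcases lt_or_gt_of_ne hne with h | h
        · have hex : ∃ a ∈ T, 0 < l a := by
            by_contra hn
            push Not at hn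
            have : ∑ w ∈ T, crd T w (∑ z ∈ S.erase ρ, z + ε • -ρ) * l w ≤ 0 :=
              Finset.sum_nonpos (fun w hw => mul_nonpos_of_nonneg_of_nonpos (h2 w hw) (hn w hw))
            nlinarith
          have : ¬ ∃ a ∈ S, 0 < l a := by
            rintro ⟨a, ha, ha'⟩; exact hc l hl S hS a ha ρ hρ ha' h
          rw [sg, sg, if_pos hex, if_neg this, hlv]
          nlinarith
        · have hex : ∃ a ∈ T, l a < 0 := by
            by_contra hn
            push Not at hn
            have : 0 ≤ ∑ w ∈ T, crd T w (∑ z ∈ S.erase ρ, z + ε • -ρ) * l w :=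
              Finset.sum_nonneg (fun w hw => mul_nonneg (h2 w hw) (hn w hw))
            nlinarith
          obtain ⟨b, hb, hb'⟩ := hex
          have : ¬ ∃ a ∈ T, 0 < l a := by
            rintro ⟨a, ha, ha'⟩; exact hc l hl T hT a ha b hb ha' hb'
          rw [sg, sg, if_neg this, if_pos ⟨ρ, hρ, h⟩, hlv]
          nlinarith
      refine ⟨?_, fun _ => hstrict⟩
      by_cases h0 : l ρ = 0
      · rw [hlv, h0]; simp
      · exact (hstrict h0).le
  rw [Prod.Lex.toLex_lt_toLex]
  have hle : ∑ l ∈ H, sg l T * l v ≤ ∑ l ∈ H, sg l S * l v :=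
    Finset.sum_le_sum (fun l hl => (hcon l hl).1)
  by_cases hex : ∃ l ∈ H, (∀ z ∈ S ∩ T, l z = 0) ∧ l ρ ≠ 0
  · left
    obtain ⟨l, hl, a, b⟩ := hex
    exact Finset.sum_lt_sum (fun l hl => (hcon l hl).1) ⟨l, hl, (hcon l hl).2 a b⟩
  · rcases hle.lt_or_eq with h | h
    · exact Or.inl h
    · right
      refine ⟨h, hkey S hS T hT ρ hρ hρT hsub hpos ?_⟩
      intro l hl
      by_contra hn
      push Not at hn hex
      have h0 := hex l hl hn
      apply hH l hl
      apply crd_ext hbS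
      intro z hz
      by_cases hz' : z = ρ
      · rw [hz', h0]; rfl
      · rw [hn z (Finset.mem_inter.2 ⟨hz, hsub (Finset.mem_erase.2 ⟨hz', hz⟩)⟩)]; rfl

theorem order_lt (hK : SFan K) {v : Fin d → ℝ} (hv : Gen K v) {lk : Finset (Fin d → ℝ) → ℝ ×ₗ ℕ}
    (hlk : ∀ S ∈ K, ∀ ρ ∈ S, 0 < crd S ρ v → ∃ T ∈ K, S.erase ρ ⊆ T ∧ lk T < lk S)
    {S T : Finset (Fin d → ℝ)} (hS : S ∈ K) (hT : T ∈ K) (h : RR v S ⊆ T) (hne : T ≠ S) :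
    lk S < lk T := by
  have claim : ∀ T0 ∈ K, RR v S ⊆ T0 → (∀ T ∈ K, RR v S ⊆ T → lk T0 ≤ lk T) → T0 = S := by
    intro T0 hT0 h0 hmin
    refine hK.part_uniq hv hT0 hS (τ := RR v S) ?_ h0 (subset_refl _) (RR_sub v S)
    intro ρ hρ
    obtain ⟨h1, h2⟩ := Finset.mem_filter.1 hρ
    by_contra hn
    obtain ⟨T1, hT1, hsub, hlt⟩ := hlk T0 hT0 ρ h1 h2
    refine absurd (hmin T1 hT1 (fun z hz => hsub (Finset.mem_erase.2 ⟨?_, h0 hz⟩))) (not_le.2 hlt)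
    rintro rfl; exact hn hz
  obtain ⟨T0, hT0, hmin⟩ := (K.filter (fun T => RR v S ⊆ T)).exists_min_image lk
    ⟨S, Finset.mem_filter.2 ⟨hS, RR_sub v S⟩⟩
  obtain ⟨h1, h2⟩ := Finset.mem_filter.1 hT0
  have e := claim T0 h1 h2 (fun T hT h => hmin T (Finset.mem_filter.2 ⟨hT, h⟩))
  subst e
  have hle := hmin T (Finset.mem_filter.2 ⟨hT, h⟩)
  refine lt_of_le_of_ne hle ?_
  intro heq
  apply hne
  apply claim T hT h
  intro T' hT' h'
  rw [← heq]
  exact hmin T' (Finset.mem_filter.2 ⟨hT', h'⟩)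

theorem emK_self (hb : ∀ S ∈ K, IsBas S) {v : Fin d → ℝ} {S : Finset (Fin d → ℝ)} (hS : S ∈ K) :
    emK K (ind (RR v S)) S ≠ 0 := by
  rw [emK, if_pos ⟨hS, by rw [ind_support]; exact RR_sub v S⟩]
  exact xm_ne (hb S hS) (by rw [ind_support]; exact RR_sub v S)

theorem emK_lt (hK : SFan K) {v : Fin d → ℝ} (hv : Gen K v) {lk : Finset (Fin d → ℝ) → ℝ ×ₗ ℕ}
    (hlk : ∀ S ∈ K, ∀ ρ ∈ S, 0 < crd S ρ v → ∃ T ∈ K, S.erase ρ ⊆ T ∧ lk T < lk S)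
    {S T : Finset (Fin d → ℝ)} (hS : S ∈ K) (h : emK K (ind (RR v S)) T ≠ 0) (hne : T ≠ S) :
    lk S < lk T := by
  have : T ∈ K ∧ (ind (RR v S)).support ⊆ T := by
    by_contra hn
    rw [emK, if_neg hn] at h
    exact h rfl
  rw [ind_support] at this
  exact order_lt hK hv hlk hS this.1 this.2 hne

noncomputable def eb (hb : ∀ S ∈ K, IsBas S) (v : Fin d → ℝ) (S : K) : PM K :=
  ⟨emK K (ind (RR v S.1)), emK_mem hb _⟩

theorem eb_li (hK : SFan K) {v : Fin d → ℝ} (hv : Gen K v) {lk : Finset (Fin d → ℝ) → ℝ ×ₗ ℕ}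
    (hlk : ∀ S ∈ K, ∀ ρ ∈ S, 0 < crd S ρ v → ∃ T ∈ K, S.erase ρ ⊆ T ∧ lk T < lk S) :
    LinearIndependent (MvPolynomial (Fin d) ℝ) (eb hK.bas v) := by
  rw [Fintype.linearIndependent_iff]
  intro g hg
  by_contra hn
  push Not at hn
  obtain ⟨i0, hi0⟩ := hn
  obtain ⟨S, hS, hmin⟩ := (Finset.univ.filter (fun S : K => g S ≠ 0)).exists_min_image
    (fun S => lk S.1) ⟨i0, by simp [hi0]⟩
  have hgS : g S ≠ 0 := by simpa using hS
  have h1 := congrFun (congrArg Subtype.val hg) S.1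
  rw [Submodule.coe_sum, Finset.sum_apply, Finset.sum_eq_single_of_mem S (Finset.mem_univ _)] at h1
  · have h1' : g S * emK K (ind (RR v S.1)) S.1 = 0 := h1
    rcases mul_eq_zero.1 h1' with h | h
    · exact hgS h
    · exact emK_self hK.bas S.2 h
  · intro T _ hT
    change g T * emK K (ind (RR v T.1)) S.1 = 0
    by_contra hne
    have h2 := emK_lt hK hv hlk T.2 (right_ne_zero_of_mul hne) 
      (fun h => hT (Subtype.ext h.symm))
    exact absurd (hmin T (by simpa using left_ne_zero_of_mul hne)) (not_le.2 h2)

theorem eb_span (hK : SFan K) {v : Fin d → ℝ} (hv : Gen K v) {lk : Finset (Fin d → ℝ) → ℝ ×ₗ ℕ}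
    (hlk : ∀ S ∈ K, ∀ ρ ∈ S, 0 < crd S ρ v → ∃ T ∈ K, S.erase ρ ⊆ T ∧ lk T < lk S) (n : ℕ) :
    ∀ f : PM K, (K.filter (fun T => f.1 T ≠ 0 ∨ ∃ S ∈ K, f.1 S ≠ 0 ∧ lk S < lk T)).card ≤ n →
      f ∈ Submodule.span (MvPolynomial (Fin d) ℝ) (Set.range (eb hK.bas v)) := by
  induction n with
  | zero =>
    intro f hf
    rw [Nat.le_zero, Finset.card_eq_zero, Finset.filter_eq_empty_iff] at hf
    have : f = 0 := by
      apply Subtype.ext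
      funext S
      by_cases hS : S ∈ K
      · have := hf hS
        push Not at this
        exact this.1
      · exact f.2.1 S hS
    rw [this]; exact Submodule.zero_mem _
  | succ n ih =>
    intro f hf
    by_cases h0 : ∃ S ∈ K, f.1 S ≠ 0
    · obtain ⟨S0, hS0, hf0⟩ := h0
      obtain ⟨S, hS, hmin⟩ := (K.filter (fun S => f.1 S ≠ 0)).exists_min_image lk
        ⟨S0, Finset.mem_filter.2 ⟨hS0, hf0⟩⟩
      obtain ⟨hSK, hfS⟩ := Finset.mem_filter.1 hS
      have hz : ∀ T ∈ K, lk T < lk S → f.1 T = 0 := by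
        intro T hT hlt
        by_contra hn
        exact absurd (hmin T (Finset.mem_filter.2 ⟨hT, hn⟩)) (not_le.2 hlt)
      have hdvd : xm S (ind (RR v S)) ∣ f.1 S := by
        apply xm_dvd (hK.bas S hSK)
        intro ρ hρ
        obtain ⟨h1, h2⟩ := Finset.mem_filter.1 hρ
        obtain ⟨T, hT, hsub, hlt⟩ := hlk S hSK ρ h1 h2
        have := phi_eq_subset (G := S.erase ρ) (Finset.subset_inter (Finset.erase_subset _ _) hsub)
          (f.2.2 S hSK T hT)
        rw [this, hz T hT hlt, map_zero]
      obtain ⟨a, ha⟩ := hdvd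
      have hgv : ∀ T, (f - a • eb hK.bas v ⟨S, hSK⟩).1 T =
          f.1 T - a * emK K (ind (RR v S)) T := fun T => rfl
      have hgS : (f - a • eb hK.bas v ⟨S, hSK⟩).1 S = 0 := by
        rw [hgv, ha, emK, if_pos ⟨hSK, by rw [ind_support]; exact RR_sub v S⟩]; ring
      have hgT : ∀ T, ¬ lk S < lk T → T ≠ S → (f - a • eb hK.bas v ⟨S, hSK⟩).1 T = f.1 T := by
        intro T hT hne
        rw [hgv]
        have : emK K (ind (RR v S)) T = 0 := by
          by_contra hn
          exact hT (emK_lt hK hv hlk hSK hn hne)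
        rw [this]; ring
      have hg := ih (f - a • eb hK.bas v ⟨S, hSK⟩) (by
        refine Nat.le_of_lt_succ (lt_of_lt_of_le (Finset.card_lt_card ?_) hf)
        have key : ∀ T ∈ K, (f - a • eb hK.bas v ⟨S, hSK⟩).1 T ≠ 0 → 
            (f.1 T ≠ 0 ∧ T ≠ S) ∨ lk S < lk T := by
          intro T hT hne
          by_cases hl : lk S < lk T
          · exact Or.inr hl
          · by_cases hTS : T = S
            · subst hTS; exact absurd hgS hne
            · rw [hgT T hl hTS] at hne; exact Or.inl ⟨hne, hTS⟩
        rw [Finset.ssubset_iff_of_subset]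
        · refine ⟨S, Finset.mem_filter.2 ⟨hSK, Or.inl hfS⟩, ?_⟩
          intro hn
          rcases (Finset.mem_filter.1 hn).2 with h | ⟨S', hS', h1, h2⟩
          · exact h hgS
          · rcases key S' hS' h1 with h | h
            · exact h.1 (hz S' hS' h2)
            · exact lt_asymm h h2
        · intro T hT
          obtain ⟨hT1, hT2⟩ := Finset.mem_filter.1 hT
          refine Finset.mem_filter.2 ⟨hT1, ?_⟩
          rcases hT2 with h | ⟨S', hS', h1, h2⟩
          · rcases key T hT1 h with h | h
            · exact Or.inl h.1
            · exact Or.inr ⟨S, hSK, hfS, h⟩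
          · rcases key S' hS' h1 with h | h
            · exact Or.inr ⟨S', hS', h.1, h2⟩
            · exact Or.inr ⟨S, hSK, hfS, h.trans h2⟩)
      have : f = (f - a • eb hK.bas v ⟨S, hSK⟩) + a • eb hK.bas v ⟨S, hSK⟩ := by abel
      rw [this]
      exact Submodule.add_mem _ hg (Submodule.smul_mem _ _ (Submodule.subset_span ⟨_, rfl⟩))
    · push Not at h0
      apply ih
      rw [Finset.filter_false_of_mem]
      · simp
      · rintro T hT (h | ⟨S, hS, h, -⟩)
        · exact h (h0 T hT)
        · exact h (h0 S hS)

theorem SFan.projective (hK : SFan K) :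
    Module.Projective (MvPolynomial (Fin d) ℝ) (PM K) := by
  obtain ⟨H, K', hK', hI, hH, hc, hp⟩ := exists_clean hK
  apply hp
  obtain ⟨v, hv⟩ := exists_gen hK'.bas
  obtain ⟨lk, hlk⟩ := exists_order hK' hI hH hc v
  have := Module.Free.of_basis (Module.Basis.mk (eb_li hK' hv hlk) (by
    intro f _
    exact eb_span hK' hv hlk _ f le_rfl))
  infer_instance

end Part


section Graded
variable {d : ℕ} {ι : Type*}

/-- degree k part of a module of tuples of polynomials -/
noncomputable def Mk (M : Submodule (MvPolynomial (Fin d) ℝ) (ι → MvPolynomial (Fin d) ℝ)) (k : ℕ) :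
    Submodule ℝ (ι → MvPolynomial (Fin d) ℝ) where
  carrier := {f | f ∈ M ∧ ∀ i, (f i).IsHomogeneous k}
  add_mem' := by
    rintro f g ⟨hf, hf'⟩ ⟨hg, hg'⟩
    exact ⟨M.add_mem hf hg, fun i => (hf' i).add (hg' i)⟩
  zero_mem' := ⟨M.zero_mem, fun i => MvPolynomial.isHomogeneous_zero _ _ _⟩
  smul_mem' := by
    rintro c f ⟨hf, hf'⟩
    refine ⟨?_, fun i => ?_⟩
    · have := M.smul_mem (MvPolynomial.C c) hf
      convert this using 1
      funext i
      simp [MvPolynomial.C_mul']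
    · have := (MvPolynomial.isHomogeneous_C (Fin d) c).mul (hf' i)
      simpa [MvPolynomial.C_mul'] using this

/-- degree k part of m times the module -/
noncomputable def mMk (M : Submodule (MvPolynomial (Fin d) ℝ) (ι → MvPolynomial (Fin d) ℝ)) :
    ℕ → Submodule ℝ (ι → MvPolynomial (Fin d) ℝ)
  | 0 => ⊥
  | k + 1 => Submodule.span ℝ
      {h | ∃ (l : (Fin d → ℝ) →ₗ[ℝ] ℝ) (f : ι → MvPolynomial (Fin d) ℝ),
        f ∈ Mk M k ∧ h = lin l • f}

/-- componentwise homogeneous component -/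
noncomputable def hc (ι : Type*) (d k : ℕ) :
    (ι → MvPolynomial (Fin d) ℝ) →ₗ[ℝ] (ι → MvPolynomial (Fin d) ℝ) :=
  (MvPolynomial.homogeneousComponent k).compLeft ι

theorem hc_apply (k : ℕ) (f : ι → MvPolynomial (Fin d) ℝ) (i : ι) :
    hc ι d k f i = MvPolynomial.homogeneousComponent k (f i) := rfl

structure GrM (M : Submodule (MvPolynomial (Fin d) ℝ) (ι → MvPolynomial (Fin d) ℝ)) : Prop where
  hom : ∀ f ∈ M, ∀ k, hc ι d k f ∈ M
  fin : ∀ f ∈ M, ∃ N, ∀ i, (f i).totalDegree < N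
  fd : ∀ k, FiniteDimensional ℝ (Mk M k)

theorem hcomp_mul {t k : ℕ} (a g : MvPolynomial (Fin d) ℝ) (hg : g.IsHomogeneous t) :
    MvPolynomial.homogeneousComponent k (a * g) =
      if t ≤ k then MvPolynomial.homogeneousComponent (k - t) a * g else 0 := by
  let _inst := MvPolynomial.gradedAlgebra (σ := Fin d) (R := ℝ)
  have e : ∀ (p : MvPolynomial (Fin d) ℝ) (i : ℕ),
      ((DirectSum.decompose (MvPolynomial.homogeneousSubmodule (Fin d) ℝ) p i :
        MvPolynomial.homogeneousSubmodule (Fin d) ℝ i) : MvPolynomial (Fin d) ℝ) =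
      MvPolynomial.homogeneousComponent i p :=
    fun p i => MvPolynomial.decomposition.decompose'_apply p i
  have := DirectSum.coe_decompose_mul_of_right_mem
    (MvPolynomial.homogeneousSubmodule (Fin d) ℝ) (a := a) (b := g) (i := t) k hg
  rw [e, e] at this
  exact this

theorem hc_smul {t k : ℕ} (a : MvPolynomial (Fin d) ℝ) (g : ι → MvPolynomial (Fin d) ℝ)
    (hg : ∀ i, (g i).IsHomogeneous t) :
    hc ι d k (a • g) =
      if t ≤ k then MvPolynomial.homogeneousComponent (k - t) a • g else 0 := by
  funext i
  rw [hc_apply, Pi.smul_apply, smul_eq_mul, hcomp_mul a (g i) (hg i)]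
  split_ifs <;> rfl

variable {M : Submodule (MvPolynomial (Fin d) ℝ) (ι → MvPolynomial (Fin d) ℝ)}

theorem C_smul' (c : ℝ) (f : ι → MvPolynomial (Fin d) ℝ) : (MvPolynomial.C c : MvPolynomial (Fin d) ℝ) • f = c • f := by
  funext i
  simp [MvPolynomial.C_mul']

theorem hom_smul_mem {s t : ℕ} {p : MvPolynomial (Fin d) ℝ} (hp : p.IsHomogeneous s)
    {f : ι → MvPolynomial (Fin d) ℝ} (hf : f ∈ Mk M t) : p • f ∈ Mk M (s + t) :=
  ⟨M.smul_mem _ hf.1, fun i => hp.mul (hf.2 i)⟩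

theorem X_eq_lin (i : Fin d) : (MvPolynomial.X i : MvPolynomial (Fin d) ℝ) = lin (LinearMap.proj i) := by
  simp only [lin, LinearMap.proj_apply, Pi.single_apply]
  rw [Finset.sum_eq_single i]
  · simp
  · intro j _ hj
    simp [hj.symm]
  · simp

theorem hom_smul_mMk {s t : ℕ} {p : MvPolynomial (Fin d) ℝ} (hp : p.IsHomogeneous (s + 1))
    {f : ι → MvPolynomial (Fin d) ℝ} (hf : f ∈ Mk M t) : p • f ∈ mMk M (s + t + 1) := by
  have hp' := p.as_sum
  rw [hp', Finset.sum_smul]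
  apply Submodule.sum_mem
  intro m hm
  have hmd : m.degree = s + 1 := by
    by_contra h
    exact (MvPolynomial.mem_support_iff.1 hm) (hp.coeff_eq_zero h)
  obtain ⟨i, hi⟩ : ∃ i, m i ≠ 0 := by
    by_contra h
    push Not at h
    have : m = 0 := Finsupp.ext h
    subst this
    simp at hmd
  have hsplit : Finsupp.single i 1 + (m - Finsupp.single i 1) = m := by
    rw [add_comm]
    apply tsub_add_cancel_of_le
    rw [Finsupp.single_le_iff]
    omega
  have hd' : (m - Finsupp.single i 1).degree = s := by
    have := congrArg Finsupp.degree hsplit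
    rw [map_add, hmd, Finsupp.degree_single] at this
    omega
  have : (MvPolynomial.monomial m (p.coeff m) : MvPolynomial (Fin d) ℝ) =
      lin (LinearMap.proj i) * MvPolynomial.monomial (m - Finsupp.single i 1) (p.coeff m) := by
    rw [← X_eq_lin, MvPolynomial.X, MvPolynomial.monomial_mul, hsplit, one_mul]
  rw [this, mul_smul]
  apply Submodule.subset_span
  refine ⟨_, _, hom_smul_mem (MvPolynomial.isHomogeneous_monomial _ hd') hf, rfl⟩

theorem mMk_le (k : ℕ) : mMk M k ≤ Mk M k := by
  cases k with
  | zero => exact bot_le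
  | succ k =>
    apply Submodule.span_le.2
    rintro _ ⟨l, f, hf, rfl⟩
    have := hom_smul_mem (lin_hom l) hf
    rwa [add_comm] at this

/-- quotient in degree k -/
abbrev Qk (M : Submodule (MvPolynomial (Fin d) ℝ) (ι → MvPolynomial (Fin d) ℝ)) (k : ℕ) :=
  ↥(Mk M k) ⧸ (mMk M k).comap (Mk M k).subtype

/-- finite index of generators -/
abbrev GIx (M : Submodule (MvPolynomial (Fin d) ℝ) (ι → MvPolynomial (Fin d) ℝ)) :=
  Σ k : ℕ, Fin (Module.finrank ℝ (Qk M k))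

theorem exists_lift (hM : GrM M) : ∃ e : GIx M → (ι → MvPolynomial (Fin d) ℝ),
    (∀ i, e i ∈ Mk M i.1) ∧
    (∀ k, ∀ f ∈ Mk M k, ∃ c : Fin (Module.finrank ℝ (Qk M k)) → ℝ,
      f - ∑ j, c j • e ⟨k, j⟩ ∈ mMk M k) ∧
    (∀ k, ∀ c : Fin (Module.finrank ℝ (Qk M k)) → ℝ,
      ∑ j, c j • e ⟨k, j⟩ ∈ mMk M k → ∀ j, c j = 0) := by
  have := hM.fd
  let B : ∀ k, Module.Basis (Fin (Module.finrank ℝ (Qk M k))) ℝ (Qk M k) :=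
    fun k => Module.finBasis ℝ (Qk M k)
  have hs : ∀ i : GIx M, ∃ x : Mk M i.1,
      ((mMk M i.1).comap (Mk M i.1).subtype).mkQ x = B i.1 i.2 :=
    fun i => Submodule.mkQ_surjective _ _
  choose e he0 using hs
  have he : ∀ k j, ((mMk M k).comap (Mk M k).subtype).mkQ (e ⟨k, j⟩) = B k j :=
    fun k j => he0 ⟨k, j⟩
  refine ⟨fun i => (e i : ι → MvPolynomial (Fin d) ℝ), fun i => (e i).2, ?_, ?_⟩
  · intro k f hf
    refine ⟨fun j => (B k).repr (((mMk M k).comap (Mk M k).subtype).mkQ ⟨f, hf⟩) j, ?_⟩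
    have h1 : ((mMk M k).comap (Mk M k).subtype).mkQ (⟨f, hf⟩ - ∑ j, (B k).repr
      (((mMk M k).comap (Mk M k).subtype).mkQ ⟨f, hf⟩) j • e ⟨k, j⟩) = 0 := by
      rw [map_sub, map_sum]
      simp only [map_smul, he]
      rw [(B k).sum_repr, sub_self]
    rw [← LinearMap.mem_ker, Submodule.ker_mkQ] at h1
    simpa using h1
  · intro k c hc'
    have h1 : ((mMk M k).comap (Mk M k).subtype).mkQ (∑ j, c j • e ⟨k, j⟩) = 0 := by
      rw [← LinearMap.mem_ker, Submodule.ker_mkQ]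
      simpa using hc'
    rw [map_sum] at h1
    simp only [map_smul, he] at h1
    exact Fintype.linearIndependent_iff.1 (B k).linearIndependent c h1

theorem sum_hc {f : ι → MvPolynomial (Fin d) ℝ} {N : ℕ} (h : ∀ i, (f i).totalDegree < N) :
    f = ∑ k ∈ Finset.range N, hc ι d k f := by
  funext i
  rw [Finset.sum_apply]
  simp only [hc_apply]
  conv_lhs => rw [← MvPolynomial.sum_homogeneousComponent (f i)]
  apply Finset.sum_subset
  · intro x hx
    have := h i
    simp only [Finset.mem_range] at *
    omega
  · intro x _ hx
    apply MvPolynomial.homogeneousComponent_eq_zero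
    simp only [Finset.mem_range] at *
    omega

theorem hc_mem (hM : GrM M) {f : ι → MvPolynomial (Fin d) ℝ} (hf : f ∈ M) (k : ℕ) :
    hc ι d k f ∈ Mk M k :=
  ⟨hM.hom f hf k, fun _ => MvPolynomial.homogeneousComponent_isHomogeneous _ _⟩

theorem span_gen (hM : GrM M) {e : GIx M → (ι → MvPolynomial (Fin d) ℝ)}
    (h2 : ∀ k, ∀ f ∈ Mk M k, ∃ c : Fin (Module.finrank ℝ (Qk M k)) → ℝ,
      f - ∑ j, c j • e ⟨k, j⟩ ∈ mMk M k) :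
    ∀ f ∈ M, f ∈ Submodule.span (MvPolynomial (Fin d) ℝ) (Set.range e) := by
  have key : ∀ k, ∀ f ∈ Mk M k, f ∈ Submodule.span (MvPolynomial (Fin d) ℝ) (Set.range e) := by
    intro k
    induction k with
    | zero =>
      intro f hf
      obtain ⟨c, hc'⟩ := h2 0 f hf
      have : f = ∑ j, c j • e ⟨0, j⟩ := by
        simpa [mMk, sub_eq_zero] using hc'
      rw [this]
      apply Submodule.sum_mem
      intro j _
      rw [← C_smul']
      exact Submodule.smul_mem _ _ (Submodule.subset_span ⟨_, rfl⟩)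
    | succ k ih =>
      intro f hf
      obtain ⟨c, hc'⟩ := h2 (k + 1) f hf
      have h3 : ∀ g ∈ mMk M (k + 1), g ∈ Submodule.span (MvPolynomial (Fin d) ℝ) (Set.range e) := by
        intro g hg
        induction hg using Submodule.span_induction with
        | mem x h =>
          obtain ⟨l, f, hf, rfl⟩ := h
          exact Submodule.smul_mem _ _ (ih f hf)
        | zero => exact Submodule.zero_mem _
        | add x y _ _ hx hy => exact Submodule.add_mem _ hx hy
        | smul a x _ hx =>
          rw [← C_smul']
          exact Submodule.smul_mem _ _ hx
      have : f = (f - ∑ j, c j • e ⟨k + 1, j⟩) + ∑ j, c j • e ⟨k + 1, j⟩ := by abel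
      rw [this]
      apply Submodule.add_mem _ (h3 _ hc')
      apply Submodule.sum_mem
      intro j _
      rw [← C_smul']
      exact Submodule.smul_mem _ _ (Submodule.subset_span ⟨_, rfl⟩)
  intro f hf
  obtain ⟨N, hN⟩ := hM.fin f hf
  rw [sum_hc hN]
  apply Submodule.sum_mem
  intro k _
  exact key k _ (hc_mem hM hf k)

theorem rel_const {e : GIx M → (ι → MvPolynomial (Fin d) ℝ)}
    (h1 : ∀ i, e i ∈ Mk M i.1)
    (h3 : ∀ k, ∀ c : Fin (Module.finrank ℝ (Qk M k)) → ℝ,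
      ∑ j, c j • e ⟨k, j⟩ ∈ mMk M k → ∀ j, c j = 0)
    (a : GIx M →₀ MvPolynomial (Fin d) ℝ) (ha : ∑ i ∈ a.support, a i • e i = 0) (i : GIx M) :
    MvPolynomial.constantCoeff (a i) = 0 := by
  obtain ⟨k, j⟩ := i
  refine h3 k (fun j => MvPolynomial.constantCoeff (a ⟨k, j⟩)) ?_ j
  have hs : ∑ j, MvPolynomial.constantCoeff (a ⟨k, j⟩) • e ⟨k, j⟩ =
      ∑ i ∈ a.support, if i.1 = k then MvPolynomial.constantCoeff (a i) • e i else 0 := by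
    rw [← Finset.sum_filter]
    symm
    let em' : Fin (Module.finrank ℝ (Qk M k)) ↪ GIx M := ⟨fun j => ⟨k, j⟩,
      fun x y h => by simpa using h⟩
    refine Eq.trans ?_
      (Finset.sum_map Finset.univ em' (fun i => MvPolynomial.constantCoeff (a i) • e i))
    apply Finset.sum_subset
    · rintro ⟨k', j'⟩ hi
      simp only [Finset.mem_filter] at hi
      obtain ⟨_, rfl⟩ := hi
      exact Finset.mem_map.2 ⟨j', Finset.mem_univ _, rfl⟩
    · intro i hi hni
      simp only [Finset.mem_map, Finset.mem_univ, true_and] at hi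
      obtain ⟨j', rfl⟩ := hi
      have : a (em' j') = 0 := by
        by_contra hne
        apply hni
        rw [Finset.mem_filter]
        exact ⟨Finsupp.mem_support_iff.2 hne, rfl⟩
      rw [this]
      simp
  have h0 : hc ι d k (∑ i ∈ a.support, a i • e i) = 0 := by rw [ha, map_zero]
  rw [map_sum] at h0
  rw [hs]
  have : ∑ i ∈ a.support, (if i.1 = k then MvPolynomial.constantCoeff (a i) • e i else 0) =
      ∑ i ∈ a.support, ((if i.1 = k then MvPolynomial.constantCoeff (a i) • e i else 0)
        - hc ι d k (a i • e i)) := by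
    rw [Finset.sum_sub_distrib, h0, sub_zero]
  rw [this]
  apply Submodule.sum_mem
  intro i _
  rw [hc_smul (a i) (e i) (h1 i).2]
  rcases lt_trichotomy i.1 k with h | h | h
  · rw [if_neg h.ne, if_pos h.le, zero_sub]
    apply Submodule.neg_mem
    obtain ⟨s, hs⟩ := Nat.exists_eq_add_of_lt h
    have := hom_smul_mMk (s := s) (MvPolynomial.homogeneousComponent_isHomogeneous (s + 1) (a i)) (h1 i)
    have e1 : k - i.1 = s + 1 := by omega
    have e2 : s + i.1 + 1 = k := by omega
    rw [e2] at this
    rw [e1]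
    exact this
  · rw [if_pos h, if_pos h.le]
    have : k - i.1 = 0 := by omega
    rw [this, MvPolynomial.homogeneousComponent_zero, C_smul', MvPolynomial.constantCoeff_eq, sub_self]
    exact Submodule.zero_mem _
  · rw [if_neg h.ne', if_neg (by omega), sub_zero]
    exact Submodule.zero_mem _

end Graded


section Graded2
variable {d : ℕ} {ι : Type*}
variable {M : Submodule (MvPolynomial (Fin d) ℝ) (ι → MvPolynomial (Fin d) ℝ)}

theorem exists_hbasis (hM : GrM M) [Module.Projective (MvPolynomial (Fin d) ℝ) M] :
    ∃ e : GIx M → (ι → MvPolynomial (Fin d) ℝ), (∀ i, e i ∈ Mk M i.1) ∧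
      ∃ B : Module.Basis (GIx M) (MvPolynomial (Fin d) ℝ) M, ∀ i, (B i : ι → MvPolynomial (Fin d) ℝ) = e i := by
  obtain ⟨e, h1, h2, h3⟩ := exists_lift hM
  refine ⟨e, h1, ?_⟩
  let v : GIx M → M := fun i => ⟨e i, (h1 i).1⟩
  let P := Finsupp.linearCombination (MvPolynomial (Fin d) ℝ) v
  have hval : ∀ x : GIx M →₀ MvPolynomial (Fin d) ℝ,
      ((P x : M) : ι → MvPolynomial (Fin d) ℝ) = ∑ i ∈ x.support, x i • e i := by
    intro x
    simp [P, Finsupp.linearCombination_apply, Finsupp.sum, v]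
  have hspan : ⊤ ≤ Submodule.span (MvPolynomial (Fin d) ℝ) (Set.range v) := by
    rintro ⟨f, hf⟩ _
    have := span_gen hM h2 f hf
    have hr : Set.range e = M.subtype '' Set.range v := by
      rw [← Set.range_comp]
      rfl
    rw [hr, ← Submodule.map_span] at this
    obtain ⟨y, hy, hy'⟩ := this
    have : y = ⟨f, hf⟩ := Subtype.ext hy'
    exact this ▸ hy
  have hsurj : Function.Surjective P := by
    rw [← LinearMap.range_eq_top]
    rw [Finsupp.range_linearCombination]
    exact top_le_iff.1 hspan
  obtain ⟨s, hs⟩ := Module.projective_lifting_property P LinearMap.id hsurj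
  let m : Ideal (MvPolynomial (Fin d) ℝ) := RingHom.ker MvPolynomial.constantCoeff
  have hker : ∀ x, P x = 0 → ∀ i, x i ∈ m := by
    intro x hx i
    refine rel_const h1 h3 x ?_ i
    rw [← hval, hx]
    rfl
  let π : (GIx M →₀ MvPolynomial (Fin d) ℝ) →ₗ[MvPolynomial (Fin d) ℝ]
    (GIx M →₀ MvPolynomial (Fin d) ℝ) := LinearMap.id - s ∘ₗ P
  have hPπ : ∀ x, P (π x) = 0 := by
    intro x
    have := LinearMap.congr_fun hs (P x)
    simp only [LinearMap.comp_apply, LinearMap.id_apply] at this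
    simp [π, this]
  have hpow : ∀ n : ℕ, ∀ x, P x = 0 → ∀ i, x i ∈ m ^ n := by
    intro n
    induction n with
    | zero => intro x _ i; simp
    | succ n ih =>
      intro x hx i
      have hx' : x = π x := by simp [π, hx]
      have hx2 : π x = ∑ j ∈ x.support, x j • π (Finsupp.single j 1) := by
        conv_lhs => rw [← Finsupp.sum_single x]
        rw [Finsupp.sum, map_sum]
        apply Finset.sum_congr rfl
        intro j _
        rw [← map_smul]
        simp
      rw [hx', hx2, Finsupp.finsetSum_apply]
      apply Ideal.sum_mem
      intro j _
      rw [Finsupp.smul_apply, smul_eq_mul, pow_succ]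
      exact Ideal.mul_mem_mul (ih x hx j) (hker _ (hPπ _) i)
  have hm : m ≠ ⊤ := RingHom.ker_ne_top _
  have hinj : LinearIndependent (MvPolynomial (Fin d) ℝ) v := by
    rw [linearIndependent_iff]
    intro x hx
    ext1 i
    have : x i ∈ ⨅ n, m ^ n := by
      rw [Submodule.mem_iInf]
      intro n
      exact hpow n x hx i
    rw [Ideal.iInf_pow_eq_bot_of_isDomain m hm] at this
    simpa using this
  refine ⟨Module.Basis.mk hinj hspan, fun i => ?_⟩
  rw [Module.Basis.mk_apply]

/-- Hilbert function of the polynomial ring -/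
noncomputable def hS (d s : ℕ) : ℕ :=
  Module.finrank ℝ (MvPolynomial.homogeneousSubmodule (Fin d) ℝ s)

theorem graded_hilb (hM : GrM M) [Module.Projective (MvPolynomial (Fin d) ℝ) M]
    [Module.Finite (MvPolynomial (Fin d) ℝ) M] (k : ℕ) :
    Module.finrank ℝ (Mk M k) =
      ∑ p ∈ Finset.HasAntidiagonal.antidiagonal k, Module.finrank ℝ (Qk M p.1) * hS d p.2 := by
  obtain ⟨e, h1, B, hB⟩ := exists_hbasis hM
  have hfin : Finite (GIx M) := Module.Finite.finite_basis B
  have : Fintype (GIx M) := Fintype.ofFinite _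
  let W : GIx M → Submodule ℝ (MvPolynomial (Fin d) ℝ) := fun i =>
    if i.1 ≤ k then MvPolynomial.homogeneousSubmodule (Fin d) ℝ (k - i.1) else ⊥
  have hW1 : ∀ i : GIx M, i.1 ≤ k → W i = MvPolynomial.homogeneousSubmodule (Fin d) ℝ (k - i.1) :=
    fun i h => if_pos h
  have hW2 : ∀ i : GIx M, ¬ i.1 ≤ k → W i = ⊥ := fun i h => if_neg h
  have hWf : ∀ i, Module.Finite ℝ (W i) := by
    intro i
    by_cases h : i.1 ≤ k
    · rw [hW1 i h]
      exact Module.Finite.iff_fg.2 (MvPolynomial.homogeneousSubmodule_fg _ _ _)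
    · rw [hW2 i h]
      infer_instance
  let Φ : (∀ i, W i) →ₗ[ℝ] (ι → MvPolynomial (Fin d) ℝ) :=
    { toFun := fun a => ∑ i, (a i : MvPolynomial (Fin d) ℝ) • e i
      map_add' := by
        intro a b
        simp [add_smul, Finset.sum_add_distrib]
      map_smul' := by
        intro c a
        simp [Finset.smul_sum] }
  have hBs : ∀ a : GIx M → MvPolynomial (Fin d) ℝ,
      ((∑ i, a i • B i : M) : ι → MvPolynomial (Fin d) ℝ) = ∑ i, a i • e i := by
    intro a
    simp [hB]
  have hΦ : Function.Injective Φ := by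
    rw [← LinearMap.ker_eq_bot, LinearMap.ker_eq_bot']
    intro a ha
    have h0 : ∑ i, (a i : MvPolynomial (Fin d) ℝ) • B i = 0 := by
      apply Subtype.ext
      rw [hBs]
      exact ha
    have := Fintype.linearIndependent_iff.1 B.linearIndependent _ h0
    funext i
    exact Subtype.ext (this i)
  have hr : LinearMap.range Φ = Mk M k := by
    apply le_antisymm
    · rintro _ ⟨a, rfl⟩
      apply Submodule.sum_mem
      intro i _
      have hai := (a i).2
      simp only [W] at hai
      split_ifs at hai with h
      · have := hom_smul_mem (M := M) hai (h1 i)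
        rwa [Nat.sub_add_cancel h] at this
      · rw [Submodule.mem_bot] at hai
        rw [hai, zero_smul]
        exact Submodule.zero_mem _
    · intro f hf
      let a := fun i => B.repr ⟨f, hf.1⟩ i
      have hfa : f = ∑ i, a i • e i := by
        rw [← hBs, B.sum_repr]
      have hf2 : f = hc ι d k f := by
        funext j
        rw [hc_apply, MvPolynomial.homogeneousComponent_of_mem (hf.2 j), if_pos rfl]
      rw [hfa, map_sum] at hf2
      rw [hfa, hf2]
      refine ⟨fun i => ⟨if i.1 ≤ k then MvPolynomial.homogeneousComponent (k - i.1) (a i) else 0, ?_⟩, ?_⟩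
      · simp only [W]
        split_ifs
        · exact MvPolynomial.homogeneousComponent_isHomogeneous _ _
        · exact Submodule.zero_mem _
      · apply Finset.sum_congr rfl
        intro i _
        rw [hc_smul _ _ (h1 i).2]
        simp only
        split_ifs
        · rfl
        · exact zero_smul _ _
  rw [← hr, LinearMap.finrank_range_of_inj hΦ, Module.finrank_pi_fintype]
  have hW : ∀ i, Module.finrank ℝ (W i) = if i.1 ≤ k then hS d (k - i.1) else 0 := by
    intro i
    by_cases h : i.1 ≤ k
    · rw [hW1 i h, if_pos h]
      rfl
    · rw [hW2 i h, if_neg h]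
      simp
  simp only [hW]
  have : ∑ i : GIx M, (if i.1 ≤ k then hS d (k - i.1) else 0) =
      ∑ i ∈ (Finset.range (k + 1)).sigma
        (fun t => (Finset.univ : Finset (Fin (Module.finrank ℝ (Qk M t))))), hS d (k - i.1) := by
    rw [← Finset.sum_filter]
    apply Finset.sum_congr _ (fun _ _ => rfl)
    ext i
    simp
  rw [this, Finset.sum_sigma, Finset.Nat.sum_antidiagonal_eq_sum_range_succ_mk]
  apply Finset.sum_congr rfl
  intro t _
  simp

theorem graded_free (hM : GrM M) [Module.Projective (MvPolynomial (Fin d) ℝ) M]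
    [Module.Finite (MvPolynomial (Fin d) ℝ) M] :
    ∃ (m : ℕ) (e : Fin m → ι → MvPolynomial (Fin d) ℝ), (∀ i, e i ∈ M) ∧
      ∀ f ∈ M, ∃! c : Fin m → MvPolynomial (Fin d) ℝ, f = ∑ i, c i • e i := by
  obtain ⟨e, h1, B, hB⟩ := exists_hbasis hM
  have hfin : Finite (GIx M) := Module.Finite.finite_basis B
  have : Fintype (GIx M) := Fintype.ofFinite _
  let B' := B.reindex (Fintype.equivFin (GIx M))
  refine ⟨_, fun i => (B' i : ι → MvPolynomial (Fin d) ℝ), fun i => (B' i).2, ?_⟩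
  intro f hf
  have key : ∀ c : Fin (Fintype.card (GIx M)) → MvPolynomial (Fin d) ℝ,
      (f = ∑ i, c i • (B' i : ι → MvPolynomial (Fin d) ℝ)) ↔ (⟨f, hf⟩ : M) = ∑ i, c i • B' i := by
    intro c
    rw [Subtype.ext_iff]
    simp
  refine ⟨fun i => B'.repr ⟨f, hf⟩ i, ?_, ?_⟩
  · refine (key _).2 ?_
    exact (B'.sum_repr _).symm
  · intro c hc'
    have := (key c).1 hc'
    funext i
    rw [this, B'.repr_sum_self]

end Graded2


section Hilb
variable {d : ℕ} {K : Finset (Finset (Fin d → ℝ))}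

theorem mem_fa {κ : Type*} [DecidableEq κ] {S : Finset κ} {n : ℕ} {m : κ →₀ ℕ} :
    m ∈ S.finsuppAntidiag n ↔ m.support ⊆ S ∧ m.degree = n := by
  rw [Finset.mem_finsuppAntidiag, and_comm]
  apply and_congr_right
  intro h
  rw [Finsupp.degree_apply, Finset.sum_subset h]
  intro x _ hx
  simpa using hx

theorem hS_eq (d s : ℕ) : hS d s = (d + s - 1).choose s := by
  let F := (Finset.univ : Finset (Fin d)).finsuppAntidiag s
  let Ψ : MvPolynomial.homogeneousSubmodule (Fin d) ℝ s →ₗ[ℝ] (F → ℝ) :=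
    { toFun := fun p m => MvPolynomial.coeff m.1 (p : MvPolynomial (Fin d) ℝ)
      map_add' := by intro p q; funext m; simp
      map_smul' := by intro c p; funext m; simp }
  have hb : Function.Bijective Ψ := by
    constructor
    · rw [← LinearMap.ker_eq_bot, LinearMap.ker_eq_bot']
      intro p hp
      apply Subtype.ext
      ext m
      by_cases hm : m.degree = s
      · exact congrFun hp ⟨m, mem_fa.2 ⟨Finset.subset_univ _, hm⟩⟩
      · exact MvPolynomial.IsHomogeneous.coeff_eq_zero p.2 hm
    · intro g
      refine ⟨⟨∑ m : F, MvPolynomial.monomial m.1 (g m), ?_⟩, ?_⟩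
      · apply Submodule.sum_mem
        intro m _
        exact MvPolynomial.isHomogeneous_monomial _ (mem_fa.1 m.2).2
      · funext m
        change MvPolynomial.coeff m.1 (∑ m : F, MvPolynomial.monomial m.1 (g m)) = g m
        rw [MvPolynomial.coeff_sum, Finset.sum_eq_single m]
        · simp
        · intro b _ hb
          rw [MvPolynomial.coeff_monomial, if_neg]
          exact fun h => hb (Subtype.ext h)
        · simp
  rw [hS, (LinearEquiv.ofBijective Ψ hb).finrank_eq, Module.finrank_fintype_fun_eq_card,
    Fintype.card_coe, Finset.card_finsuppAntidiag_nat_eq_choose]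
  simp

theorem card_fa {S : Finset (Fin d → ℝ)} (hS' : S.card = d) (s : ℕ) :
    (S.finsuppAntidiag s).card = hS d s := by
  rw [hS_eq, Finset.card_finsuppAntidiag_nat_eq_choose, hS']

theorem phi_hom (G : Finset (Fin d → ℝ)) {p : MvPolynomial (Fin d) ℝ} {k : ℕ}
    (hp : p.IsHomogeneous k) : (phi G p).IsHomogeneous k := by
  have := hp.aeval (fun i => ∑ w ∈ G, MvPolynomial.C (w i) * (MvPolynomial.X w :
    MvPolynomial (Fin d → ℝ) ℝ)) (n := 1) (by
      intro i
      apply MvPolynomial.IsHomogeneous.sum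
      intro w _
      simpa using (MvPolynomial.isHomogeneous_C (Fin d → ℝ) (w i)).mul
        (MvPolynomial.isHomogeneous_X ℝ w))
  rwa [one_mul] at this

theorem theta_hom (S : Finset (Fin d → ℝ)) {p : MvPolynomial (Fin d → ℝ) ℝ} {k : ℕ}
    (hp : p.IsHomogeneous k) : (theta S p).IsHomogeneous k := by
  have := hp.aeval (fun w => if w ∈ S then lin (crd S w) else 0) (n := 1) (by
      intro w
      split_ifs
      · exact lin_hom _
      · exact MvPolynomial.isHomogeneous_zero _ _ _)
  rwa [one_mul] at this

theorem phi_comp (G : Finset (Fin d → ℝ)) (p : MvPolynomial (Fin d) ℝ) (k : ℕ) :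
    phi G (MvPolynomial.homogeneousComponent k p) =
      MvPolynomial.homogeneousComponent k (phi G p) := by
  conv_rhs => rw [← MvPolynomial.sum_homogeneousComponent p]
  rw [map_sum, map_sum]
  have : ∀ i, MvPolynomial.homogeneousComponent k
      (phi G (MvPolynomial.homogeneousComponent i p)) =
      if k = i then phi G (MvPolynomial.homogeneousComponent i p) else 0 := fun i =>
    MvPolynomial.homogeneousComponent_of_mem
      (phi_hom G (MvPolynomial.homogeneousComponent_isHomogeneous i p))
  simp only [this]
  rw [Finset.sum_ite_eq]
  split_ifs with h
  · rfl
  · rw [MvPolynomial.homogeneousComponent_eq_zero, map_zero]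
    simp only [Finset.mem_range] at h
    omega

noncomputable def MM (K : Finset (Finset (Fin d → ℝ))) (k : ℕ) : Finset ((Fin d → ℝ) →₀ ℕ) :=
  K.biUnion (fun S => S.finsuppAntidiag k)

theorem mem_MM {k : ℕ} {m : (Fin d → ℝ) →₀ ℕ} :
    m ∈ MM K k ↔ ∃ S ∈ K, m.support ⊆ S ∧ m.degree = k := by
  simp only [MM, Finset.mem_biUnion, mem_fa]

theorem coeff_indep {f : Finset (Fin d → ℝ) → MvPolynomial (Fin d) ℝ} (hf : f ∈ PM K)
    {S T : Finset (Fin d → ℝ)} (hS : S ∈ K) (hT : T ∈ K) {m : (Fin d → ℝ) →₀ ℕ}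
    (h1 : m.support ⊆ S) (h2 : m.support ⊆ T) :
    MvPolynomial.coeff m (phi S (f S)) = MvPolynomial.coeff m (phi T (f T)) := by
  have h := Finset.subset_inter h1 h2
  rw [← coeff_phi_subset (Finset.inter_subset_left (s₂ := T)) _ h,
    ← coeff_phi_subset (Finset.inter_subset_right (s₁ := S)) _ h, hf.2 S hS T hT]

theorem exists_mk_equiv (hb : ∀ S ∈ K, IsBas S) (k : ℕ) :
    Nonempty (Mk (PM K) k ≃ₗ[ℝ] (MM K k → ℝ)) := by
  have hch : ∀ m : MM K k, ∃ S ∈ K, m.1.support ⊆ S ∧ m.1.degree = k := fun m => mem_MM.1 m.2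
  choose T hT hT1 hT2 using hch
  let Ψ : Mk (PM K) k →ₗ[ℝ] (MM K k → ℝ) :=
    { toFun := fun f m => MvPolynomial.coeff m.1
        (phi (T m) ((f : Finset (Fin d → ℝ) → MvPolynomial (Fin d) ℝ) (T m)))
      map_add' := by intro p q; funext m; simp
      map_smul' := by intro c p; funext m; simp }
  refine ⟨LinearEquiv.ofBijective Ψ ⟨?_, ?_⟩⟩
  · rw [← LinearMap.ker_eq_bot, LinearMap.ker_eq_bot']
    rintro ⟨f, hf⟩ h0
    apply Subtype.ext
    funext S
    by_cases hS : S ∈ K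
    · apply phi_inj (hb S hS)
      ext m
      change MvPolynomial.coeff m (phi S (f S)) = MvPolynomial.coeff m (phi S 0)
      rw [map_zero, MvPolynomial.coeff_zero]
      by_cases hm : m.support ⊆ S
      · by_cases hk : m.degree = k
        · have hmM : m ∈ MM K k := mem_MM.2 ⟨S, hS, hm, hk⟩
          rw [coeff_indep hf.1 hS (hT ⟨m, hmM⟩) hm (hT1 ⟨m, hmM⟩)]
          exact congrFun h0 ⟨m, hmM⟩
        · exact (phi_hom S (hf.2 S)).coeff_eq_zero hk
      · exact coeff_phi_not _ hm
    · exact hf.1.1 S hS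
  · intro g
    have hmem : ∀ m : MM K k, emK K m.1 ∈ Mk (PM K) k := by
      intro m
      refine ⟨emK_mem hb _, fun S => ?_⟩
      rw [emK]
      split_ifs
      · exact theta_hom S (MvPolynomial.isHomogeneous_monomial _ (hT2 m))
      · exact MvPolynomial.isHomogeneous_zero _ _ _
    refine ⟨∑ m, g m • ⟨emK K m.1, hmem m⟩, ?_⟩
    rw [map_sum]
    funext m
    rw [Finset.sum_apply]
    have : ∀ m', (Ψ (g m' • ⟨emK K m'.1, hmem m'⟩)) m = g m' * if m' = m then 1 else 0 := by
      intro m'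
      rw [map_smul, Pi.smul_apply, smul_eq_mul]
      congr 1
      change MvPolynomial.coeff m.1 (phi (T m) (emK K m'.1 (T m))) = _
      rw [phi_emK hb _ (hT m) (subset_refl _)]
      by_cases h : m' = m
      · subst h
        rw [if_pos (hT1 _), if_pos rfl, MvPolynomial.coeff_monomial, if_pos rfl]
      · rw [if_neg h]
        split_ifs
        · rw [MvPolynomial.coeff_monomial, if_neg (fun h' => h (Subtype.ext h'))]
        · simp
    simp only [this]
    simp

theorem PM_gr (hb : ∀ S ∈ K, IsBas S) : GrM (PM K) where
  hom := by
    rintro f ⟨h1, h2⟩ k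
    refine ⟨fun S hS => by rw [hc_apply, h1 S hS, map_zero], fun S hS T hT => ?_⟩
    rw [hc_apply, hc_apply, phi_comp, phi_comp, h2 S hS T hT]
  fin := by
    rintro f ⟨h1, h2⟩
    refine ⟨K.sup (fun S => (f S).totalDegree) + 1, fun S => ?_⟩
    rw [Nat.lt_succ_iff]
    by_cases hS : S ∈ K
    · exact Finset.le_sup (f := fun S => (f S).totalDegree) hS
    · rw [h1 S hS]
      simp
  fd := by
    intro k
    obtain ⟨e⟩ := exists_mk_equiv hb k
    exact Module.Finite.equiv e.symm

theorem PM_fin : Module.Finite (MvPolynomial (Fin d) ℝ) (PM K) := by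
  let F : PM K →ₗ[MvPolynomial (Fin d) ℝ] (K → MvPolynomial (Fin d) ℝ) :=
    (LinearMap.funLeft (MvPolynomial (Fin d) ℝ) (MvPolynomial (Fin d) ℝ)
      (fun S : K => S.1)) ∘ₗ (PM K).subtype
  apply Module.Finite.of_injective F
  intro f g h
  apply Subtype.ext
  funext S
  by_cases hS : S ∈ K
  · exact congrFun h ⟨S, hS⟩
  · rw [f.2.1 S hS, g.2.1 S hS]

theorem ind_degree (R : Finset (Fin d → ℝ)) : (ind R).degree = R.card := by
  rw [Finsupp.degree_apply, ind_support, Finset.card_eq_sum_ones]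
  apply Finset.sum_congr rfl
  intro w hw
  rw [ind_apply, if_pos hw]

theorem card_part {S R : Finset (Fin d → ℝ)} (hS' : S.card = d) (hR : R ⊆ S) (k : ℕ) :
    ((S.finsuppAntidiag k).filter (fun m => R ⊆ m.support)).card =
      if R.card ≤ k then hS d (k - R.card) else 0 := by
  have hle : ∀ m : (Fin d → ℝ) →₀ ℕ, R ⊆ m.support → ind R ≤ m := by
    intro m hm w
    rw [ind_apply]
    split_ifs with h
    · have := hm h
      simp only [Finsupp.mem_support_iff] at this
      omega
    · omega
  split_ifs with h
  · rw [← card_fa hS' (k - R.card)]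
    symm
    apply Finset.card_bij (fun m _ => m + ind R)
    · intro m hm
      rw [mem_fa] at hm
      rw [Finset.mem_filter, mem_fa, map_add, ind_degree, hm.2]
      refine ⟨⟨?_, by omega⟩, ?_⟩
      · refine Finsupp.support_add.trans (Finset.union_subset hm.1 ?_)
        rw [ind_support]
        exact hR
      · intro w hw
        simp [ind_apply, hw]
    · intro a _ b _ hab
      exact add_right_cancel hab
    · intro m hm
      rw [Finset.mem_filter, mem_fa] at hm
      have h2 := tsub_add_cancel_of_le (hle m hm.2)
      refine ⟨m - ind R, ?_, h2⟩
      rw [mem_fa]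
      refine ⟨Finsupp.support_tsub.trans hm.1.1, ?_⟩
      have := congrArg Finsupp.degree h2
      rw [map_add, ind_degree, hm.1.2] at this
      omega
  · rw [Finset.card_eq_zero, Finset.filter_eq_empty_iff]
    intro m hm hRm
    rw [mem_fa] at hm
    have h2 := tsub_add_cancel_of_le (hle m hRm)
    have := congrArg Finsupp.degree h2
    rw [map_add, ind_degree, hm.2] at this
    omega

theorem card_MM (hK : SFan K) {v : Fin d → ℝ} (hv : Gen K v) (k : ℕ) :
    (MM K k).card = ∑ S ∈ K, if (RR v S).card ≤ k then hS d (k - (RR v S).card) else 0 := by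
  have : MM K k = K.biUnion
      (fun S => (S.finsuppAntidiag k).filter (fun m => RR v S ⊆ m.support)) := by
    ext m
    rw [mem_MM]
    simp only [Finset.mem_biUnion, Finset.mem_filter, mem_fa]
    constructor
    · rintro ⟨S, hS, h1, h2⟩
      obtain ⟨T, hT, h3, h4⟩ := hK.part_ex v hS h1
      exact ⟨T, hT, ⟨h4, h2⟩, h3⟩
    · rintro ⟨S, hS, h1, h2⟩
      exact ⟨S, hS, h1⟩
  rw [this, Finset.card_biUnion]
  · apply Finset.sum_congr rfl
    intro S hS
    exact card_part (hK.bas S hS).2 (RR_sub v S) k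
  · intro S hS T hT hne
    rw [Function.onFun, Finset.disjoint_left]
    intro m hm hm'
    rw [Finset.mem_filter, mem_fa] at hm hm'
    exact hne (hK.part_uniq hv hS hT hm.2 hm.1.1 hm'.2 hm'.1.1)

theorem hilb_b (hK : SFan K) {v : Fin d → ℝ} (hv : Gen K v) (k : ℕ) :
    Module.finrank ℝ (Qk (PM K) k) = (K.filter (fun S => (RR v S).card = k)).card := by
  have := hK.projective
  have := PM_fin (K := K)
  let b : PowerSeries ℚ := PowerSeries.mk (fun k => (Module.finrank ℝ (Qk (PM K) k) : ℚ))
  let r : PowerSeries ℚ := PowerSeries.mk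
    (fun k => ((K.filter (fun S => (RR v S).card = k)).card : ℚ))
  let h : PowerSeries ℚ := PowerSeries.mk (fun k => (hS d k : ℚ))
  have hh : h ≠ 0 := by
    intro h0
    have := congrArg (PowerSeries.coeff 0) h0
    simp [h, hS_eq] at this
  have hbr : b * h = r * h := by
    ext k
    rw [PowerSeries.coeff_mul, PowerSeries.coeff_mul]
    simp only [b, r, h, PowerSeries.coeff_mk]
    obtain ⟨e⟩ := exists_mk_equiv hK.bas k
    have h1 := graded_hilb (PM_gr hK.bas) k
    rw [e.finrank_eq, Module.finrank_fintype_fun_eq_card, Fintype.card_coe, card_MM hK hv] at h1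
    have h2 := congrArg (Nat.cast (R := ℚ)) h1.symm
    push_cast at h2
    rw [h2]
    have h3 : ∀ p : ℕ × ℕ, ((K.filter (fun S => (RR v S).card = p.1)).card : ℚ) * hS d p.2 =
        ∑ S ∈ K, if (RR v S).card = p.1 then (hS d p.2 : ℚ) else 0 := by
      intro p
      rw [← Finset.sum_filter, Finset.sum_const, nsmul_eq_mul]
    simp only [h3]
    rw [Finset.sum_comm]
    apply Finset.sum_congr rfl
    intro S _
    rw [Finset.Nat.sum_antidiagonal_eq_sum_range_succ_mk]
    simp only
    rw [Finset.sum_ite_eq]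
    simp only [Finset.mem_range, Nat.lt_succ_iff]
  have hbr' := mul_right_cancel₀ hh hbr
  have := congrArg (PowerSeries.coeff k) hbr'
  simpa [b, r] using this

theorem sum_interval {R : Type*} [CommRing R] (y : R) {S T : Finset (Fin d → ℝ)}
    (hS' : S.card = d) (hT : T ⊆ S) :
    ∑ τ ∈ S.powerset.filter (fun τ => T ⊆ τ), (y - 1) ^ (d - τ.card) = y ^ (d - T.card) := by
  have h1 : (S \ T).card = d - T.card := by rw [Finset.card_sdiff_of_subset hT, hS']
  have := Finset.sum_pow_mul_eq_add_pow 1 (y - 1) (S \ T)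
  rw [h1] at this
  rw [add_sub_cancel] at this
  rw [← this]
  symm
  apply Finset.sum_bij (fun U _ => T ∪ U)
  · intro U hU
    rw [Finset.mem_powerset] at hU
    rw [Finset.mem_filter, Finset.mem_powerset]
    exact ⟨Finset.union_subset hT (hU.trans Finset.sdiff_subset), Finset.subset_union_left⟩
  · intro U hU U' hU' h
    rw [Finset.mem_powerset] at hU hU'
    have e : ∀ W, W ⊆ S \ T → (T ∪ W) \ T = W := by
      intro W hW
      ext x
      have := @hW x
      simp only [Finset.mem_sdiff, Finset.mem_union] at *
      tauto
    rw [← e U hU, ← e U' hU', h]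
  · intro τ hτ
    rw [Finset.mem_filter, Finset.mem_powerset] at hτ
    exact ⟨τ \ T, Finset.mem_powerset.2 (Finset.sdiff_subset_sdiff hτ.1 (subset_refl _)),
      Finset.union_sdiff_of_subset hτ.2⟩
  · intro U hU
    rw [Finset.mem_powerset] at hU
    have hd' : Disjoint T U := by
      rw [Finset.disjoint_left]
      intro x hx hxU
      exact (Finset.mem_sdiff.1 (hU hxU)).2 hx
    rw [Finset.card_union_of_disjoint hd', one_pow, one_mul, Nat.sub_sub]

/-- all faces -/
noncomputable def FF (K : Finset (Finset (Fin d → ℝ))) : Finset (Finset (Fin d → ℝ)) :=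
  K.biUnion Finset.powerset

theorem hilb_main (hK : SFan K) (k : ℕ) :
    (Module.finrank ℝ (Qk (PM K) k) : ℚ) =
      (∑ τ ∈ FF K, ((Polynomial.X : Polynomial ℚ) - 1) ^ (d - τ.card)).coeff k := by
  obtain ⟨v, hv⟩ := exists_gen hK.bas
  have : FF K = K.biUnion (fun S => S.powerset.filter (fun τ => RR v S ⊆ τ)) := by
    ext τ
    simp only [FF, Finset.mem_biUnion, Finset.mem_filter, Finset.mem_powerset]
    constructor
    · rintro ⟨S, hS, h1⟩
      obtain ⟨T, hT, h3, h4⟩ := hK.part_ex v hS h1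
      exact ⟨T, hT, h4, h3⟩
    · rintro ⟨S, hS, h1, h2⟩
      exact ⟨S, hS, h1⟩
  rw [this, Finset.sum_biUnion]
  · rw [hilb_b hK hv.neg, Polynomial.finsetSum_coeff, Finset.card_filter]
    push_cast
    apply Finset.sum_congr rfl
    intro S hS
    rw [sum_interval _ (hK.bas S hS).2 (RR_sub v S), Polynomial.coeff_X_pow, RR_neg hv hS,
      Finset.card_sdiff_of_subset (RR_sub v S), (hK.bas S hS).2]
    simp only [eq_comm]
  · intro S hS T hT hne
    rw [Function.onFun, Finset.disjoint_left]
    intro m hm hm'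
    rw [Finset.mem_filter, Finset.mem_powerset] at hm hm'
    exact hne (hK.part_uniq hv hS hT hm.2 hm.1 hm'.2 hm'.1)

end Hilb


section Bridge
variable {d : ℕ}

def UG (S : Finset (Fin d → ℝ)) : Prop :=
  LinearIndependent ℝ (fun x : (S : Set (Fin d → ℝ)) => (x : Fin d → ℝ)) ∧ ∀ w ∈ S, ‖w‖ = 1

theorem UG.sub {S T : Finset (Fin d → ℝ)} (h : UG S) (hT : T ⊆ S) : UG T := by
  refine ⟨?_, fun w hw => h.2 w (hT hw)⟩
  have h1 : LinearIndepOn ℝ id (S : Set (Fin d → ℝ)) := h.1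
  exact h1.mono (Finset.coe_subset.2 hT)

theorem UG.crd_sum {S : Finset (Fin d → ℝ)} (h : UG S) {w : Fin d → ℝ} (hw : w ∈ S)
    (c : (Fin d → ℝ) → ℝ) : crd S w (∑ z ∈ S, c z • z) = c w := by
  obtain ⟨h1, h2⟩ := crd_spec h.1 hw
  rw [map_sum, Finset.sum_eq_single w]
  · rw [map_smul, h1, smul_eq_mul, mul_one]
  · intro z hz hne
    rw [map_smul, h2 z hz hne, smul_zero]
  · exact fun h => absurd hw h

theorem coneHull_mono {S T : Finset (Fin d → ℝ)} (h : S ⊆ T) : coneHull S ⊆ coneHull T := by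
  rintro _ ⟨c, hc, rfl⟩
  refine ⟨fun w => if w ∈ S then c w else 0, fun w => ?_, ?_⟩
  · simp only
    split_ifs
    · exact hc w
    · exact le_rfl
  · rw [← Finset.sum_subset h]
    · apply Finset.sum_congr rfl
      intro w hw
      simp [hw]
    · intro w _ hw
      simp [hw]

theorem gen_mem_cone {S : Finset (Fin d → ℝ)} {w : Fin d → ℝ} (hw : w ∈ S) : w ∈ coneHull S := by
  refine ⟨fun z => if z = w then 1 else 0, fun z => ?_, ?_⟩
  · simp only
    split_ifs <;> norm_num
  · simp [ite_smul, hw]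

theorem exists_UG {S : Finset (Fin d → ℝ)}
    (hS : LinearIndependent ℝ (fun x : (S : Set (Fin d → ℝ)) => (x : Fin d → ℝ))) :
    ∃ T, UG T ∧ coneHull S = coneHull T := by
  have hne : ∀ w ∈ S, w ≠ 0 := by
    intro w hw
    exact hS.ne_zero (⟨w, hw⟩ : (S : Set (Fin d → ℝ)))
  have hn : ∀ w ∈ S, ‖w‖ ≠ 0 := fun w hw => norm_ne_zero_iff.2 (hne w hw)
  let g : (Fin d → ℝ) → (Fin d → ℝ) := fun w => ‖w‖⁻¹ • w
  have hli : LinearIndependent ℝ (fun x : (S : Set (Fin d → ℝ)) => g x) := by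
    have := hS.units_smul (fun x : (S : Set (Fin d → ℝ)) =>
      Units.mk0 (‖(x : Fin d → ℝ)‖⁻¹) (inv_ne_zero (hn _ x.2)))
    exact this
  have hinj : Set.InjOn g S := by
    intro a ha b hb hab
    have := hli.injective (a₁ := ⟨a, ha⟩) (a₂ := ⟨b, hb⟩) hab
    exact congrArg Subtype.val this
  refine ⟨S.image g, ⟨?_, ?_⟩, ?_⟩
  · have h2 : LinearIndepOn ℝ g (S : Set (Fin d → ℝ)) := hli
    have h3 := h2.id_image
    rw [← Finset.coe_image] at h3
    exact h3
  · intro w hw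
    obtain ⟨z, hz, rfl⟩ := Finset.mem_image.1 hw
    simp only [g]
    rw [norm_smul, norm_inv, norm_norm, inv_mul_cancel₀ (hn z hz)]
  · ext x
    constructor
    · rintro ⟨c, hc, rfl⟩
      have h4 : ∀ w : Fin d → ℝ, ∃ a : ℝ, 0 ≤ a ∧ ∀ z ∈ S, g z = w → a = c z * ‖z‖ := by
        intro w
        by_cases h : ∃ z ∈ S, g z = w
        · obtain ⟨z, hz, hzw⟩ := h
          refine ⟨c z * ‖z‖, mul_nonneg (hc z) (norm_nonneg z), fun z' hz' hzw' => ?_⟩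
          rw [hinj hz' hz (hzw'.trans hzw.symm)]
        · exact ⟨0, le_rfl, fun z hz hzw => absurd ⟨z, hz, hzw⟩ h⟩
      choose a ha ha' using h4
      refine ⟨a, ha, ?_⟩
      rw [Finset.sum_image hinj]
      apply Finset.sum_congr rfl
      intro z hz
      rw [ha' (g z) z hz rfl]
      simp only [g]
      rw [smul_smul, mul_assoc, mul_inv_cancel₀ (hn z hz), mul_one]
    · rintro ⟨c, hc, rfl⟩
      refine ⟨fun w => c (g w) * ‖w‖⁻¹, fun w => mul_nonneg (hc _) (by positivity), ?_⟩
      rw [Finset.sum_image hinj]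
      apply Finset.sum_congr rfl
      intro z hz
      simp only [g]
      rw [smul_smul]

theorem UG.unique' {S T : Finset (Fin d → ℝ)} (hS : UG S) (hT : UG T)
    (h : coneHull S = coneHull T) : S ⊆ T := by
  intro w hw
  have hwT : w ∈ coneHull T := h ▸ gen_mem_cone hw
  obtain ⟨c, hc, hcw⟩ := hwT
  have hw0 : w ≠ 0 := by
    intro h0
    have := hS.2 w hw
    rw [h0, norm_zero] at this
    exact zero_ne_one this
  obtain ⟨t, ht, hct⟩ : ∃ t ∈ T, c t ≠ 0 := by
    by_contra hn
    push Not at hn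
    apply hw0
    rw [hcw]
    exact Finset.sum_eq_zero (fun t ht => by rw [hn t ht, zero_smul])
  have hnn : ∀ z ∈ S, ∀ t ∈ T, 0 ≤ crd S z t := by
    intro z hz t ht
    have : t ∈ coneHull S := h ▸ gen_mem_cone ht
    obtain ⟨a, ha, rfl⟩ := this
    rw [hS.crd_sum hz]
    exact ha z
  have hz0 : ∀ z ∈ S, z ≠ w → crd S z t = 0 := by
    intro z hz hzw
    have h1 := (crd_spec hS.1 hz).2 w hw hzw.symm
    rw [hcw, map_sum] at h1
    have h2 := (Finset.sum_eq_zero_iff_of_nonneg (fun t ht => by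
      rw [map_smul, smul_eq_mul]
      exact mul_nonneg (hc t) (hnn z hz t ht))).1 h1 t ht
    rw [map_smul, smul_eq_mul] at h2
    exact (mul_eq_zero.1 h2).resolve_left hct
  have htS : t ∈ coneHull S := h ▸ gen_mem_cone ht
  obtain ⟨a, ha, hta⟩ := htS
  have ht2 : t = a w • w := by
    conv_lhs => rw [hta]
    rw [Finset.sum_eq_single w]
    · intro z hz hzw
      have := hz0 z hz hzw
      rw [hta, hS.crd_sum hz] at this
      rw [this, zero_smul]
    · exact fun h => absurd hw h
  have h1 := hT.2 t ht
  rw [ht2, norm_smul, hS.2 w hw, mul_one, Real.norm_of_nonneg (ha w)] at h1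
  rw [h1, one_smul] at ht2
  exact ht2 ▸ ht

theorem UG.unique {S T : Finset (Fin d → ℝ)} (hS : UG S) (hT : UG T)
    (h : coneHull S = coneHull T) : S = T :=
  Finset.Subset.antisymm (hS.unique' hT h) (hT.unique' hS h.symm)

theorem face_sub {S : Finset (Fin d → ℝ)} {τ : Set (Fin d → ℝ)}
    (h : IsConeFace (coneHull S) τ) : ∃ T ⊆ S, τ = coneHull T := by
  rcases h with h | ⟨l, hl, h⟩
  · exact ⟨S, subset_refl _, h⟩
  · refine ⟨S.filter (fun w => l w = 0), Finset.filter_subset _ _, ?_⟩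
    rw [h]
    ext x
    constructor
    · rintro ⟨⟨c, hc, rfl⟩, h0⟩
      refine ⟨c, hc, ?_⟩
      rw [Finset.sum_filter_of_ne]
      intro w hw hne
      rw [map_sum] at h0
      have h2 := (Finset.sum_eq_zero_iff_of_nonpos (fun t ht => by
        rw [map_smul, smul_eq_mul]
        exact mul_nonpos_of_nonneg_of_nonpos (hc t) (hl t (gen_mem_cone ht)))).1 h0 w hw
      rw [map_smul, smul_eq_mul] at h2
      refine (mul_eq_zero.1 h2).resolve_left ?_
      intro h3
      apply hne
      rw [h3, zero_smul]
    · intro hx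
      refine ⟨coneHull_mono (Finset.filter_subset _ _) hx, ?_⟩
      obtain ⟨c, hc, rfl⟩ := hx
      rw [map_sum]
      apply Finset.sum_eq_zero
      intro w hw
      rw [map_smul, (Finset.mem_filter.1 hw).2, smul_zero]

theorem sub_face {S T : Finset (Fin d → ℝ)} (hS : UG S) (h : T ⊆ S) :
    IsConeFace (coneHull S) (coneHull T) := by
  obtain ⟨l, hl⟩ := li_dual hS.1 (fun w => if w ∈ T then 0 else -1)
  have hle : ∀ w ∈ S, l w ≤ 0 := by
    intro w hw
    rw [hl w hw]
    split_ifs <;> norm_num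
  right
  refine ⟨l, ?_, ?_⟩
  · rintro _ ⟨c, hc, rfl⟩
    rw [map_sum]
    apply Finset.sum_nonpos
    intro w hw
    rw [map_smul, smul_eq_mul]
    exact mul_nonpos_of_nonneg_of_nonpos (hc w) (hle w hw)
  · ext x
    constructor
    · intro hx
      refine ⟨coneHull_mono h hx, ?_⟩
      obtain ⟨c, hc, rfl⟩ := hx
      rw [map_sum]
      apply Finset.sum_eq_zero
      intro w hw
      rw [map_smul, hl w (h hw), if_pos hw, smul_zero]
    · rintro ⟨⟨c, hc, rfl⟩, h0⟩
      refine ⟨c, hc, ?_⟩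
      symm
      apply Finset.sum_subset h
      intro w hw hwT
      rw [map_sum] at h0
      have h2 := (Finset.sum_eq_zero_iff_of_nonpos (fun t ht => by
        rw [map_smul, smul_eq_mul]
        exact mul_nonpos_of_nonneg_of_nonpos (hc t) (hle t ht))).1 h0 w hw
      rw [map_smul, smul_eq_mul, hl w hw, if_neg hwT] at h2
      have : c w = 0 := by linarith
      rw [this, zero_smul]

theorem span_cone (S : Finset (Fin d → ℝ)) :
    Submodule.span ℝ (coneHull S) = Submodule.span ℝ (S : Set (Fin d → ℝ)) := by
  apply le_antisymm
  · apply Submodule.span_le.2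
    rintro _ ⟨c, hc, rfl⟩
    apply Submodule.sum_mem
    intro w hw
    exact Submodule.smul_mem _ _ (Submodule.subset_span hw)
  · exact Submodule.span_mono (fun w hw => gen_mem_cone hw)

theorem UG.finrank {S : Finset (Fin d → ℝ)} (hS : UG S) :
    Module.finrank ℝ (Submodule.span ℝ (coneHull S)) = S.card := by
  rw [span_cone]
  exact finrank_span_finset_eq_card hS.1

theorem UG.card_le {S : Finset (Fin d → ℝ)} (hS : UG S) : S.card ≤ d := by
  rw [← hS.finrank]
  have := Submodule.finrank_le (Submodule.span ℝ (coneHull S))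
  simpa using this

structure GData (Δ : Finset (Set (Fin d → ℝ))) (G : Set (Fin d → ℝ) → Finset (Fin d → ℝ)) : Prop where
  fan : IsFan Δ
  cov : (⋃ σ ∈ Δ, σ) = Set.univ
  ug : ∀ σ ∈ Δ, UG (G σ)
  eq : ∀ σ ∈ Δ, σ = coneHull (G σ)

theorem exists_GData {Δ : Finset (Set (Fin d → ℝ))} (hΔ : IsCompleteFan Δ)
    (hs : IsSimplicialFan Δ) : ∃ G, GData Δ G := by
  have : ∀ σ : Set (Fin d → ℝ), ∃ T, σ ∈ Δ → UG T ∧ σ = coneHull T := by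
    intro σ
    by_cases h : σ ∈ Δ
    · obtain ⟨S, h1, h2⟩ := hs.2 σ h
      obtain ⟨T, h3, h4⟩ := exists_UG h1
      exact ⟨T, fun _ => ⟨h3, h2.trans h4⟩⟩
    · exact ⟨∅, fun h' => absurd h' h⟩
  choose G hG using this
  exact ⟨G, hΔ.1, hΔ.2, fun σ h => (hG σ h).1, fun σ h => (hG σ h).2⟩

variable {Δ : Finset (Set (Fin d → ℝ))} {G : Set (Fin d → ℝ) → Finset (Fin d → ℝ)}

theorem GData.gen (h : GData Δ G) {S : Finset (Fin d → ℝ)} (hS : UG S) (hm : coneHull S ∈ Δ) :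
    G (coneHull S) = S :=
  ((hS.unique (h.ug _ hm) (h.eq _ hm))).symm

noncomputable def K0 (Δ : Finset (Set (Fin d → ℝ))) (G : Set (Fin d → ℝ) → Finset (Fin d → ℝ)) :
    Finset (Finset (Fin d → ℝ)) := (Δ.image G).filter (fun S => S.card = d)

theorem GData.mem_K0 (h : GData Δ G) {S : Finset (Fin d → ℝ)} (hS : S ∈ K0 Δ G) :
    UG S ∧ S.card = d ∧ coneHull S ∈ Δ := by
  obtain ⟨h1, h2⟩ := Finset.mem_filter.1 hS
  obtain ⟨σ, hσ, rfl⟩ := Finset.mem_image.1 h1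
  exact ⟨h.ug σ hσ, h2, h.eq σ hσ ▸ hσ⟩

theorem GData.common (h : GData Δ G) {S T : Finset (Fin d → ℝ)} (hS : UG S) (hT : UG T)
    (hSm : coneHull S ∈ Δ) (hTm : coneHull T ∈ Δ) :
    ∃ R, R ⊆ S ∧ R ⊆ T ∧ coneHull S ∩ coneHull T = coneHull R := by
  obtain ⟨f1, f2⟩ := h.fan.2.2 _ hSm _ hTm
  obtain ⟨R, hR, e1⟩ := face_sub f1
  obtain ⟨R', hR', e2⟩ := face_sub f2
  have := (hS.sub hR).unique (hT.sub hR') (e1.symm.trans e2)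
  subst this
  exact ⟨R, hR, hR', e1⟩

theorem CRep.mono {S T : Finset (Fin d → ℝ)} {x : Fin d → ℝ} {c} (h : CRep S x c) (hT : S ⊆ T) :
    CRep T x c := ⟨fun z hz => h.1 z (fun h' => hz (hT h')), h.2⟩

theorem UG.crep_uniq {S : Finset (Fin d → ℝ)} (hS : UG S) {x : Fin d → ℝ} {c c'}
    (h : CRep S x c) (h' : CRep S x c') : c = c' := by
  ext w
  by_cases hw : w ∈ S
  · rw [← hS.crd_sum hw c, ← hS.crd_sum hw c', ← lc_eq_sum h.1, ← lc_eq_sum h'.1, h.2.2, h'.2.2]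
  · rw [h.1 w hw, h'.1 w hw]

theorem GData.cover (h : GData Δ G) (x : Fin d → ℝ) : ∃ S ∈ K0 Δ G, x ∈ coneHull S := by
  let P : Finset (Submodule ℝ (Fin d → ℝ)) :=
    (Δ.filter (fun σ => (G σ).card ≠ d)).image (fun σ => Submodule.span ℝ σ)
  have hP : ⊤ ∉ P := by
    intro hm
    obtain ⟨σ, hσ, e⟩ := Finset.mem_image.1 hm
    obtain ⟨hσ, hc⟩ := Finset.mem_filter.1 hσ
    apply hc
    have := (h.ug σ hσ).finrank
    rw [← h.eq σ hσ, e] at this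
    simpa using this.symm
  have h2 := Subspace.biUnion_ne_univ_of_top_notMem hP
  rw [Set.ne_univ_iff_exists_notMem] at h2
  obtain ⟨z, hz⟩ := h2
  simp only [Set.mem_iUnion] at hz
  by_contra hcon
  push Not at hcon
  have key : ∀ σ ∈ Δ, ∀ᶠ ε in nhdsWithin (0 : ℝ) (Set.Ioi 0), x + ε • z ∉ σ := by
    intro σ hσ
    suffices ∃ δ > (0 : ℝ), ∀ ε, 0 < ε → ε < δ → x + ε • z ∉ σ by
      obtain ⟨δ, hδ, hh⟩ := this
      filter_upwards [Ioo_mem_nhdsGT hδ] with ε hε using hh ε hε.1 hε.2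
    by_cases hc : (G σ).card = d
    · have hb : IsBas (G σ) := ⟨(h.ug σ hσ).1, hc⟩
      have hK : G σ ∈ K0 Δ G := Finset.mem_filter.2 ⟨Finset.mem_image_of_mem _ hσ, hc⟩
      have hx := hcon _ hK
      rw [cone_iff hb] at hx
      push Not at hx
      obtain ⟨w, hw, hwx⟩ := hx
      refine ⟨-crd (G σ) w x / (|crd (G σ) w z| + 1), by
        apply div_pos <;> [linarith; positivity], ?_⟩
      intro ε h0 h1 hm
      rw [h.eq σ hσ, cone_iff hb] at hm
      have h3 := hm w hw
      rw [map_add, map_smul, smul_eq_mul] at h3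
      rw [lt_div_iff₀ (by positivity)] at h1
      nlinarith [le_abs_self (crd (G σ) w z), mul_le_mul_of_nonneg_left (le_abs_self (crd (G σ) w z)) h0.le]
    · have hzW : z ∉ Submodule.span ℝ σ := by
        intro hzm
        exact hz ⟨_, Finset.mem_image_of_mem _ (Finset.mem_filter.2 ⟨hσ, hc⟩), hzm⟩
      by_cases hex : ∃ ε0 > (0 : ℝ), x + ε0 • z ∈ σ
      · obtain ⟨ε0, h0, hm⟩ := hex
        refine ⟨ε0, h0, fun ε h1 h2 hm' => ?_⟩
        have h3 := Submodule.sub_mem _ (Submodule.subset_span (R := ℝ) hm)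
          (Submodule.subset_span (R := ℝ) hm')
        have h4 : x + ε0 • z - (x + ε • z) = (ε0 - ε) • z := by
          rw [sub_smul]
          abel
        rw [h4] at h3
        exact hzW ((Submodule.smul_mem_iff _ (by linarith [sub_pos.2 h2])).1 h3)
      · push Not at hex
        exact ⟨1, one_pos, fun ε h1 _ => hex ε h1⟩
  have hall := (Filter.eventually_all_finset Δ).2 key
  obtain ⟨ε, hε⟩ := hall.exists
  have hu : x + ε • z ∈ (⋃ σ ∈ Δ, σ) := by rw [h.cov]; trivial
  simp only [Set.mem_iUnion] at hu
  obtain ⟨σ, hσ, hm⟩ := hu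
  exact hε σ hσ hm

theorem GData.sfan (h : GData Δ G) : SFan (K0 Δ G) where
  bas := fun S hS => ⟨(h.mem_K0 hS).1.1, (h.mem_K0 hS).2.1⟩
  cov := by
    intro x
    obtain ⟨S, hS, hx⟩ := h.cover x
    exact ⟨S, hS, exists_rep hx⟩
  uniq := by
    intro S hS T hT x c c' h1 h2
    obtain ⟨uS, -, mS⟩ := h.mem_K0 hS
    obtain ⟨uT, -, mT⟩ := h.mem_K0 hT
    obtain ⟨R, hRS, hRT, e⟩ := h.common uS uT mS mT
    have hx : x ∈ coneHull R := e ▸ ⟨h1.mem, h2.mem⟩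
    obtain ⟨a, ha⟩ := exists_rep hx
    rw [uS.crep_uniq h1 (ha.mono hRS), uT.crep_uniq h2 (ha.mono hRT)]

theorem GData.face_of (h : GData Δ G) {σ : Set (Fin d → ℝ)} (hσ : σ ∈ Δ) :
    ∃ S ∈ K0 Δ G, G σ ⊆ S := by
  obtain ⟨S, hS, hx⟩ := h.cover (∑ w ∈ G σ, w)
  refine ⟨S, hS, ?_⟩
  obtain ⟨uS, -, mS⟩ := h.mem_K0 hS
  have hσ' : coneHull (G σ) ∈ Δ := h.eq σ hσ ▸ hσ
  obtain ⟨R, hR, hRS, e⟩ := h.common (h.ug σ hσ) uS hσ' mS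
  have hx1 : (∑ w ∈ G σ, w) ∈ coneHull (G σ) := ⟨fun _ => 1, fun _ => zero_le_one, by simp⟩
  have hxR : (∑ w ∈ G σ, w) ∈ coneHull R := e ▸ ⟨hx1, hx⟩
  obtain ⟨a, ha⟩ := exists_rep hxR
  have haσ := ha.mono hR
  have : G σ ⊆ R := by
    intro w hw
    by_contra hwR
    have h1 := (h.ug σ hσ).crd_sum hw a
    rw [← lc_eq_sum haσ.1, haσ.2.2, ha.1 w hwR] at h1
    have h2 := (h.ug σ hσ).crd_sum hw (fun _ => 1)
    simp only [one_smul] at h2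
    rw [h1] at h2
    exact zero_ne_one h2
  exact this.trans hRS

theorem GData.sum_eq (h : GData Δ G) :
    (∑ σ ∈ Δ, ((Polynomial.X : Polynomial ℚ) - 1) ^
            (d - Module.finrank ℝ (Submodule.span ℝ σ))) =
    ∑ τ ∈ FF (K0 Δ G), ((Polynomial.X : Polynomial ℚ) - 1) ^ (d - τ.card) := by
  apply Finset.sum_bij (fun σ _ => G σ)
  · intro σ hσ
    obtain ⟨S, hS, hsub⟩ := h.face_of hσ
    exact Finset.mem_biUnion.2 ⟨S, hS, Finset.mem_powerset.2 hsub⟩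
  · intro σ hσ σ' hσ' he
    rw [h.eq σ hσ, h.eq σ' hσ', he]
  · intro τ hτ
    obtain ⟨S, hS, hsub⟩ := Finset.mem_biUnion.1 hτ
    rw [Finset.mem_powerset] at hsub
    obtain ⟨uS, -, mS⟩ := h.mem_K0 hS
    have hm := h.fan.2.1 _ mS _ (sub_face uS hsub)
    exact ⟨coneHull τ, hm, h.gen (uS.sub hsub) hm⟩
  · intro σ hσ
    have := (h.ug σ hσ).finrank
    rw [← h.eq σ hσ] at this
    rw [this]

end Bridge


section Final
variable {d : ℕ} {Δ : Finset (Set (Fin d → ℝ))} {G : Set (Fin d → ℝ) → Finset (Fin d → ℝ)}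

theorem quot_finrank {E F : Type*} [AddCommGroup E] [Module ℝ E] [AddCommGroup F] [Module ℝ F]
    (Θ : E →ₗ[ℝ] F) (P Q : Submodule ℝ E) (hQ : Q ≤ P) (hinj : ∀ x ∈ P, Θ x = 0 → x = 0) :
    Module.finrank ℝ (↥(P.map Θ) ⧸ (Q.map Θ).comap (P.map Θ).subtype) =
      Module.finrank ℝ (↥P ⧸ Q.comap P.subtype) := by
  let f : P →ₗ[ℝ] P.map Θ := (Θ.comp P.subtype).codRestrict _
    (fun x => Submodule.mem_map_of_mem x.2)
  have hf : Function.Bijective f := by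
    constructor
    · rw [← LinearMap.ker_eq_bot, LinearMap.ker_eq_bot']
      intro x hx
      exact Subtype.ext (hinj x x.2 (congrArg Subtype.val hx))
    · rintro ⟨_, x, hx, rfl⟩
      exact ⟨⟨x, hx⟩, rfl⟩
  let e := LinearEquiv.ofBijective f hf
  symm
  apply LinearEquiv.finrank_eq
  refine Submodule.Quotient.equiv _ _ e ?_
  ext ⟨y, hy⟩
  constructor
  · rintro ⟨x, hx, hxy⟩
    have : Θ x = y := congrArg Subtype.val hxy
    exact ⟨x, hx, this⟩
  · rintro ⟨x, hx, hxy⟩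
    exact ⟨⟨x, hQ hx⟩, hx, Subtype.ext hxy⟩

/-- the function attached to a family -/
noncomputable def Th (s : (Fin d → ℝ) → Finset (Fin d → ℝ)) :
    (Finset (Fin d → ℝ) → MvPolynomial (Fin d) ℝ) →ₗ[ℝ] ((Fin d → ℝ) → ℝ) where
  toFun f x := MvPolynomial.eval x (f (s x))
  map_add' f g := by funext x; simp
  map_smul' c f := by funext x; simp

theorem Th_smul (s : (Fin d → ℝ) → Finset (Fin d → ℝ)) (p : MvPolynomial (Fin d) ℝ)
    (f : Finset (Fin d → ℝ) → MvPolynomial (Fin d) ℝ) :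
    Th s (p • f) = fun x => MvPolynomial.eval x p * Th s f x := by
  funext x
  simp [Th]

theorem SFan.Th_eq {K : Finset (Finset (Fin d → ℝ))} (hK : SFan K)
    {s : (Fin d → ℝ) → Finset (Fin d → ℝ)}
    (hs : ∀ x, s x ∈ K ∧ x ∈ coneHull (s x)) {f} (hf : f ∈ PM K) {S : Finset (Fin d → ℝ)}
    (hS : S ∈ K) {x : Fin d → ℝ} (hx : x ∈ coneHull S) :
    Th s f x = MvPolynomial.eval x (f S) := by
  change MvPolynomial.eval x (f (s x)) = _
  obtain ⟨c, hc⟩ := exists_rep hx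
  obtain ⟨c', hc'⟩ := exists_rep (hs x).2
  have := hK.uniq _ hS _ (hs x).1 x c c' hc hc'
  subst this
  have hx2 : x = ∑ w ∈ S ∩ s x, c w • w := by
    rw [← lc_eq_sum, hc.2.2]
    intro z hz
    by_cases h : z ∈ S
    · exact hc'.1 z (fun h' => hz (Finset.mem_inter.2 ⟨h, h'⟩))
    · exact hc.1 z h
  have h1 := eval_phi (S ∩ s x) c (f S)
  have h2 := eval_phi (S ∩ s x) c (f (s x))
  rw [← hx2] at h1 h2
  rw [← h1, ← h2, hf.2 S hS _ (hs x).1]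

theorem SFan.Th_inj {K : Finset (Finset (Fin d → ℝ))} (hK : SFan K)
    {s : (Fin d → ℝ) → Finset (Fin d → ℝ)}
    (hs : ∀ x, s x ∈ K ∧ x ∈ coneHull (s x)) {f} (hf : f ∈ PM K) (h0 : Th s f = 0) : f = 0 := by
  funext S
  by_cases hS : S ∈ K
  · apply phi_inj (hK.bas S hS)
    apply phi_eq_of_cone
    intro x hx
    rw [← hK.Th_eq hs hf hS hx, h0]
    simp
  · exact hf.1 S hS

theorem GData.lift (h : GData Δ G) {s : (Fin d → ℝ) → Finset (Fin d → ℝ)}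
    (hs : ∀ x, s x ∈ K0 Δ G ∧ x ∈ coneHull (s x)) (Pr : MvPolynomial (Fin d) ℝ → Prop) (hP0 : Pr 0)
    {F : (Fin d → ℝ) → ℝ}
    (hF : ∀ σ ∈ Δ, ∃ p : MvPolynomial (Fin d) ℝ, Pr p ∧ ∀ x ∈ σ, F x = MvPolynomial.eval x p) :
    ∃ f ∈ PM (K0 Δ G), (∀ S, Pr (f S)) ∧ Th s f = F := by
  have hch : ∀ S : Finset (Fin d → ℝ), ∃ p : MvPolynomial (Fin d) ℝ, Pr p ∧
      (S ∉ K0 Δ G → p = 0) ∧ (S ∈ K0 Δ G → ∀ x ∈ coneHull S, F x = MvPolynomial.eval x p) := by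
    intro S
    by_cases hS : S ∈ K0 Δ G
    · obtain ⟨p, h1, h2⟩ := hF _ (h.mem_K0 hS).2.2
      exact ⟨p, h1, fun h' => absurd hS h', fun _ => h2⟩
    · exact ⟨0, hP0, fun _ => rfl, fun h' => absurd h' hS⟩
  choose f h1 h2 h3 using hch
  refine ⟨f, ⟨h2, fun S hS T hT => ?_⟩, h1, ?_⟩
  · apply phi_eq_of_cone
    intro x hx
    rw [← h3 S hS x (coneHull_mono Finset.inter_subset_left hx),
      ← h3 T hT x (coneHull_mono Finset.inter_subset_right hx)]
  · funext x
    exact (h3 _ (hs x).1 x (hs x).2).symm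

theorem GData.conewise (h : GData Δ G) {s : (Fin d → ℝ) → Finset (Fin d → ℝ)}
    (hs : ∀ x, s x ∈ K0 Δ G ∧ x ∈ coneHull (s x)) (Pr : MvPolynomial (Fin d) ℝ → Prop)
    {f} (hf : f ∈ PM (K0 Δ G)) (hp : ∀ S, Pr (f S)) :
    ∀ σ ∈ Δ, ∃ p : MvPolynomial (Fin d) ℝ, Pr p ∧ ∀ x ∈ σ, Th s f x = MvPolynomial.eval x p := by
  intro σ hσ
  obtain ⟨S, hS, hsub⟩ := h.face_of hσ
  refine ⟨f S, hp S, fun x hx => h.sfan.Th_eq hs hf hS (coneHull_mono hsub ?_)⟩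
  rw [← h.eq σ hσ]
  exact hx

theorem GData.map_Mk (h : GData Δ G) {s : (Fin d → ℝ) → Finset (Fin d → ℝ)}
    (hs : ∀ x, s x ∈ K0 Δ G ∧ x ∈ coneHull (s x)) (k : ℕ) :
    (Mk (PM (K0 Δ G)) k).map (Th s) = conewisePoly d Δ k := by
  ext F
  constructor
  · rintro ⟨f, hf, rfl⟩
    exact h.conewise hs (fun p => p.IsHomogeneous k) hf.1 hf.2
  · intro hF
    obtain ⟨f, h1, h2, h3⟩ := h.lift hs (fun p => p.IsHomogeneous k)
      (MvPolynomial.isHomogeneous_zero _ _ _) hF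
    exact ⟨f, ⟨h1, h2⟩, h3⟩

theorem GData.map_mMk (h : GData Δ G) {s : (Fin d → ℝ) → Finset (Fin d → ℝ)}
    (hs : ∀ x, s x ∈ K0 Δ G ∧ x ∈ coneHull (s x)) (k : ℕ) :
    (mMk (PM (K0 Δ G)) k).map (Th s) = mConewisePoly d Δ k := by
  cases k with
  | zero => exact Submodule.map_bot _
  | succ k =>
    simp only [mMk, mConewisePoly]
    rw [Submodule.map_span]
    congr 1
    ext F
    constructor
    · rintro ⟨_, ⟨l, f, hf, rfl⟩, rfl⟩
      refine ⟨l, Th s f, ?_, ?_⟩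
      · rw [← h.map_Mk hs k]
        exact Submodule.mem_map_of_mem hf
      · rw [Th_smul]
        simp only [eval_lin]
    · rintro ⟨l, F, hF, rfl⟩
      rw [← h.map_Mk hs k] at hF
      obtain ⟨f, hf, rfl⟩ := hF
      refine ⟨_, ⟨l, f, hf, rfl⟩, ?_⟩
      rw [Th_smul]
      simp only [eval_lin]

end Final

theorem conewise_polynomials_free_hilbert (d : ℕ) (hd : 1 ≤ d)
    (Δ : Finset (Set (Fin d → ℝ))) (hΔ : IsCompleteFan Δ)
    (hsimp : IsSimplicialFan Δ) :
    (∃ (m : ℕ) (e : Fin m → ((Fin d → ℝ) → ℝ)),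
      (∀ i : Fin m, ∀ σ ∈ Δ, ∃ p : MvPolynomial (Fin d) ℝ,
        ∀ x ∈ σ, e i x = MvPolynomial.eval x p) ∧
      (∀ f : (Fin d → ℝ) → ℝ,
        (∀ σ ∈ Δ, ∃ p : MvPolynomial (Fin d) ℝ, ∀ x ∈ σ, f x = MvPolynomial.eval x p) →
        ∃! c : Fin m → MvPolynomial (Fin d) ℝ,
          f = fun x => ∑ i, MvPolynomial.eval x (c i) * e i x)) ∧
    (∀ k : ℕ,
      (Module.finrank ℝ
          (↥(conewisePoly d Δ k) ⧸
            (mConewisePoly d Δ k).comap (conewisePoly d Δ k).subtype) : ℚ) =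
        (∑ σ ∈ Δ, ((Polynomial.X : Polynomial ℚ) - 1) ^
            (d - Module.finrank ℝ (Submodule.span ℝ σ))).coeff k) := by
  obtain ⟨G, h⟩ := exists_GData hΔ hsimp
  have hK := h.sfan
  have hs' : ∀ x, ∃ S, S ∈ K0 Δ G ∧ x ∈ coneHull S := fun x => by
    obtain ⟨S, h1, h2⟩ := h.cover x
    exact ⟨S, h1, h2⟩
  choose s hs using hs'
  have i1 := hK.projective
  have i2 := PM_fin (K := K0 Δ G)
  constructor
  · obtain ⟨m, e, he, hu⟩ := graded_free (PM_gr hK.bas)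
    refine ⟨m, fun i => Th s (e i), ?_, ?_⟩
    · intro i σ hσ
      obtain ⟨p, -, hp⟩ := h.conewise hs (fun _ => True) (he i) (fun _ => trivial) σ hσ
      exact ⟨p, hp⟩
    · intro F hF
      obtain ⟨f, hf, -, rfl⟩ := h.lift hs (fun _ => True) trivial (F := F) (fun σ hσ => by
        obtain ⟨p, hp⟩ := hF σ hσ
        exact ⟨p, trivial, hp⟩)
      have key : ∀ c : Fin m → MvPolynomial (Fin d) ℝ,
          (Th s f = fun x => ∑ i, MvPolynomial.eval x (c i) * Th s (e i) x) ↔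
            f = ∑ i, c i • e i := by
        intro c
        have e1 : (fun x => ∑ i, MvPolynomial.eval x (c i) * Th s (e i) x) =
            Th s (∑ i, c i • e i) := by
          rw [map_sum]
          funext x
          rw [Finset.sum_apply]
          simp only [Th_smul]
        rw [e1]
        constructor
        · intro h1
          have hm : f - ∑ i, c i • e i ∈ PM (K0 Δ G) :=
            Submodule.sub_mem _ hf (Submodule.sum_mem _ (fun i _ => Submodule.smul_mem _ _ (he i)))
          exact sub_eq_zero.1 (hK.Th_inj hs hm (by rw [map_sub, h1, sub_self]))
        · intro h1
          rw [← h1]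
      simp only [key]
      exact hu f hf
  · intro k
    rw [h.sum_eq, ← hilb_main hK k, ← h.map_Mk hs k, ← h.map_mMk hs k,
      quot_finrank (Th s) _ _ (mMk_le k) (fun x hx h0 => hK.Th_inj hs hx.1 h0)]
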